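/- arXiv:1509.02803 — 5 statements merged into one kernel-verified Lean document; each statement's English description precedes it below -/
import Mathlib

section
/- Let σ, M > 0 and let f : ℝ → ℂ be bandlimited with parameters (σ, M). Then for all bounded self-adjoint operators A and B on a complex Hilbert space H, the operator-norm estimate ‖f(A) − f(B)‖ ≤ σ·M·‖A − B‖ holds. -/
open Complex MeasureTheory Filter Topology

theorem ob_contour (G : ℂ → ℂ) (hG : Differentiable ℂ G) (R C : ℝ) (hR : 0 ≤ R)
    (hb : ∀ z : ℂ, -R ≤ z.im → z.im ≤ 0 → ‖G z‖ ≤ C * (1 + z.re ^ 2)⁻¹) :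
    ∫ x : ℝ, G x = ∫ x : ℝ, G (x + (-R : ℝ) * I) := by
  have hint : ∀ y : ℝ, -R ≤ y → y ≤ 0 → Integrable (fun x : ℝ => G (x + y * I)) := by
    intro y h1 h2
    refine Integrable.mono' (integrable_inv_one_add_sq.const_mul C) ?_ ?_
    · exact (hG.continuous.comp (by fun_prop)).aestronglyMeasurable
    · filter_upwards with x
      have := hb (x + y * I) (by simpa using h1) (by simpa using h2)
      simpa using this
  have hi0 := hint 0 (by linarith) le_rfl
  have hiR := hint (-R) le_rfl (by linarith)
  have t0 := intervalIntegral_tendsto_integral hi0 tendsto_neg_atTop_atBot tendsto_id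
  have tR := intervalIntegral_tendsto_integral hiR tendsto_neg_atTop_atBot tendsto_id
  have hC : 0 ≤ C := by
    have := (norm_nonneg _).trans (hb 0 (by simpa using hR) (by simp))
    simpa using this
  have key : ∀ T : ℝ, ‖(∫ x in (-T)..T, G (x + (0:ℝ) * I)) - ∫ x in (-T)..T, G (x + (-R:ℝ) * I)‖
      ≤ 2 * R * C * (1 + T ^ 2)⁻¹ := by
    intro T
    have h := Complex.integral_boundary_rect_eq_zero_of_differentiableOn G
      (⟨-T, -R⟩ : ℂ) (⟨T, 0⟩ : ℂ) hG.differentiableOn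
    simp only at h
    have side : ∀ s : ℝ, s ^ 2 = T ^ 2 → ‖∫ y in (-R)..0, G (s + y * I)‖ ≤ R * C * (1 + T ^ 2)⁻¹ := by
      intro s hs
      have := intervalIntegral.norm_integral_le_of_norm_le_const (a := -R) (b := 0)
        (C := C * (1 + T ^ 2)⁻¹) (f := fun y : ℝ => G (s + y * I)) (by
          intro y hy
          rw [Set.uIoc_of_le (by linarith)] at hy
          have := hb (s + y * I) (by simpa using hy.1.le) (by simpa using hy.2)
          simpa [hs] using this)
      refine this.trans (le_of_eq ?_)
      rw [zero_sub, neg_neg, abs_of_nonneg hR]; ring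
    have s1 := side T rfl
    have s2 := side (-T) (by ring)
    have e : (∫ x in (-T)..T, G (x + (0:ℝ) * I)) - ∫ x in (-T)..T, G (x + (-R:ℝ) * I)
      = I • (∫ y in (-R)..0, G ((T:ℝ) + y * I)) - I • (∫ y in (-R)..0, G ((-T:ℝ) + y * I)) := by
      linear_combination -h
    rw [e]
    refine (norm_sub_le _ _).trans ?_
    rw [norm_smul, norm_smul, norm_I, one_mul, one_mul]
    linarith
  have lim : Tendsto (fun T : ℝ => 2 * R * C * (1 + T ^ 2)⁻¹) atTop (𝓝 0) := by
    have : Tendsto (fun T : ℝ => (1 + T ^ 2)⁻¹) atTop (𝓝 0) :=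
      tendsto_inv_atTop_zero.comp (tendsto_atTop_add_const_left _ _ (tendsto_pow_atTop two_ne_zero))
    simpa using this.const_mul (2 * R * C)
  have z := squeeze_zero_norm key lim
  have := tendsto_nhds_unique (t0.sub tR) z
  have := sub_eq_zero.mp this
  simpa using this

theorem ob_int (g : ℂ → ℂ) (hg : Differentiable ℂ g) (τ C : ℝ)
    (hb : ∀ z : ℂ, ‖g z‖ ≤ C * Real.exp (τ * |z.im|) * (1 + z.re ^ 2)⁻¹) :
    Integrable (fun x : ℝ => g x) := by
  refine Integrable.mono' (integrable_inv_one_add_sq.const_mul C) ?_ ?_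
  · exact (hg.continuous.comp (by fun_prop)).aestronglyMeasurable
  · filter_upwards with x
    simpa using hb x

theorem ob_van (g : ℂ → ℂ) (hg : Differentiable ℂ g) (τ C : ℝ)
    (hb : ∀ z : ℂ, ‖g z‖ ≤ C * Real.exp (τ * |z.im|) * (1 + z.re ^ 2)⁻¹) (l : ℝ) (hl : τ < l) :
    ∫ x : ℝ, g x * cexp (-(l * x * I)) = 0 := by
  set J := ∫ x : ℝ, g x * cexp (-(l * x * I)) with hJ
  have hC : 0 ≤ C := by
    have := (norm_nonneg _).trans (hb 0)
    simpa using this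
  have key : ∀ R : ℝ, 0 ≤ R → ‖J‖ ≤ C * Real.pi * Real.exp (-((l - τ) * R)) := by
    intro R hR
    have hbd : ∀ z : ℂ, z.im ≤ 0 → ‖g z * cexp (-(l * z * I))‖
        ≤ C * Real.exp ((l - τ) * z.im) * (1 + z.re ^ 2)⁻¹ := by
      intro z hz
      rw [norm_mul, Complex.norm_exp]
      have e1 : (-(l * z * I)).re = l * z.im := by simp
      rw [e1]
      calc _ ≤ (C * Real.exp (τ * |z.im|) * (1 + z.re ^ 2)⁻¹) * Real.exp (l * z.im) := by
            gcongr; exact hb z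
        _ = _ := by
            rw [abs_of_nonpos hz, show (l - τ) * z.im = τ * (-z.im) + l * z.im by ring, Real.exp_add]
            ring
    have h := ob_contour (fun z => g z * cexp (-(l * z * I))) (by fun_prop) R C hR (by
      intro z _ h2
      refine (hbd z h2).trans ?_
      have : Real.exp ((l - τ) * z.im) ≤ 1 := by
        rw [Real.exp_le_one_iff]; nlinarith
      have h3 : 0 ≤ (1 + z.re ^ 2)⁻¹ := by positivity
      exact mul_le_mul_of_nonneg_right (by nlinarith) h3)
    rw [hJ, h]
    have : ∫ x : ℝ, C * Real.exp ((l - τ) * (-R)) * (1 + x ^ 2)⁻¹ = C * Real.pi * Real.exp (-((l - τ) * R)) := by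
      rw [integral_const_mul, integral_univ_inv_one_add_sq]
      rw [show (l - τ) * (-R) = -((l - τ) * R) by ring]; ring
    rw [← this]
    refine norm_integral_le_of_norm_le (integrable_inv_one_add_sq.const_mul _) ?_
    filter_upwards with x
    have := hbd (x + (-R : ℝ) * I) (by simpa using hR)
    simpa using this
  have lim : Tendsto (fun R : ℝ => C * Real.pi * Real.exp (-((l - τ) * R))) atTop (𝓝 0) := by
    have : Tendsto (fun R : ℝ => Real.exp (-((l - τ) * R))) atTop (𝓝 0) :=
      Real.tendsto_exp_neg_atTop_nhds_zero.comp (tendsto_id.const_mul_atTop (by linarith))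
    simpa using this.const_mul (C * Real.pi)
  have : ‖J‖ ≤ 0 := ge_of_tendsto lim (by
    filter_upwards [eventually_ge_atTop 0] with R hR using key R hR)
  simpa using this

theorem ob_van' (g : ℂ → ℂ) (hg : Differentiable ℂ g) (τ C : ℝ)
    (hb : ∀ z : ℂ, ‖g z‖ ≤ C * Real.exp (τ * |z.im|) * (1 + z.re ^ 2)⁻¹) (l : ℝ) (hl : τ < |l|) :
    ∫ x : ℝ, g x * cexp (-(l * x * I)) = 0 := by
  rcases le_total 0 l with h | h
  · rw [abs_of_nonneg h] at hl
    exact ob_van g hg τ C hb l hl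
  · rw [abs_of_nonpos h] at hl
    have := ob_van (fun z => g (-z)) (by fun_prop) τ C (by intro z; simpa using hb (-z)) (-l) hl
    rw [← integral_neg_eq_self, ← this]
    congr 1; ext x; push_cast; ring_nf

theorem ob_series (x : ℝ) (h0 : 0 ≤ x) (h1 : x ≤ 1 / 2) :
    HasSum (fun n : ℕ => (1 - (-1) ^ n) / (n : ℝ) ^ 2 * Real.cos (2 * Real.pi * n * x))
      (Real.pi ^ 2 * (1 / 4 - x)) := by
  have a := hasSum_one_div_nat_pow_mul_cos (k := 1) one_ne_zero (x := x) ⟨h0, by linarith⟩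
  have b := hasSum_one_div_nat_pow_mul_cos (k := 1) one_ne_zero (x := x + 1 / 2) ⟨by linarith, by linarith⟩
  have c := a.sub b
  convert! c using 1
  · ext n
    have : Real.cos (2 * Real.pi * n * (x + 1 / 2)) = (-1) ^ n * Real.cos (2 * Real.pi * n * x) := by
      rw [show 2 * Real.pi * n * (x + 1 / 2) = 2 * Real.pi * n * x + n * Real.pi by ring]
      exact Real.cos_add_nat_mul_pi _ _
    rw [this]; ring
  · have hB : ∀ y : ℝ, (Polynomial.map (algebraMap ℚ ℝ) (Polynomial.bernoulli (2 * 1))).eval y = y ^ 2 - y + 1 / 6 := by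
      intro y
      simp only [Polynomial.bernoulli, Polynomial.eval_map]
      simp [Finset.sum_range_succ, bernoulli_two, bernoulli_one, Polynomial.eval₂_add]
      ring
    rw [hB, hB]; norm_num [Nat.factorial]; ring

theorem ob_bern1 (g : ℂ → ℂ) (hg : Differentiable ℂ g) (τ C M : ℝ) (hτ : 0 < τ)
    (hb : ∀ z : ℂ, ‖g z‖ ≤ C * Real.exp (τ * |z.im|) * (1 + z.re ^ 2)⁻¹)
    (hM : ∀ x : ℝ, ‖g x‖ ≤ M) : ‖deriv g 0‖ ≤ τ * M := by
  set gr : ℝ → ℂ := fun x => g x with hgr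
  have hgi : Integrable gr := ob_int g hg τ C hb
  have hgc : Continuous gr := hg.continuous.comp (by fun_prop)
  set h : ℝ → ℂ := FourierTransform.fourier gr with hh
  have hπ := Real.pi_pos
  have hcont : Continuous h :=
    VectorFourier.fourierIntegral_continuous Real.continuous_fourierChar
      continuous_inner hgi
  have hzero : ∀ ξ : ℝ, τ < |2 * Real.pi * ξ| → h ξ = 0 := by
    intro ξ hξ
    rw [hh, Real.fourier_real_eq_integral_exp_smul, ← ob_van' g hg τ C hb _ hξ]
    congr 1; ext x
    rw [smul_eq_mul, mul_comm]
    congr 2; push_cast; ring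
  have hsupp : HasCompactSupport h := by
    refine HasCompactSupport.intro (isCompact_Icc (a := -(τ / (2 * Real.pi))) (b := τ / (2 * Real.pi))) ?_
    intro ξ hξ
    apply hzero
    by_contra hcon
    push Not at hcon
    apply hξ
    rw [abs_mul, abs_of_pos (by positivity : 0 < 2 * Real.pi)] at hcon
    have : |ξ| ≤ τ / (2 * Real.pi) := by
      rw [le_div_iff₀ (by positivity)]; linarith
    exact abs_le.mp this
  have hint : Integrable h := hcont.integrable_of_hasCompactSupport hsupp
  have hmulint : ∀ k : ℝ → ℂ, Continuous k → Integrable (fun ξ => k ξ * h ξ) := fun k hk =>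
    (hk.mul hcont).integrable_of_hasCompactSupport hsupp.mul_left
  have hinv : ∀ x : ℝ, FourierTransformInv.fourierInv h x = g x := fun x => by
    rw [hh, hgc.fourierInv_fourier_eq hgi hint]
  have hF : ∀ x : ℝ, FourierTransform.fourier h x = g (-x : ℝ) := fun x => by
    rw [← hinv, Real.fourierInv_eq_fourier_neg, neg_neg]
  have hd : HasDerivAt (FourierTransform.fourier h) _ 0 :=
    Real.hasDerivAt_fourier hint (by simpa using hmulint (fun x => (x:ℂ)) (by fun_prop)) 0
  have hd2 : HasDerivAt (fun x : ℝ => g (-x : ℝ)) (-deriv g 0) 0 := by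
    have h1 : HasDerivAt (fun z : ℂ => g (-z)) (-deriv g 0) ((0:ℝ):ℂ) := by
      have h2 : HasDerivAt g (deriv g 0) (-((0:ℝ):ℂ)) := by simpa using (hg 0).hasDerivAt
      simpa [Function.comp_def] using h2.comp _ (hasDerivAt_neg _)
    simpa using h1.comp_ofReal
  have hder : deriv g 0 = I * ∫ ξ : ℝ, ((2 * Real.pi * ξ : ℝ) : ℂ) * h ξ := by
    have e := hd2.unique ((funext hF : FourierTransform.fourier h = _) ▸ hd)
    rw [Real.fourier_real_eq_integral_exp_smul] at e
    rw [← neg_inj, e]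
    rw [← integral_const_mul, ← integral_neg]
    congr 1; ext x; simp; ring
  set c : ℕ → ℝ := fun n => (1 - (-1) ^ n) / (n : ℝ) ^ 2 with hc
  have hc0 : ∀ n, 0 ≤ c n := by
    intro n
    apply div_nonneg _ (by positivity)
    rcases neg_one_pow_eq_or ℝ n with h | h <;> rw [h] <;> norm_num
  have hcs : HasSum c (Real.pi ^ 2 / 4) := by
    have := ob_series 0 le_rfl (by norm_num)
    simp only [mul_zero, Real.cos_zero, mul_one] at this
    convert! this using 1; ring
  set k : ℕ → ℝ → ℝ := fun n ξ => Real.cos (2 * Real.pi * n * (Real.pi * ξ / (2 * τ) + 1 / 4)) with hk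
  have hser : ∀ ξ : ℝ, HasSum (fun n => ((c n * k n ξ : ℝ) : ℂ) * h ξ)
      (-((Real.pi ^ 2 / (4 * τ) : ℝ) : ℂ) * (((2 * Real.pi * ξ : ℝ) : ℂ) * h ξ)) := by
    intro ξ
    by_cases hξ : τ < |2 * Real.pi * ξ|
    · rw [hzero ξ hξ]; simp
    · push Not at hξ
      obtain ⟨h1, h2⟩ := abs_le.mp hξ
      have e : Real.pi * ξ / (2 * τ) = (2 * Real.pi * ξ) / (4 * τ) := by field_simp; ring
      have hs := ob_series (Real.pi * ξ / (2 * τ) + 1 / 4)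
        (by
          have : -(1/4) ≤ (2 * Real.pi * ξ) / (4 * τ) := by
            rw [le_div_iff₀ (by positivity)]; linarith
          rw [e]; linarith)
        (by
          have : (2 * Real.pi * ξ) / (4 * τ) ≤ 1 / 4 := by
            rw [div_le_iff₀ (by positivity)]; linarith
          rw [e]; linarith)
      have hs2 := (Complex.hasSum_ofReal.mpr hs).mul_right (h ξ)
      convert! hs2 using 1
      rw [← mul_assoc]; congr 1
      rw [e]; push_cast; field_simp; ring
  have hki : ∀ n, Integrable (fun ξ => ((c n * k n ξ : ℝ) : ℂ) * h ξ) := fun n => by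
    apply hmulint; simp only [hk]; fun_prop
  have hsum := hasSum_integral_of_summable_integral_norm hki (by
    refine Summable.of_nonneg_of_le (fun n => integral_nonneg fun _ => norm_nonneg _) (fun n => ?_)
      (hcs.summable.mul_right (∫ ξ, ‖h ξ‖))
    rw [← integral_const_mul]
    refine integral_mono (hki n).norm (hint.norm.const_mul _) fun ξ => ?_
    simp only [norm_mul, Complex.norm_real, Real.norm_eq_abs, abs_of_nonneg (hc0 n)]
    have : |k n ξ| ≤ 1 := Real.abs_cos_le_one _
    have := hc0 n
    gcongr
    nlinarith)
  have htsum : ∀ ξ, ∑' n, ((c n * k n ξ : ℝ) : ℂ) * h ξ = _ := fun ξ => (hser ξ).tsum_eq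
  simp_rw [htsum] at hsum
  rw [integral_const_mul] at hsum
  have hterm : ∀ n, ‖∫ ξ, ((c n * k n ξ : ℝ) : ℂ) * h ξ‖ ≤ c n * M := by
    intro n
    have e1 : ∀ x : ℝ, Integrable (fun ξ : ℝ => cexp (2 * Real.pi * ξ * x * I) * h ξ) := fun x =>
      hmulint _ (by fun_prop)
    have e2 : ∀ x : ℝ, ∫ ξ : ℝ, cexp (2 * Real.pi * ξ * x * I) * h ξ = g x := by
      intro x
      rw [← hinv, Real.fourierInv_eq']
      congr 1; ext ξ
      simp only [smul_eq_mul, RCLike.inner_apply, conj_trivial]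
      congr 2; push_cast; ring
    set y : ℝ := n * Real.pi / (2 * τ) with hy
    set θ : ℝ := n * Real.pi / 2 with hθ
    have e3 : ∀ ξ : ℝ, ((c n * k n ξ : ℝ) : ℂ) * h ξ =
        (c n / 2 * cexp (θ * I)) * (cexp (2 * Real.pi * ξ * y * I) * h ξ) +
        (c n / 2 * cexp (-θ * I)) * (cexp (2 * Real.pi * ξ * (-y : ℝ) * I) * h ξ) := by
      intro ξ
      have : (k n ξ : ℂ) = (cexp (θ * I) * cexp (2 * Real.pi * ξ * y * I) + 
          cexp (-θ * I) * cexp (2 * Real.pi * ξ * (-y : ℝ) * I)) / 2 := by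
        rw [hk, Complex.ofReal_cos, Complex.cos, ← Complex.exp_add, ← Complex.exp_add]
        have : (2 * Real.pi * n * (Real.pi * ξ / (2 * τ) + 1 / 4) : ℝ) = θ + 2 * Real.pi * ξ * y := by
          rw [hy, hθ]; ring
        rw [this]; push_cast
        ring_nf
      push_cast
      rw [this]; push_cast; ring
    simp_rw [e3]
    rw [integral_add ((e1 _).const_mul _) ((e1 _).const_mul _), integral_const_mul, integral_const_mul, e2, e2]
    refine (norm_add_le _ _).trans ?_
    have n1 : ‖cexp (θ * I)‖ = 1 := Complex.norm_exp_ofReal_mul_I _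
    have n2 : ‖cexp (-θ * I)‖ = 1 := by
      rw [← Complex.ofReal_neg]; exact Complex.norm_exp_ofReal_mul_I _
    simp only [norm_mul, n1, n2, norm_div, Complex.norm_real, Real.norm_eq_abs, abs_of_nonneg (hc0 n), RCLike.norm_ofNat]
    have := mul_le_mul_of_nonneg_left (hM y) (hc0 n)
    have := mul_le_mul_of_nonneg_left (hM (-y)) (hc0 n)
    linarith
  have hfin := hsum.norm_le_of_bounded (hcs.mul_right M) hterm
  rw [hder, norm_mul, norm_I, one_mul]
  rw [norm_mul, norm_neg, Complex.norm_real, Real.norm_eq_abs, abs_of_pos (by positivity)] at hfin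
  have : 0 < Real.pi ^ 2 / (4 * τ) := by positivity
  refine le_of_mul_le_mul_left (hfin.trans (le_of_eq ?_)) this
  field_simp

theorem ob_sin (z : ℂ) : ‖Complex.sin z‖ ≤ Real.exp |z.im| := by
  rw [Complex.sin, norm_div, norm_mul, norm_I, mul_one, RCLike.norm_ofNat]
  have h1 : ‖cexp (-z * I)‖ ≤ Real.exp |z.im| := by
    rw [Complex.norm_exp]; apply Real.exp_le_exp.mpr; simpa using le_abs_self z.im
  have h2 : ‖cexp (z * I)‖ ≤ Real.exp |z.im| := by
    rw [Complex.norm_exp]; apply Real.exp_le_exp.mpr; simpa using neg_le_abs z.im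
  have := norm_sub_le (cexp (-z * I)) (cexp (z * I))
  linarith

theorem ob_kernel : ∃ s : ℂ → ℂ, ∃ C : ℝ, Differentiable ℂ s ∧ s 0 = 1 ∧ deriv s 0 = 0 ∧
    (∀ x : ℝ, ‖s x‖ ≤ 1) ∧ 0 ≤ C ∧
    ∀ z : ℂ, ‖s z‖ ≤ C * Real.exp (2 * |z.im|) * (1 + z.re ^ 2)⁻¹ := by
  set q : ℂ → ℂ := dslope Complex.sin 0 with hq
  have hd : Differentiable ℂ q := by
    rw [← differentiableOn_univ]
    exact (Complex.differentiableOn_dslope univ_mem).mpr Complex.differentiable_sin.differentiableOn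
  have h0 : q 0 = 1 := by simp [hq, dslope_same]
  have hne : ∀ z, z ≠ 0 → q z = Complex.sin z / z := by
    intro z hz; rw [hq, dslope_of_ne _ hz, slope_def_field]; simp
  have hev : ∀ z, q (-z) = q z := by
    intro z
    by_cases hz : z = 0
    · simp [hz]
    · rw [hne z hz, hne _ (neg_ne_zero.mpr hz)]; simp
  have hd0 : deriv q 0 = 0 := by
    have h2 : HasDerivAt q (deriv q 0) (-(0:ℂ)) := by simpa using (hd 0).hasDerivAt
    have h3 : HasDerivAt (fun z => q (-z)) (-deriv q 0) 0 := by
      simpa [Function.comp_def] using h2.comp _ (hasDerivAt_neg _)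
    simp_rw [hev] at h3
    have := h3.unique (hd 0).hasDerivAt
    exact CharZero.eq_neg_self_iff.mp this.symm
  obtain ⟨K, hK⟩ := (isCompact_closedBall (0:ℂ) 1).exists_bound_of_continuousOn hd.continuous.continuousOn
  refine ⟨fun z => q z ^ 2, 2 + 2 * K ^ 2, by fun_prop, by simp [h0], ?_, ?_, by positivity, ?_⟩
  · have := ((hd 0).hasDerivAt.pow 2).deriv
    rw [hd0] at this
    simpa [Pi.pow_def] using this
  · intro x
    rw [norm_pow]
    refine pow_le_one₀ (norm_nonneg _) ?_
    by_cases hx : x = 0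
    · simp [hx, h0]
    · rw [hne _ (by exact_mod_cast hx), ← Complex.ofReal_sin, norm_div, Complex.norm_real, Complex.norm_real]
      rw [div_le_one (by simpa using hx)]
      exact Real.abs_sin_le_abs
  · intro z
    rw [norm_pow, ← div_eq_mul_inv, le_div_iff₀ (by positivity)]
    have hre : z.re ^ 2 ≤ ‖z‖ ^ 2 := by
      rw [← sq_abs]; gcongr; exact abs_re_le_norm z
    have he : 1 ≤ Real.exp (2 * |z.im|) := Real.one_le_exp (by positivity)
    rcases le_total ‖z‖ 1 with h | h
    · have hk := hK z (by simpa using h)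
      have h4 : ‖q z‖ ^ 2 ≤ K ^ 2 := by gcongr
      have h5 : ‖z‖ ^ 2 ≤ 1 := pow_le_one₀ (norm_nonneg _) h
      calc ‖q z‖ ^ 2 * (1 + z.re ^ 2) ≤ K ^ 2 * 2 := by gcongr; linarith
        _ ≤ (2 + 2 * K ^ 2) * 1 := by linarith
        _ ≤ _ := by gcongr
    · have hz : z ≠ 0 := by intro h'; simp [h'] at h; linarith
      have hzp : 0 < ‖z‖ := by positivity
      have h5 : 1 ≤ ‖z‖ ^ 2 := one_le_pow₀ h
      rw [hne z hz, norm_div, div_pow]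
      have : ‖Complex.sin z‖ ^ 2 ≤ Real.exp (2 * |z.im|) := by
        rw [two_mul, Real.exp_add, ← sq]; gcongr; exact ob_sin z
      calc _ ≤ Real.exp (2 * |z.im|) / ‖z‖ ^ 2 * (2 * ‖z‖ ^ 2) := by gcongr; linarith
        _ = 2 * Real.exp (2 * |z.im|) := by field_simp
        _ ≤ _ := by gcongr; nlinarith

theorem ob_bern2 (φ : ℂ → ℂ) (hφ : Differentiable ℂ φ) (τ M : ℝ) (hτ : 0 ≤ τ)
    (hb : ∀ z : ℂ, ‖φ z‖ ≤ M * Real.exp (τ * |z.im|)) : ‖deriv φ 0‖ ≤ τ * M := by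
  obtain ⟨s, C, hs, hs0, hs0', hs1, hC, hsb⟩ := ob_kernel
  have hM : 0 ≤ M := by
    have := (norm_nonneg _).trans (hb 0)
    simpa using this
  have key : ∀ ε : ℝ, 0 < ε → ε ≤ 1 → ‖deriv φ 0‖ ≤ (τ + 2 * ε) * M := by
    intro ε he he1
    have hd : HasDerivAt (fun z => φ z * s (ε * z)) (deriv φ 0) 0 := by
      have h2 : HasDerivAt s (deriv s 0) ((ε:ℂ) * 0) := by simpa using (hs 0).hasDerivAt
      have h3 : HasDerivAt (fun z : ℂ => s (ε * z)) (deriv s 0 * ε) 0 := by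
        simpa [Function.comp_def] using h2.comp _ ((hasDerivAt_id (0:ℂ)).const_mul (ε:ℂ))
      simpa [hs0, hs0', Pi.mul_def] using (hφ 0).hasDerivAt.mul h3
    rw [← hd.deriv]
    refine ob_bern1 _ (by fun_prop) (τ + 2 * ε) (M * C * (ε ^ 2)⁻¹) M (by positivity) ?_ ?_
    · intro z
      rw [norm_mul]
      have h1 := hsb (ε * z)
      have e1 : ((ε:ℂ) * z).im = ε * z.im := by simp
      have e2 : ((ε:ℂ) * z).re = ε * z.re := by simp
      rw [e1, e2, abs_mul, abs_of_pos he] at h1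
      have h2 : (1 + (ε * z.re) ^ 2)⁻¹ ≤ (ε ^ 2)⁻¹ * (1 + z.re ^ 2)⁻¹ := by
        rw [← mul_inv]
        apply inv_anti₀ (by positivity)
        nlinarith
      calc _ ≤ (M * Real.exp (τ * |z.im|)) * (C * Real.exp (2 * (ε * |z.im|)) * ((ε ^ 2)⁻¹ * (1 + z.re ^ 2)⁻¹)) := by
            refine mul_le_mul (hb z) (h1.trans (by gcongr)) (norm_nonneg _) (by positivity)
        _ = _ := by
            rw [show (τ + 2 * ε) * |z.im| = τ * |z.im| + 2 * (ε * |z.im|) by ring, Real.exp_add]; ring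
    · intro x
      rw [norm_mul]
      have h1 := hb x
      have h2 := hs1 (ε * x)
      push_cast at h2
      simp only [ofReal_im, abs_zero, mul_zero, Real.exp_zero, mul_one] at h1
      calc _ ≤ M * 1 := mul_le_mul h1 h2 (norm_nonneg _) hM
        _ = M := mul_one _
  have lim : Tendsto (fun ε : ℝ => (τ + 2 * ε) * M) (𝓝[>] 0) (𝓝 (τ * M)) := by
    have : Tendsto (fun ε : ℝ => (τ + 2 * ε) * M) (𝓝 0) (𝓝 ((τ + 2 * 0) * M)) := by
      apply Continuous.tendsto; fun_prop
    simpa using this.mono_left nhdsWithin_le_nhds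
  refine ge_of_tendsto lim ?_
  filter_upwards [Ioc_mem_nhdsGT (zero_lt_one (α := ℝ))] with ε h using key ε h.1 h.2

theorem ob_bern3 (φ : ℂ → ℂ) (hφ : Differentiable ℂ φ) (τ M : ℝ) (hτ : 0 ≤ τ)
    (hb : ∀ z : ℂ, ‖φ z‖ ≤ M * Real.exp (τ * |z.im|)) : ‖φ 1 - φ 0‖ ≤ τ * M := by
  have hd : ∀ x : ℝ, ‖deriv φ x‖ ≤ τ * M := by
    intro x
    have := ob_bern2 (fun z => φ (z + x)) (by fun_prop) τ M hτ (by intro z; simpa using hb (z + x))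
    rw [deriv_comp_add_const] at this
    simpa using this
  have := norm_image_sub_le_of_norm_deriv_le_segment_01' (f := fun x : ℝ => φ x)
    (f' := fun x : ℝ => deriv φ x) (C := τ * M)
    (fun x _ => ((hφ x).hasDerivAt.comp_ofReal).hasDerivWithinAt) (fun x _ => hd x)
  simpa using this

theorem ob_pl0 (φ : ℂ → ℂ) (hφ : Differentiable ℂ φ) (τ M C : ℝ) (hτ : 0 ≤ τ)
    (hM : ∀ x : ℝ, ‖φ x‖ ≤ M) (hC : ∀ z : ℂ, ‖φ z‖ ≤ C * Real.exp (τ * ‖z‖))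
    (z : ℂ) (hz : 0 ≤ z.im) : ‖φ z‖ ≤ M * Real.exp (τ * z.im) := by
  have hC0 : 0 ≤ C := by
    have := (norm_nonneg _).trans (hC 0)
    simpa using this
  have hn : ∀ w : ℂ, ‖φ (I * w) * cexp (-(τ * w))‖ ≤ C * Real.exp (τ * ‖w‖) * Real.exp (-(τ * w.re)) := by
    intro w
    rw [norm_mul, Complex.norm_exp]
    have := hC (I * w)
    rw [norm_mul, norm_I, one_mul] at this
    have e : (-(τ * w)).re = -(τ * w.re) := by simp
    rw [e]; gcongr
  have h := PhragmenLindelof.right_half_plane_of_bounded_on_real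
    (f := fun w => φ (I * w) * cexp (-(τ * w))) (C := M) (z := -I * z)
    (by apply Differentiable.diffContOnCl; fun_prop)
    ⟨1, by norm_num, τ, by
      refine Asymptotics.IsBigO.of_bound C ?_
      rw [eventually_inf_principal]
      refine Eventually.of_forall fun w hw => ?_
      refine (hn w).trans ?_
      have : Real.exp (-(τ * w.re)) ≤ 1 := by
        rw [Real.exp_le_one_iff]
        have : 0 < w.re := hw
        nlinarith
      rw [Real.norm_eq_abs, Real.abs_exp, Real.rpow_one]
      exact mul_le_of_le_one_right (by positivity) this⟩
    (by
      refine ⟨C, ?_⟩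
      rw [eventually_map]
      filter_upwards [eventually_ge_atTop 0] with x hx
      refine (hn x).trans (le_of_eq ?_)
      rw [Complex.norm_real, Real.norm_eq_abs, abs_of_nonneg hx, ofReal_re, mul_assoc, ← Real.exp_add]
      simp)
    (by
      intro x
      rw [norm_mul, Complex.norm_exp]
      have := hM (-x)
      have e : I * (x * I) = ((-x : ℝ) : ℂ) := by
        push_cast; linear_combination (x : ℂ) * I_mul_I
      rw [e]
      simpa using this)
    (by simpa using hz)
  have e : I * (-I * z) = z := by linear_combination (-z) * I_mul_I
  simp only [e] at h
  rw [norm_mul, Complex.norm_exp] at h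
  have e2 : (-(τ * (-I * z))).re = -(τ * z.im) := by simp
  rw [e2, Real.exp_neg, ← div_eq_mul_inv, div_le_iff₀ (Real.exp_pos _)] at h
  exact h

theorem ob_pl (φ : ℂ → ℂ) (hφ : Differentiable ℂ φ) (τ M C : ℝ) (hτ : 0 ≤ τ)
    (hM : ∀ x : ℝ, ‖φ x‖ ≤ M) (hC : ∀ z : ℂ, ‖φ z‖ ≤ C * Real.exp (τ * ‖z‖))
    (z : ℂ) : ‖φ z‖ ≤ M * Real.exp (τ * |z.im|) := by
  rcases le_total 0 z.im with h | h
  · rw [abs_of_nonneg h]; exact ob_pl0 φ hφ τ M C hτ hM hC z h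
  · rw [abs_of_nonpos h]
    have := ob_pl0 (fun z => φ (-z)) (by fun_prop) τ M C hτ (by intro x; simpa using hM (-x))
      (by intro z; simpa using hC (-z)) (-z) (by simpa using h)
    simpa using this

theorem ob_coeff (F : ℂ → ℂ) (hF : Differentiable ℂ F) (σ M : ℝ) (hσ : 0 < σ) (hM : 0 < M)
    (hb : ∀ z : ℂ, ‖F z‖ ≤ M * Real.exp (σ * |z.im|)) :
    ∃ a : ℕ → ℂ, (∀ z, HasSum (fun n => a n * z ^ n) (F z)) ∧
      ∀ n, ∀ r : ℝ, 0 < r → ‖a n‖ ≤ M * Real.exp (σ * r) / r ^ n := by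
  refine ⟨fun n => (n.factorial : ℂ)⁻¹ * iteratedDeriv n F 0, fun z => ?_, fun n r hr => ?_⟩
  · have := Complex.hasSum_taylorSeries_of_entire hF 0 z
    convert! this using 1
    ext n; simp; ring
  · have := Complex.norm_iteratedDeriv_le_of_forall_mem_sphere_norm_le (c := 0) (R := r)
      (C := M * Real.exp (σ * r)) n hr hF.diffContOnCl (by
        intro z hz
        refine (hb z).trans ?_
        have : |z.im| ≤ r := by
          have h := abs_im_le_norm z
          simp at hz; linarith
        gcongr)
    rw [norm_mul, norm_inv, Complex.norm_natCast, ← div_eq_inv_mul, div_le_iff₀ (by positivity)]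
    refine this.trans (le_of_eq ?_)
    ring

theorem ob_pow {H : Type*} [NormedAddCommGroup H] [InnerProductSpace ℂ H]
    (X : H →L[ℂ] H) (n : ℕ) : ‖X ^ n‖ ≤ ‖X‖ ^ n := by
  rcases Nat.eq_zero_or_pos n with h | h
  · subst h; rw [pow_zero, pow_zero]; exact ContinuousLinearMap.norm_id_le
  · exact norm_pow_le' X h

theorem ob_term {H : Type*} [NormedAddCommGroup H] [InnerProductSpace ℂ H]
    (a : ℕ → ℂ) (σ M : ℝ) (hM : 0 < M)
    (ha : ∀ n, ∀ r : ℝ, 0 < r → ‖a n‖ ≤ M * Real.exp (σ * r) / r ^ n)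
    (ε : ℝ) (hε : 0 < ε) (R : ℝ) (hR : 0 ≤ R) (X : H →L[ℂ] H) (hX : ‖X‖ ≤ R) (n : ℕ) :
    ‖a n • X ^ n‖ ≤ M * Real.exp (σ * ((1 + ε) * (R + 1))) * ((1 + ε)⁻¹) ^ n := by
  rw [norm_smul]
  have h1 := ha n ((1 + ε) * (R + 1)) (by positivity)
  have h2 : ‖X ^ n‖ ≤ (R + 1) ^ n := (ob_pow X n).trans (by gcongr; linarith)
  calc _ ≤ (M * Real.exp (σ * ((1 + ε) * (R + 1))) / ((1 + ε) * (R + 1)) ^ n) * (R + 1) ^ n := by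
        gcongr
    _ = _ := by
        rw [mul_pow, inv_pow]; field_simp

theorem ob_geo (ε : ℝ) (hε : 0 < ε) : Summable (fun n : ℕ => ((1 + ε)⁻¹) ^ n) :=
  summable_geometric_of_lt_one (by positivity) (inv_lt_one_of_one_lt₀ (by linarith))

theorem ob_cfc {H : Type*} [NormedAddCommGroup H] [InnerProductSpace ℂ H] [CompleteSpace H]
    (F : ℂ → ℂ) (a : ℕ → ℂ) (hs : ∀ z, HasSum (fun n => a n * z ^ n) (F z))
    (σ M : ℝ) (hM : 0 < M)
    (ha : ∀ n, ∀ r : ℝ, 0 < r → ‖a n‖ ≤ M * Real.exp (σ * r) / r ^ n)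
    (X : H →L[ℂ] H) (hX : IsSelfAdjoint X) :
    cfc (fun z : ℂ => F z.re) X = ∑' n, a n • X ^ n := by
  have hXn : IsStarNormal X := hX.isStarNormal
  have h1 : cfc (fun z : ℂ => F z.re) X = cfc F X := by
    apply cfc_congr
    intro z hz
    simp only
    rw [← hX.mem_spectrum_eq_re hz]
  rw [h1]
  set R := ‖X‖ * ‖(1 : H →L[ℂ] H)‖ with hR
  have hsum : Summable (fun n => a n • X ^ n) :=
    Summable.of_norm_bounded ((ob_geo 1 one_pos).mul_left _)
      (fun n => ob_term a σ M hM ha 1 one_pos ‖X‖ (norm_nonneg _) X le_rfl n)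
  have hT : Tendsto (fun N => cfc (fun z => ∑ n ∈ Finset.range N, a n * z ^ n) X) atTop (𝓝 (cfc F X)) := by
    refine tendsto_cfc_fun ?_ ?_
    · have : F = fun z => ∑' n, a n * z ^ n := by
        ext z; exact (hs z).tsum_eq.symm
      rw [this]
      refine tendstoUniformlyOn_tsum_nat
        (u := fun n => M * Real.exp (σ * ((1 + 1) * (R + 1))) * ((1 + 1)⁻¹) ^ n)
        ((ob_geo 1 one_pos).mul_left _) ?_
      intro n z hz
      have hz' : ‖z‖ ≤ R := spectrum.norm_le_norm_mul_of_mem hz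
      have hR0 : 0 ≤ R := (norm_nonneg _).trans hz'
      rw [norm_mul, norm_pow]
      have h1 := ha n ((1 + 1) * (R + 1)) (by positivity)
      calc _ ≤ (M * Real.exp (σ * ((1 + 1) * (R + 1))) / ((1 + 1) * (R + 1)) ^ n) * (R + 1) ^ n := by
            gcongr; linarith
        _ = _ := by
            rw [mul_pow, inv_pow]; field_simp
    · exact Eventually.of_forall fun N => by fun_prop
  have hT2 := hsum.hasSum.tendsto_sum_nat
  refine tendsto_nhds_unique hT (hT2.congr fun N => ?_)
  have hsp : (fun z : ℂ => ∑ n ∈ Finset.range N, a n * z ^ n)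
      = ∑ n ∈ Finset.range N, (fun z : ℂ => a n * z ^ n) := by
    ext z; simp
  rw [hsp, cfc_sum _ _ _ (fun i _ => by fun_prop)]
  refine Finset.sum_congr rfl fun n _ => ?_
  rw [cfc_const_mul _ _ _ (by fun_prop), cfc_pow_id X n]

/-- `f : ℝ → ℂ` is bandlimited with parameters `(σ, M)`: it is the restriction to `ℝ`
of an entire function `F` with `|F z| ≤ M · exp(σ·|Im z|)`. For a bounded self-adjoint
operator `A`, `f(A)` is given by the continuous functional calculus; since the spectrum
of `A` is real, it is `cfc (fun z : ℂ => f z.re) A`. -/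
theorem operator_lipschitz_bandlimited
    {H : Type*} [NormedAddCommGroup H] [InnerProductSpace ℂ H] [CompleteSpace H]
    (σ M : ℝ) (hσ : 0 < σ) (hM : 0 < M)
    (f : ℝ → ℂ) (F : ℂ → ℂ) (hF : Differentiable ℂ F)
    (hFbound : ∀ z : ℂ, ‖F z‖ ≤ M * Real.exp (σ * |z.im|))
    (hfF : ∀ x : ℝ, f x = F x)
    (A B : H →L[ℂ] H) (hA : IsSelfAdjoint A) (hB : IsSelfAdjoint B) :
    ‖cfc (fun z : ℂ => f z.re) A - cfc (fun z : ℂ => f z.re) B‖ ≤ σ * M * ‖A - B‖ := by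
  simp only [hfF]
  obtain ⟨a, hs, ha⟩ := ob_coeff F hF σ M hσ hM hFbound
  set K := A - B with hK
  have hKs : IsSelfAdjoint K := hA.sub hB
  set S : (H →L[ℂ] H) → (H →L[ℂ] H) := fun X => ∑' n, a n • X ^ n with hS
  have hcfc : ∀ X : H →L[ℂ] H, IsSelfAdjoint X → cfc (fun z : ℂ => F z.re) X = S X :=
    fun X hX => ob_cfc F a hs σ M hM ha X hX
  rw [hcfc A hA, hcfc B hB]
  have hdiff : Differentiable ℂ (fun z : ℂ => S (B + z • K)) := by
    intro z
    set R := ‖z‖ + 1 with hR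
    have := differentiableOn_tsum_of_summable_norm
      (F := fun n (z : ℂ) => a n • (B + z • K) ^ n) (U := Metric.ball (0:ℂ) R)
      (u := fun n => M * Real.exp (σ * ((1 + 1) * ((‖B‖ + R * ‖K‖) + 1))) * ((1 + 1)⁻¹) ^ n)
      ((ob_geo 1 one_pos).mul_left _) (fun n => by fun_prop) Metric.isOpen_ball (by
        intro n w hw
        refine ob_term a σ M hM ha 1 one_pos _ (by positivity) _ ?_ n
        have hw' : ‖w‖ < R := by simpa using hw
        refine (norm_add_le _ _).trans ?_
        rw [norm_smul]; gcongr)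
    exact this.differentiableAt (Metric.isOpen_ball.mem_nhds (by simp [hR]))
  have hreal : ∀ x : ℝ, ‖S (B + (x:ℂ) • K)‖ ≤ M := by
    intro x
    have hsa : IsSelfAdjoint (B + (x:ℂ) • K) := by
      refine hB.add ?_
      rw [Complex.coe_smul]
      exact (IsSelfAdjoint.all x).smul hKs
    rw [← hcfc _ hsa]
    refine norm_cfc_le hM.le fun z _ => ?_
    simpa using hFbound z.re
  have key : ∀ ε : ℝ, 0 < ε → ‖S A - S B‖ ≤ (σ * (1 + ε) * ‖K‖) * M := by
    intro ε hε
    obtain ⟨l, hl1, hl2⟩ := exists_dual_vector'' ℂ (S A - S B)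
    have hln : ∀ Y, ‖l Y‖ ≤ ‖Y‖ := fun Y => by
      simpa using l.le_of_opNorm_le hl1 Y
    set φ : ℂ → ℂ := fun z => l (S (B + z • K)) with hφ
    have hφd : Differentiable ℂ φ := l.differentiable.comp hdiff
    have hτ : 0 ≤ σ * (1 + ε) * ‖K‖ := by positivity
    have hb := ob_pl φ hφd (σ * (1 + ε) * ‖K‖) M
      (M * Real.exp (σ * ((1 + ε) * (‖B‖ + 1))) * ∑' n : ℕ, ((1 + ε)⁻¹) ^ n) hτ
      (fun x => (hln _).trans (hreal x)) (by
        intro z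
        refine (hln _).trans ?_
        have := tsum_of_norm_bounded ((ob_geo ε hε).mul_left _).hasSum
          (fun n => ob_term a σ M hM ha ε hε (‖B‖ + ‖z‖ * ‖K‖) (by positivity) (B + z • K) (by
            refine (norm_add_le _ _).trans ?_
            rw [norm_smul]) n)
        refine this.trans (le_of_eq ?_)
        rw [tsum_mul_left, show σ * ((1 + ε) * (‖B‖ + ‖z‖ * ‖K‖ + 1)) =
          σ * ((1 + ε) * (‖B‖ + 1)) + σ * (1 + ε) * ‖K‖ * ‖z‖ by ring, Real.exp_add]
        ring)
    have := ob_bern3 φ hφd _ M hτ hb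
    have e : φ 1 - φ 0 = l (S A - S B) := by
      simp [hφ, hK]
    rw [e, hl2] at this
    simpa using this
  have lim : Tendsto (fun ε : ℝ => (σ * (1 + ε) * ‖K‖) * M) (𝓝[>] 0) (𝓝 (σ * M * ‖K‖)) := by
    have : Tendsto (fun ε : ℝ => (σ * (1 + ε) * ‖K‖) * M) (𝓝 0) (𝓝 ((σ * (1 + 0) * ‖K‖) * M)) := by
      apply Continuous.tendsto; fun_prop
    rw [show σ * M * ‖K‖ = (σ * (1 + 0) * ‖K‖) * M by ring]
    exact this.mono_left nhdsWithin_le_nhds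
  refine ge_of_tendsto lim ?_
  filter_upwards [self_mem_nhdsWithin] with ε h using key ε h
end

section
/- Let 0 < α < 1. There is an absolute constant c > 0 such that whenever f : ℝ → ℝ satisfies |f(x) − f(y)| ≤ C·|x − y|^α for all x, y ∈ ℝ, and A, B are bounded self-adjoint operators on a complex Hilbert space, then ‖f(A) − f(B)‖ ≤ c·(1 − α)^{−1}·C·‖A − B‖^α. In particular, every Hölder function of order α is operator Hölder of order α. -/
open MeasureTheory

namespace OpHolder

noncomputable def P (y s : ℝ) : ℝ := y * Real.pi⁻¹ * (s ^ 2 + y ^ 2)⁻¹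

noncomputable def Q (y s : ℝ) : ℝ := 2 * P y s - P (2 * y) s

lemma P_nonneg {y : ℝ} (hy : 0 < y) (s : ℝ) : 0 ≤ P y s := by
  unfold P; have := Real.pi_pos; positivity

lemma P_cont {y : ℝ} (hy : 0 < y) : Continuous (P y) := by
  unfold P
  refine Continuous.mul (by fun_prop) (Continuous.inv₀ (by fun_prop) fun s => by positivity)

lemma P_eq {y : ℝ} (hy : 0 < y) : P y = fun s => y⁻¹ * Real.pi⁻¹ * (1 + (s / y) ^ 2)⁻¹ := by
  funext s
  unfold P
  have : s ^ 2 + y ^ 2 ≠ 0 := by positivity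
  have h2 : 1 + (s / y) ^ 2 ≠ 0 := by positivity
  have := Real.pi_pos.ne'
  field_simp
  ring

lemma P_int {y : ℝ} (hy : 0 < y) : Integrable (P y) := by
  rw [P_eq hy]
  exact (integrable_inv_one_add_sq.comp_div hy.ne').const_mul _

lemma P_integral {y : ℝ} (hy : 0 < y) : ∫ s, P y s = 1 := by
  rw [P_eq hy, integral_const_mul,
    Measure.integral_comp_div (fun s : ℝ => (1 + s ^ 2)⁻¹), integral_univ_inv_one_add_sq,
    abs_of_pos hy]
  have := Real.pi_pos.ne'
  simp
  field_simp

lemma Q_mul {y : ℝ} (hy : 0 < y) (s : ℝ) : Q y s * (1 + (s / y) ^ 2) = 3 * P (2 * y) s := by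
  unfold Q P
  have : s ^ 2 + y ^ 2 ≠ 0 := by positivity
  have : s ^ 2 + (2 * y) ^ 2 ≠ 0 := by positivity
  have := Real.pi_pos.ne'
  field_simp
  ring

lemma Q_nonneg {y : ℝ} (hy : 0 < y) (s : ℝ) : 0 ≤ Q y s := by
  have h := Q_mul hy s
  have h1 := P_nonneg (y := 2 * y) (by positivity) s
  have h2 : 0 < 1 + (s / y) ^ 2 := by positivity
  by_contra hn
  push Not at hn
  nlinarith

lemma Q_cont {y : ℝ} (hy : 0 < y) : Continuous (Q y) :=
  ((P_cont hy).const_mul 2).sub (P_cont (by positivity))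

lemma Q_int {y : ℝ} (hy : 0 < y) : Integrable (Q y) :=
  ((P_int hy).const_mul 2).sub (P_int (by positivity))

lemma Q_integral {y : ℝ} (hy : 0 < y) : ∫ s, Q y s = 1 := by
  unfold Q
  rw [integral_sub ((P_int hy).const_mul 2) (P_int (by positivity)), integral_const_mul,
    P_integral hy, P_integral (by positivity)]
  norm_num

/-- bounded continuous -/
def BC (h : ℝ → ℝ) (M : ℝ) : Prop := Continuous h ∧ ∀ x, |h x| ≤ M

/-- convolution -/
noncomputable def V (k h : ℝ → ℝ) (x : ℝ) : ℝ := ∫ s, k s * h (x - s)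

structure Ker (k : ℝ → ℝ) : Prop where
  cont : Continuous k
  nn : ∀ s, 0 ≤ k s
  int : Integrable k
  one : ∫ s, k s = 1

lemma kerP {y : ℝ} (hy : 0 < y) : Ker (P y) := ⟨P_cont hy, P_nonneg hy, P_int hy, P_integral hy⟩
lemma kerQ {y : ℝ} (hy : 0 < y) : Ker (Q y) := ⟨Q_cont hy, Q_nonneg hy, Q_int hy, Q_integral hy⟩

lemma BC.integrable {k h : ℝ → ℝ} {M : ℝ} (hk : Ker k) (hh : BC h M) (x : ℝ) :
    Integrable (fun s => k s * h (x - s)) := by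
  refine hk.int.mul_bdd (c := M) ?_ ?_
  · exact (hh.1.comp (by fun_prop)).aestronglyMeasurable
  · exact .of_forall fun s => hh.2 _

lemma BC.V {k h : ℝ → ℝ} {M : ℝ} (hk : Ker k) (hh : BC h M) : BC (V k h) M := by
  constructor
  · refine continuous_of_dominated (bound := fun s => k s * M) ?_ ?_ (hk.int.mul_const M) ?_
    · intro x; exact (hh.integrable hk x).aestronglyMeasurable
    · intro x
      refine .of_forall fun s => ?_
      rw [norm_mul, Real.norm_of_nonneg (hk.nn s)]
      exact mul_le_mul_of_nonneg_left (hh.2 _) (hk.nn s)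
    · refine .of_forall fun s => ?_
      exact continuous_const.mul (hh.1.comp (by fun_prop))
  · intro x
    have : ‖∫ s, k s * h (x - s)‖ ≤ ∫ s, k s * M := by
      refine norm_integral_le_of_norm_le (hk.int.mul_const M) (.of_forall fun s => ?_)
      rw [norm_mul, Real.norm_of_nonneg (hk.nn s)]
      exact mul_le_mul_of_nonneg_left (hh.2 _) (hk.nn s)
    rw [integral_mul_const, hk.one, one_mul] at this
    exact this

lemma V_sub {k h g : ℝ → ℝ} {M N : ℝ} (hk : Ker k) (hh : BC h M) (hg : BC g N) :
    V k (fun x => h x - g x) = fun x => V k h x - V k g x := by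
  funext x
  unfold V
  rw [← integral_sub (hh.integrable hk x) (hg.integrable hk x)]
  simp_rw [mul_sub]

lemma V_comm {k l h : ℝ → ℝ} {M : ℝ} (hk : Ker k) (hl : Ker l) (hh : BC h M) :
    V k (V l h) = V l (V k h) := by
  funext x
  unfold V
  simp_rw [← integral_const_mul]
  rw [integral_integral_swap]
  · refine integral_congr_ae (.of_forall fun s => integral_congr_ae (.of_forall fun r => ?_))
    simp only
    rw [sub_right_comm]; ring
  · have : Integrable (fun z : ℝ × ℝ => (k z.1 * l z.2) * h (x - z.1 - z.2)) (volume.prod volume) := by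
      refine (hk.int.mul_prod hl.int).mul_bdd (c := M) ?_ ?_
      · exact (hh.1.comp (by fun_prop)).aestronglyMeasurable
      · exact .of_forall fun s => hh.2 _
    refine this.congr (.of_forall fun z => ?_)
    simp [Function.uncurry, mul_assoc]

lemma V_Q {y : ℝ} (hy : 0 < y) {h : ℝ → ℝ} {M : ℝ} (hh : BC h M) :
    V (Q y) h = fun x => 2 * V (P y) h x - V (P (2 * y)) h x := by
  funext x
  unfold V
  rw [← integral_const_mul, ← integral_sub ((hh.integrable (kerP hy) x).const_mul 2)
    (hh.integrable (kerP (by positivity)) x)]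
  refine integral_congr_ae (.of_forall fun s => ?_)
  simp only [Q]; ring

lemma approx {y : ℝ} (hy : 0 < y) {α C : ℝ} (h0 : 0 < α) (h1 : α < 1) (hC : 0 ≤ C)
    {f : ℝ → ℝ} {M : ℝ} (hf : BC f M) (hol : ∀ x y : ℝ, |f x - f y| ≤ C * |x - y| ^ α) (x : ℝ) :
    |f x - V (Q y) f x| ≤ 3 * C * y ^ α := by
  have e : f x - V (Q y) f x = ∫ s, Q y s * (f x - f (x - s)) := by
    simp_rw [mul_sub]
    rw [integral_sub ((Q_int hy).mul_const _) (hf.integrable (kerQ hy) x), integral_mul_const,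
      Q_integral hy, one_mul]
    rfl
  rw [e]
  have i2 : Integrable (fun s => 3 * P (2 * y) s * (C * y ^ α)) :=
    ((P_int (y := 2 * y) (by positivity)).const_mul 3).mul_const _
  have : ‖∫ s, Q y s * (f x - f (x - s))‖ ≤ ∫ s, 3 * P (2 * y) s * (C * y ^ α) := by
    refine norm_integral_le_of_norm_le i2 (.of_forall fun s => ?_)
    rw [norm_mul, Real.norm_of_nonneg (Q_nonneg hy s), ← Q_mul hy s, mul_assoc]
    refine mul_le_mul_of_nonneg_left ?_ (Q_nonneg hy s)
    have b := hol x (x - s)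
    rw [sub_sub_cancel] at b
    refine b.trans ?_
    have : |s| ^ α ≤ (1 + (s / y) ^ 2) * y ^ α := by
      have e2 : |s| = (|s| / y) * y := by field_simp
      rw [e2, Real.mul_rpow (by positivity) hy.le]
      refine mul_le_mul_of_nonneg_right ?_ (by positivity)
      rw [← sq_abs, abs_div, abs_of_pos hy]
      generalize hu : |s| / y = u
      have hu0 : 0 ≤ u := by rw [← hu]; positivity
      rcases le_total u 1 with h | h
      · have := Real.rpow_le_one hu0 h h0.le
        nlinarith
      · have : u ^ α ≤ u ^ (1 : ℝ) := Real.rpow_le_rpow_of_exponent_le h h1.le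
        rw [Real.rpow_one] at this
        nlinarith
    nlinarith
  rw [integral_mul_const, integral_const_mul, P_integral (by positivity)] at this
  rw [← Real.norm_eq_abs]
  linarith


section op
set_option linter.unusedSectionVars false
variable {H : Type*} [NormedAddCommGroup H] [InnerProductSpace ℂ H] [CompleteSpace H]

lemma opnorm_of {T : H →L[ℂ] H} {L : ℝ} (hL : 0 ≤ L)
    (h : ∀ u v : H, ‖inner ℂ (T u) v‖ ≤ L / 2 * (‖u‖ ^ 2 + ‖v‖ ^ 2)) : ‖T‖ ≤ L := by
  refine T.opNorm_le_bound hL fun u => ?_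
  by_cases hu : u = 0
  · simp [hu]
  by_cases hw : T u = 0
  · simp only [hw, norm_zero]; positivity
  have hu' := norm_pos_iff.2 hu
  have hw' := norm_pos_iff.2 hw
  have := h u (((‖u‖ / ‖T u‖ : ℝ) : ℂ) • T u)
  rw [inner_smul_right, norm_mul, inner_self_eq_norm_sq_to_K, norm_smul] at this
  simp only [Complex.norm_real, norm_div, norm_norm, norm_pow, Complex.coe_algebraMap] at this
  have e : ‖u‖ / ‖T u‖ * ‖T u‖ = ‖u‖ := by field_simp
  rw [pow_two ‖T u‖, ← mul_assoc, e] at this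
  have : ‖u‖ * ‖T u‖ ≤ ‖u‖ * (L * ‖u‖) := by linarith
  exact le_of_mul_le_mul_left this hu'

lemma resolvent_id {R : Type*} [Ring R] [Algebra ℝ R] (a qa b qb A B : R) (y : ℝ)
    (h1 : a * A = qa) (h2 : qa * A + y ^ 2 • a = 1) (h3 : B * b = qb)
    (h4 : B * qb + y ^ 2 • b = 1) :
    a - b = qa * (B - A) * b + a * (B - A) * qb := by
  have e2 : qa * A = 1 - y ^ 2 • a := by rw [← h2]; abel
  have e4 : B * qb = 1 - y ^ 2 • b := by rw [← h4]; abel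
  have : qa * (B - A) * b + a * (B - A) * qb
      = qa * (B * b) - (qa * A) * b + a * (B * qb) - (a * A) * qb := by noncomm_ring
  rw [this, e2, e4, h1, h3, sub_mul, mul_sub]
  simp only [one_mul, mul_one, smul_mul_assoc, mul_smul_comm]
  abel

noncomputable def p (y t x : ℝ) : ℝ := ((x - t) ^ 2 + y ^ 2)⁻¹
noncomputable def q (y t x : ℝ) : ℝ := (x - t) * ((x - t) ^ 2 + y ^ 2)⁻¹

lemma p_cont {y : ℝ} (hy : 0 < y) (t : ℝ) : Continuous (p y t) := by
  unfold p
  exact Continuous.inv₀ (by fun_prop) fun s => by positivity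
lemma q_cont {y : ℝ} (hy : 0 < y) (t : ℝ) : Continuous (q y t) := by
  unfold q
  exact Continuous.mul (by fun_prop) (Continuous.inv₀ (by fun_prop) fun s => by positivity)

lemma cfc_shift (A : H →L[ℂ] H) (hA : IsSelfAdjoint A) (t : ℝ) :
    cfc (fun x : ℝ => x - t) A = A - algebraMap ℝ _ t := by
  rw [cfc_sub (fun x : ℝ => x) (fun _ => t) A, cfc_id' ℝ A, cfc_const t A]

lemma pos_id {y : ℝ} (hy : 0 < y) (A : H →L[ℂ] H) (hA : IsSelfAdjoint A) (t : ℝ) (u : H) :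
    y ^ 2 * ‖cfc (p y t) A u‖ ^ 2 + ‖cfc (q y t) A u‖ ^ 2
      = (inner ℂ (cfc (p y t) A u) u : ℂ).re := by
  have hp := p_cont hy t
  have hq := q_cont hy t
  have sp : IsSelfAdjoint (cfc (p y t) A) := cfc_predicate _ _
  have sq : IsSelfAdjoint (cfc (q y t) A) := cfc_predicate _ _
  have n : ∀ T : H →L[ℂ] H, IsSelfAdjoint T → ‖T u‖ ^ 2 = (inner ℂ ((T * T) u) u : ℂ).re := by
    intro T hT
    rw [mul_apply_eq_comp, ← ContinuousLinearMap.adjoint_inner_right, hT.adjoint_eq,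
      inner_self_eq_norm_sq_to_K]
    norm_cast
  have e : cfc (p y t) A = (y ^ 2) • (cfc (p y t) A * cfc (p y t) A)
      + cfc (q y t) A * cfc (q y t) A := by
    rw [← cfc_mul (p y t) (p y t) A, ← cfc_mul (q y t) (q y t) A,
      ← cfc_smul (y ^ 2) (fun x => p y t x * p y t x) A, ← cfc_add ..]
    refine cfc_congr fun x _ => ?_
    simp only [p, q, smul_eq_mul]
    have : (x - t) ^ 2 + y ^ 2 ≠ 0 := by positivity
    field_simp
    ring
  rw [n _ sp, n _ sq]
  conv_rhs => rw [e]
  rw [_root_.add_apply, _root_.smul_apply, inner_add_left,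
    Complex.add_re, ← Complex.coe_smul, inner_smul_left,
    Complex.conj_ofReal, Complex.re_ofReal_mul]

lemma key {y : ℝ} (hy : 0 < y) (A B : H →L[ℂ] H) (hA : IsSelfAdjoint A) (hB : IsSelfAdjoint B)
    (t : ℝ) (u v : H) :
    y * ‖inner ℂ ((cfc (p y t) A - cfc (p y t) B) u) v‖ ≤
      ‖A - B‖ / 2 * ((inner ℂ (cfc (p y t) B u) u : ℂ).re + (inner ℂ (cfc (p y t) A v) v : ℂ).re) := by
  rw [← pos_id hy A hA, ← pos_id hy B hB]
  have hp := p_cont hy t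
  have hq := q_cont hy t
  have sp : IsSelfAdjoint (cfc (p y t) A) := cfc_predicate _ _
  have sq : IsSelfAdjoint (cfc (q y t) A) := cfc_predicate _ _
  have hs : Continuous (fun x : ℝ => x - t) := by fun_prop
  have g : ∀ T : H →L[ℂ] H, IsSelfAdjoint T →
     cfc (p y t) T * cfc (fun x : ℝ => x - t) T = cfc (q y t) T ∧
     cfc (fun x : ℝ => x - t) T * cfc (p y t) T = cfc (q y t) T ∧
     cfc (q y t) T * cfc (fun x : ℝ => x - t) T + y ^ 2 • cfc (p y t) T = 1 ∧
     cfc (fun x : ℝ => x - t) T * cfc (q y t) T + y ^ 2 • cfc (p y t) T = 1 := by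
    intro T hT
    refine ⟨?_, ?_, ?_, ?_⟩
    · rw [← cfc_mul ..]
      refine cfc_congr fun x _ => ?_
      simp only [p, q]; ring
    · rw [← cfc_mul ..]
      refine cfc_congr fun x _ => ?_
      simp only [p, q]
    · rw [← cfc_mul .., ← cfc_smul .., ← cfc_add .., ← cfc_one ℝ T]
      refine cfc_congr fun x _ => ?_
      have : (x - t) ^ 2 + y ^ 2 ≠ 0 := by positivity
      simp only [p, q, smul_eq_mul, Pi.one_apply]
      field_simp
    · rw [← cfc_mul .., ← cfc_smul .., ← cfc_add .., ← cfc_one ℝ T]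
      refine cfc_congr fun x _ => ?_
      have : (x - t) ^ 2 + y ^ 2 ≠ 0 := by positivity
      simp only [p, q, smul_eq_mul, Pi.one_apply]
      field_simp
  obtain ⟨a1, -, a3, -⟩ := g A hA
  obtain ⟨-, b2, -, b4⟩ := g B hB
  have id := resolvent_id _ _ _ _ _ _ y a1 a3 b2 b4
  rw [cfc_shift A hA, cfc_shift B hB, sub_sub_sub_cancel_right] at id
  rw [id]
  simp only [_root_.add_apply, mul_apply_eq_comp, inner_add_left]
  rw [← ContinuousLinearMap.adjoint_inner_right (cfc (q y t) A), sq.adjoint_eq,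
    ← ContinuousLinearMap.adjoint_inner_right (cfc (p y t) A), sp.adjoint_eq]
  set K := B - A with hK
  have nK : ‖A - B‖ = ‖K‖ := norm_sub_rev _ _
  rw [nK]
  have bd : ∀ w z : H, ‖inner ℂ (K w) z‖ ≤ ‖K‖ * (‖w‖ * ‖z‖) := fun w z =>
    (norm_inner_le_norm _ _).trans (by
      rw [← mul_assoc]; exact mul_le_mul_of_nonneg_right (K.le_opNorm w) (norm_nonneg _))
  have t1 := bd (cfc (p y t) B u) (cfc (q y t) A v)
  have t2 := bd (cfc (q y t) B u) (cfc (p y t) A v)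
  have t3 := (norm_add_le (inner ℂ (K (cfc (p y t) B u)) (cfc (q y t) A v))
    (inner ℂ (K (cfc (q y t) B u)) (cfc (p y t) A v))).trans (add_le_add t1 t2)
  refine (mul_le_mul_of_nonneg_left t3 hy.le).trans ?_
  generalize ‖cfc (p y t) B u‖ = α
  generalize ‖cfc (q y t) B u‖ = β
  generalize ‖cfc (p y t) A v‖ = γ
  generalize ‖cfc (q y t) A v‖ = δ
  have := norm_nonneg K
  nlinarith [mul_nonneg this (sq_nonneg (y * α - δ)), mul_nonneg this (sq_nonneg (y * γ - β))]

lemma P_eq_p (y t x : ℝ) : P y (x - t) = (y * Real.pi⁻¹) * p y t x := rfl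

lemma P_cont2 {y : ℝ} (hy : 0 < y) (t : ℝ) : Continuous (fun x => P y (x - t)) :=
  (P_cont hy).comp (by fun_prop)

lemma keyP {y : ℝ} (hy : 0 < y) (A B : H →L[ℂ] H) (hA : IsSelfAdjoint A) (hB : IsSelfAdjoint B)
    (t : ℝ) (u v : H) :
    ‖inner ℂ ((cfc (fun x => P y (x - t)) A - cfc (fun x => P y (x - t)) B) u) v‖ ≤
      ‖A - B‖ / (2 * y) * ((inner ℂ (cfc (fun x => P y (x - t)) B u) u : ℂ).re
        + (inner ℂ (cfc (fun x => P y (x - t)) A v) v : ℂ).re) := by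
  have hp := p_cont hy t
  have c : 0 < y * Real.pi⁻¹ := by have := Real.pi_pos; positivity
  have e : ∀ T : H →L[ℂ] H, cfc (fun x => P y (x - t)) T
      = (((y * Real.pi⁻¹ : ℝ)) : ℂ) • cfc (p y t) T := by
    intro T
    simp_rw [P_eq_p]
    rw [cfc_const_mul _ _ T]
    rfl
  rw [e, e, ← smul_sub]
  simp only [_root_.smul_apply, inner_smul_left, Complex.conj_ofReal,
    Complex.re_ofReal_mul, norm_mul, Complex.norm_real, Real.norm_of_nonneg c.le]
  rw [← mul_add, mul_left_comm]
  refine mul_le_mul_of_nonneg_left ?_ c.le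
  have := key hy A B hA hB t u v
  rw [mul_comm, ← le_div_iff₀ hy] at this
  refine this.trans (le_of_eq ?_)
  field_simp

lemma V_eq (k h : ℝ → ℝ) : V k h = fun x => ∫ t, h t * k (x - t) := by
  funext x
  unfold V
  rw [← integral_sub_left_eq_self (fun s => k s * h (x - s)) volume x]
  refine integral_congr_ae (.of_forall fun s => ?_)
  simp only [sub_sub_cancel]; ring

lemma P_bound {y : ℝ} (hy : 0 < y) {r z t : ℝ} (hz : |z| ≤ r) :
    P y (z - t) ≤ (2 + 2 * r ^ 2 / y ^ 2) * P y t := by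
  unfold P
  rw [mul_left_comm]
  have c : 0 ≤ y * Real.pi⁻¹ := by have := Real.pi_pos; positivity
  refine mul_le_mul_of_nonneg_left ?_ c
  rw [← div_eq_mul_inv, inv_eq_one_div, div_le_div_iff₀ (by positivity) (by positivity)]
  have hz2 : z ^ 2 ≤ r ^ 2 := sq_le_sq' (by linarith [neg_abs_le z]) ((le_abs_self z).trans hz)
  have e : (2 + 2 * r ^ 2 / y ^ 2) * ((z - t) ^ 2 + y ^ 2)
    = 2 * (z - t) ^ 2 + 2 * y ^ 2 + 2 * r ^ 2 + 2 * r ^ 2 / y ^ 2 * (z - t) ^ 2 := by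
    field_simp
    ring
  rw [e]
  have : 0 ≤ 2 * r ^ 2 / y ^ 2 * (z - t) ^ 2 := by positivity
  nlinarith [sq_nonneg (2 * z - t), sq_nonneg y]

lemma cfcV {y : ℝ} (hy : 0 < y) {h : ℝ → ℝ} {M : ℝ} (hh : BC h M) (A : H →L[ℂ] H)
    (hA : IsSelfAdjoint A) :
    Integrable (fun t => h t • cfc (fun x => P y (x - t)) A) ∧
    cfc (V (P y) h) A = ∫ t, h t • cfc (fun x => P y (x - t)) A := by
  have e : ∀ t, h t • cfc (fun x => P y (x - t)) A = cfc (fun x => h t * P y (x - t)) A := by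
    intro t
    have := P_cont2 hy t
    rw [← cfc_smul (h t) (fun x => P y (x - t)) A this.continuousOn]
    rfl
  simp_rw [e, V_eq]
  have hc : Continuous (Function.uncurry fun t x : ℝ => h t * P y (x - t)) := by
    have h1 := hh.1
    have h2 := P_cont hy
    exact (h1.comp continuous_fst).mul (h2.comp (by fun_prop))
  have hb : ∀ᵐ t : ℝ, ∀ z ∈ spectrum ℝ A, ‖h t * P y (z - t)‖ ≤
      M * ((2 + 2 * (‖A‖ * ‖(1 : H →L[ℂ] H)‖) ^ 2 / y ^ 2) * P y t) := by
    refine .of_forall fun t z hz => ?_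
    rw [norm_mul, Real.norm_of_nonneg (P_nonneg hy _)]
    refine mul_le_mul (hh.2 t) (P_bound hy ?_) (P_nonneg hy _) ((abs_nonneg _).trans (hh.2 t))
    exact spectrum.norm_le_norm_mul_of_mem hz
  have hi : HasFiniteIntegral (fun t : ℝ =>
      M * ((2 + 2 * (‖A‖ * ‖(1 : H →L[ℂ] H)‖) ^ 2 / y ^ 2) * P y t)) volume :=
    (((P_int hy).const_mul _).const_mul M).2
  exact ⟨integrable_cfc _ _ A hc.continuousOn hb hi, cfc_integral _ _ A hc.continuousOn hb hi⟩

noncomputable def Phi (u v : H) : (H →L[ℂ] H) →L[ℝ] ℂ :=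
  ((innerSL ℂ v).comp (ContinuousLinearMap.apply ℂ H u)).restrictScalars ℝ

lemma Phi_apply (u v : H) (T : H →L[ℂ] H) : Phi u v T = inner ℂ v (T u) := rfl

lemma mass {y : ℝ} (hy : 0 < y) (A : H →L[ℂ] H) (hA : IsSelfAdjoint A) (u : H) :
    Integrable (fun t => (inner ℂ (cfc (fun x => P y (x - t)) A u) u : ℂ).re) ∧
    ∫ t, (inner ℂ (cfc (fun x => P y (x - t)) A u) u : ℂ).re = ‖u‖ ^ 2 := by
  have h1 : BC (fun _ => 1) 1 := ⟨continuous_const, fun x => by simp⟩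
  obtain ⟨i, e⟩ := cfcV hy h1 A hA
  have eV : V (P y) (fun _ => 1) = fun _ => 1 := by
    funext x; simp [V, P_integral hy]
  rw [eV, cfc_const_one ℝ A] at e
  simp only [one_smul] at i e
  have r : ∀ T : H →L[ℂ] H, (inner ℂ (T u) u : ℂ).re = (Complex.reCLM.comp (Phi u u)) T := by
    intro T
    rw [ContinuousLinearMap.comp_apply, Phi_apply, Complex.reCLM_apply, ← inner_conj_symm,
      Complex.conj_re]
  simp_rw [r]
  refine ⟨ContinuousLinearMap.integrable_comp _ i, ?_⟩
  rw [ContinuousLinearMap.integral_comp_comm _ i, ← e, ← r]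
  simp only [one_apply_eq_self, inner_self_eq_norm_sq_to_K]
  norm_cast

lemma bernP {y : ℝ} (hy : 0 < y) {h : ℝ → ℝ} {M : ℝ} (hh : BC h M) (A B : H →L[ℂ] H)
    (hA : IsSelfAdjoint A) (hB : IsSelfAdjoint B) :
    ‖cfc (V (P y) h) A - cfc (V (P y) h) B‖ ≤ M / y * ‖A - B‖ := by
  have hM : 0 ≤ M := (abs_nonneg _).trans (hh.2 0)
  obtain ⟨iA, eA⟩ := cfcV hy hh A hA
  obtain ⟨iB, eB⟩ := cfcV hy hh B hB
  rw [eA, eB, ← integral_sub iA iB]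
  refine opnorm_of (by positivity) fun u v => ?_
  have ii : Integrable (fun t => h t • cfc (fun x => P y (x - t)) A
    - h t • cfc (fun x => P y (x - t)) B) := iA.sub iB
  rw [norm_inner_symm, ← Phi_apply, ← ContinuousLinearMap.integral_comp_comm _ ii]
  obtain ⟨jA, fA⟩ := mass hy A hA v
  obtain ⟨jB, fB⟩ := mass hy B hB u
  refine (norm_integral_le_of_norm_le (((jB.add jA).const_mul (‖A - B‖ / (2 * y))).const_mul M)
    (.of_forall fun t => ?_)).trans (le_of_eq ?_)
  · rw [← smul_sub, map_smul, norm_smul, Phi_apply, norm_inner_symm]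
    exact mul_le_mul (hh.2 t) (keyP hy A B hA hB t u v) (norm_nonneg _) hM
  · rw [integral_const_mul, integral_const_mul]
    simp only [Pi.add_apply]
    rw [integral_add jB jA, fA, fB]
    field_simp

lemma bernQ {y : ℝ} (hy : 0 < y) {h : ℝ → ℝ} {M : ℝ} (hh : BC h M) (A B : H →L[ℂ] H)
    (hA : IsSelfAdjoint A) (hB : IsSelfAdjoint B) :
    ‖cfc (V (Q y) h) A - cfc (V (Q y) h) B‖ ≤ 5 / 2 * (M / y) * ‖A - B‖ := by
  have hy2 : 0 < 2 * y := by positivity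
  have c1 := (hh.V (kerP hy)).1
  have c2 := (hh.V (kerP hy2)).1
  have e : ∀ T : H →L[ℂ] H, IsSelfAdjoint T → cfc (V (Q y) h) T
      = (2 : ℝ) • cfc (V (P y) h) T - cfc (V (P (2 * y)) h) T := by
    intro T hT
    rw [V_Q hy hh, cfc_sub .., cfc_const_mul _ _ T]
  rw [e A hA, e B hB, sub_sub_sub_comm, ← smul_sub]
  refine (norm_sub_le _ _).trans ?_
  rw [norm_smul]
  have b1 := bernP hy hh A B hA hB
  have b2 := bernP hy2 hh A B hA hB
  have : M / (2 * y) = M / y / 2 := by field_simp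
  rw [this] at b2
  norm_num
  linarith

/-- iterated averages -/
noncomputable def S (δ : ℝ) : ℕ → (ℝ → ℝ) → ℝ → ℝ
  | 0, h => V (Q δ) h
  | n + 1, h => V (Q (2 ^ (n + 1) * δ)) (S δ n h)

lemma S_BC {δ : ℝ} (hδ : 0 < δ) {h : ℝ → ℝ} {M : ℝ} (hh : BC h M) (n : ℕ) : BC (S δ n h) M := by
  induction n with
  | zero => exact hh.V (kerQ hδ)
  | succ n ih => exact ih.V (kerQ (by positivity))

lemma S_sub {δ : ℝ} (hδ : 0 < δ) {h g : ℝ → ℝ} {M N : ℝ} (hh : BC h M) (hg : BC g N) (n : ℕ) :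
    S δ n (fun x => h x - g x) = fun x => S δ n h x - S δ n g x := by
  induction n with
  | zero => exact V_sub (kerQ hδ) hh hg
  | succ n ih =>
    simp only [S]
    rw [ih]
    exact V_sub (kerQ (by positivity)) (S_BC hδ hh n) (S_BC hδ hg n)

lemma S_comm {δ y : ℝ} (hδ : 0 < δ) (hy : 0 < y) {h : ℝ → ℝ} {M : ℝ} (hh : BC h M) (n : ℕ) :
    S δ n (V (Q y) h) = V (Q y) (S δ n h) := by
  induction n with
  | zero => exact V_comm (kerQ hδ) (kerQ hy) hh
  | succ n ih =>
    simp only [S]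
    rw [ih]
    exact V_comm (kerQ (by positivity)) (kerQ hy) (S_BC hδ hh n)

lemma S_bern {δ : ℝ} (hδ : 0 < δ) {h : ℝ → ℝ} {M : ℝ} (hh : BC h M) (n : ℕ) (A B : H →L[ℂ] H)
    (hA : IsSelfAdjoint A) (hB : IsSelfAdjoint B) :
    ‖cfc (S δ n h) A - cfc (S δ n h) B‖ ≤ 5 / 2 * (M / (2 ^ n * δ)) * ‖A - B‖ := by
  cases n with
  | zero => simpa [S] using bernQ hδ hh A B hA hB
  | succ n => exact bernQ (by positivity) (S_BC hδ hh n) A B hA hB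

lemma D_tri (A B : H →L[ℂ] H) (hA : IsSelfAdjoint A) (hB : IsSelfAdjoint B) {f g : ℝ → ℝ}
    (hf : Continuous f) (hg : Continuous g) :
    ‖cfc f A - cfc f B‖ ≤ ‖cfc (fun x => f x - g x) A - cfc (fun x => f x - g x) B‖
      + ‖cfc g A - cfc g B‖ := by
  rw [cfc_sub f g A, cfc_sub f g B]
  refine le_trans (le_of_eq ?_) (norm_add_le _ _)
  congr 1; abel

lemma bounded_case {α C : ℝ} (h0 : 0 < α) (h1 : α < 1) (hC : 0 ≤ C)
    {f : ℝ → ℝ} {M : ℝ} (hf : BC f M) (hol : ∀ x y : ℝ, |f x - f y| ≤ C * |x - y| ^ α)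
    (A B : H →L[ℂ] H) (hA : IsSelfAdjoint A) (hB : IsSelfAdjoint B) (hAB : 0 < ‖A - B‖) :
    ‖cfc f A - cfc f B‖ ≤ 36 * (1 - α)⁻¹ * C * ‖A - B‖ ^ α := by
  set δ := ‖A - B‖ with hδ
  set r : ℝ := 2 ^ (α - 1) with hr
  have r0 : 0 < r := by positivity
  have r1 : r ≤ 1 - (1 - α) / 2 := by
    have := rpow_one_add_le_one_add_mul_self (s := -1/2) (by norm_num) (p := 1 - α)
      (by linarith) (by linarith)
    have e : r = (1 + -1/2 : ℝ) ^ (1 - α) := by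
      rw [hr, show (1 + -1/2 : ℝ) = 2⁻¹ by norm_num, Real.inv_rpow (by norm_num),
        ← Real.rpow_neg (by norm_num)]
      congr 1; ring
    rw [e]; linarith
  have first : ‖cfc (fun x => f x - S δ 0 f x) A - cfc (fun x => f x - S δ 0 f x) B‖
      ≤ 6 * C * δ ^ α := by
    have n : ∀ T : H →L[ℂ] H, ‖cfc (fun x => f x - S δ 0 f x) T‖ ≤ 3 * C * δ ^ α := fun T =>
      norm_cfc_le (by positivity) fun x _ => approx hAB h0 h1 hC hf hol x
    refine (norm_sub_le _ _).trans ?_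
    linarith [n A, n B]
  have step : ∀ n : ℕ, ‖cfc (S δ n f) A - cfc (S δ n f) B‖ ≤
      15 * C * δ ^ α * r ^ n + ‖cfc (S δ (n + 1) f) A - cfc (S δ (n + 1) f) B‖ := by
    intro n
    have hy : 0 < 2 ^ (n + 1) * δ := by positivity
    refine (D_tri A B hA hB (S_BC hAB hf n).1 (S_BC hAB hf (n + 1)).1).trans ?_
    refine add_le_add ?_ le_rfl
    have e : (fun x => S δ n f x - S δ (n + 1) f x)
        = S δ n (fun x => f x - V (Q (2 ^ (n + 1) * δ)) f x) := by
      rw [S_sub hAB hf (hf.V (kerQ hy)), S_comm hAB hy hf]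
      rfl
    rw [e]
    have bc : BC (fun x => f x - V (Q (2 ^ (n + 1) * δ)) f x) (3 * C * (2 ^ (n + 1) * δ) ^ α) :=
      ⟨hf.1.sub (hf.V (kerQ hy)).1, approx hy h0 h1 hC hf hol⟩
    refine (S_bern hAB bc n A B hA hB).trans ?_
    rw [← hδ]
    have e1 : (2 ^ (n + 1) * δ) ^ α = 2 ^ α * (2 ^ n * r ^ n) * δ ^ α := by
      rw [Real.mul_rpow (by positivity) hAB.le, ← mul_pow]
      have : (2 : ℝ) * r = 2 ^ α := by
        rw [hr, Real.rpow_sub_one (by norm_num)]; field_simp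
      rw [this, ← pow_succ', ← Real.rpow_natCast, ← Real.rpow_mul (by norm_num),
        ← Real.rpow_natCast, ← Real.rpow_mul (by norm_num), mul_comm α]
    rw [e1]
    have e2 : 5 / 2 * (3 * C * (2 ^ α * (2 ^ n * r ^ n) * δ ^ α) / (2 ^ n * δ)) * δ
      = 15 / 2 * C * δ ^ α * r ^ n * 2 ^ α := by
      field_simp
      ring
    rw [e2]
    have e3 : (2 : ℝ) ^ α ≤ 2 := by
      calc (2 : ℝ) ^ α ≤ 2 ^ (1 : ℝ) := Real.rpow_le_rpow_of_exponent_le (by norm_num) h1.le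
        _ = 2 := Real.rpow_one 2
    have : 0 ≤ C * δ ^ α * r ^ n := by positivity
    nlinarith
  have sum : ∀ n : ℕ, ‖cfc (S δ 0 f) A - cfc (S δ 0 f) B‖ ≤
      15 * C * δ ^ α * ∑ i ∈ Finset.range n, r ^ i
        + ‖cfc (S δ n f) A - cfc (S δ n f) B‖ := by
    intro n
    induction n with
    | zero => simp
    | succ n ih =>
      rw [Finset.sum_range_succ, mul_add]
      linarith [step n]
  have geo : ∀ n : ℕ, ∑ i ∈ Finset.range n, r ^ i ≤ 2 * (1 - α)⁻¹ := by
    intro n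
    have hp : 0 < 1 - α := by linarith
    have : (∑ i ∈ Finset.range n, r ^ i) * (1 - r) = 1 - r ^ n := geom_sum_mul_neg r n
    have hs : 0 ≤ ∑ i ∈ Finset.range n, r ^ i := Finset.sum_nonneg fun i _ => by positivity
    have : 0 < r ^ n := by positivity
    rw [← div_eq_mul_inv, le_div_iff₀ hp]
    nlinarith
  have tot : ∀ n : ℕ, ‖cfc f A - cfc f B‖ ≤
      6 * C * δ ^ α + 15 * C * δ ^ α * (2 * (1 - α)⁻¹) + 5 / 2 * M * (1 / 2) ^ n := by
    intro n
    have a1 := D_tri A B hA hB hf.1 (S_BC hAB hf 0).1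
    have a2 := S_bern hAB hf n A B hA hB
    rw [← hδ] at a2
    have e : 5 / 2 * (M / (2 ^ n * δ)) * δ = 5 / 2 * M * (1 / 2) ^ n := by
      rw [one_div, inv_pow]; field_simp
    rw [e] at a2
    have a3 : 15 * C * δ ^ α * ∑ i ∈ Finset.range n, r ^ i ≤ 15 * C * δ ^ α * (2 * (1 - α)⁻¹) :=
      mul_le_mul_of_nonneg_left (geo n) (by positivity)
    linarith [sum n]
  have lim : Filter.Tendsto (fun n : ℕ => 6 * C * δ ^ α + 15 * C * δ ^ α * (2 * (1 - α)⁻¹)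
      + 5 / 2 * M * (1 / 2) ^ n) Filter.atTop
      (nhds (6 * C * δ ^ α + 15 * C * δ ^ α * (2 * (1 - α)⁻¹) + 5 / 2 * M * 0)) :=
    ((tendsto_pow_atTop_nhds_zero_of_lt_one (by norm_num) (by norm_num)).const_mul _).const_add _
  have fin := ge_of_tendsto' lim tot
  refine fin.trans ?_
  have i1 : 1 ≤ (1 - α)⁻¹ := (one_le_inv₀ (by linarith)).2 (by linarith)
  have : 0 ≤ C * δ ^ α := by positivity
  nlinarith

end op
end OpHolder

/-- Aleksandrov–Peller: every Hölder function of order `α ∈ (0,1)` is operator Hölder of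
order `α`, with constant `c/(1-α)` for an absolute constant `c`. Here `f(A)` is given by
the continuous functional calculus for the bounded self-adjoint operator `A`. -/
theorem holder_implies_operator_holder :
    ∃ c : ℝ, 0 < c ∧
      ∀ (α : ℝ), 0 < α → α < 1 →
      ∀ (H : Type*) [NormedAddCommGroup H] [InnerProductSpace ℂ H] [CompleteSpace H],
      ∀ (f : ℝ → ℝ) (C : ℝ),
        (∀ x y : ℝ, |f x - f y| ≤ C * |x - y| ^ α) →
      ∀ (A B : H →L[ℂ] H), IsSelfAdjoint A → IsSelfAdjoint B →
        ‖cfc f A - cfc f B‖ ≤ c * (1 - α)⁻¹ * C * ‖A - B‖ ^ α := by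
  refine ⟨36, by norm_num, ?_⟩
  intro α h0 h1 H _ _ _ f C hol A B hA hB
  have hC : 0 ≤ C := by
    have := (abs_nonneg _).trans (hol 1 0)
    simpa using this
  rcases (norm_nonneg (A - B)).eq_or_lt with hAB | hAB
  · have : A = B := sub_eq_zero.1 (norm_eq_zero.1 hAB.symm)
    subst this
    simp [Real.zero_rpow h0.ne']
  obtain ⟨R, hR0, hRA, hRB⟩ : ∃ R : ℝ, 0 ≤ R ∧ (∀ x ∈ spectrum ℝ A, |x| ≤ R) ∧
      (∀ x ∈ spectrum ℝ B, |x| ≤ R) := by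
    refine ⟨max (‖A‖ * ‖(1 : H →L[ℂ] H)‖) (‖B‖ * ‖(1 : H →L[ℂ] H)‖), ?_, ?_, ?_⟩
    · exact le_max_of_le_left (by positivity)
    · exact fun x hx => (spectrum.norm_le_norm_mul_of_mem hx).trans (le_max_left _ _)
    · exact fun x hx => (spectrum.norm_le_norm_mul_of_mem hx).trans (le_max_right _ _)
  have hRR : -R ≤ R := by linarith
  let g : ℝ → ℝ := fun x => f (max (-R) (min R x))
  have cl : ∀ x, |x| ≤ R → max (-R) (min R x) = x := by
    intro x hx
    rw [abs_le] at hx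
    rw [min_eq_right hx.2, max_eq_right hx.1]
  have eA : cfc f A = cfc g A := cfc_congr fun x hx => by simp only [g]; rw [cl x (hRA x hx)]
  have eB : cfc f B = cfc g B := cfc_congr fun x hx => by simp only [g]; rw [cl x (hRB x hx)]
  rw [eA, eB]
  have fc : Continuous f := by
    rw [continuous_iff_continuousAt]
    intro x
    rw [ContinuousAt, tendsto_iff_dist_tendsto_zero]
    have lim : Filter.Tendsto (fun z => C * |z - x| ^ α) (nhds x) (nhds 0) := by
      have : Continuous (fun z => C * |z - x| ^ α) :=
        continuous_const.mul (Continuous.rpow_const (by fun_prop) fun _ => Or.inr h0.le)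
      simpa [Real.zero_rpow h0.ne'] using this.tendsto x
    exact squeeze_zero (fun _ => dist_nonneg) (fun z => hol z x) lim
  have gc : Continuous g := fc.comp (by fun_prop)
  have clip : ∀ x y : ℝ, |max (-R) (min R x) - max (-R) (min R y)| ≤ |x - y| := by
    intro x y
    refine (abs_max_sub_max_le_max _ _ _ _).trans ?_
    simp only [sub_self, abs_zero]
    refine max_le (abs_nonneg _) ((abs_min_sub_min_le_max _ _ _ _).trans ?_)
    simp
  have ghol : ∀ x y : ℝ, |g x - g y| ≤ C * |x - y| ^ α := fun x y =>
    (hol _ _).trans (mul_le_mul_of_nonneg_left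
      (Real.rpow_le_rpow (abs_nonneg _) (clip x y) h0.le) hC)
  have gb : ∀ x, |g x| ≤ |f 0| + C * R ^ α := by
    intro x
    have h3 := hol (max (-R) (min R x)) 0
    rw [sub_zero] at h3
    have h4 : |max (-R) (min R x)| ≤ R :=
      abs_le.2 ⟨le_max_left _ _, max_le hRR (min_le_left _ _)⟩
    have h5 : C * |max (-R) (min R x)| ^ α ≤ C * R ^ α :=
      mul_le_mul_of_nonneg_left (Real.rpow_le_rpow (abs_nonneg _) h4 h0.le) hC
    have h6 := abs_sub_abs_le_abs_sub (f (max (-R) (min R x))) (f 0)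
    simp only [g]
    linarith
  exact OpHolder.bounded_case h0 h1 hC ⟨gc, gb⟩ ghol A B hA hB hAB
end

section
/- Let ω : [0, ∞) → [0, ∞) be a modulus of continuity, i.e., ω is continuous, nondecreasing, subadditive (ω(s + t) ≤ ω(s) + ω(t)), and ω(0) = 0, and assume ∫_1^∞ ω(t)/t² dt < ∞, so that ω_*(x) := x·∫_x^∞ ω(t)/t² dt is finite for every x > 0. There is an absolute constant c > 0 such that whenever f : ℝ → ℝ satisfies |f(x) − f(y)| ≤ ω(|x − y|) for all x, y ∈ ℝ, and A, B are bounded self-adjoint operators on a complex Hilbert space with A ≠ B, then ‖f(A) − f(B)‖ ≤ c·ω_*(‖A − B‖). -/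
open MeasureTheory Filter Topology

namespace OpMod

noncomputable def pk (y u : ℝ) : ℝ := y / (u ^ 2 + y ^ 2)
noncomputable def qk (y u : ℝ) : ℝ := u / (u ^ 2 + y ^ 2)
noncomputable def P (y : ℝ) (f : ℝ → ℝ) (a : ℝ) : ℝ := (1 / Real.pi) * ∫ x, f x * pk y (x - a)

lemma den_pos {y : ℝ} (hy : 0 < y) (u : ℝ) : 0 < u ^ 2 + y ^ 2 := by positivity

lemma pk_nonneg {y : ℝ} (hy : 0 < y) (u : ℝ) : 0 ≤ pk y u := by
  unfold pk; positivity

lemma pk_cont {y : ℝ} (hy : 0 < y) : Continuous (pk y) := by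
  unfold pk
  exact continuous_const.div (by fun_prop) (fun u => (den_pos hy u).ne')

lemma qk_cont {y : ℝ} (hy : 0 < y) : Continuous (qk y) := by
  unfold qk
  exact continuous_id.div (by fun_prop) (fun u => (den_pos hy u).ne')

lemma pk_eq {y : ℝ} (hy : 0 < y) (u : ℝ) : pk y u = y⁻¹ * (1 + (u / y) ^ 2)⁻¹ := by
  unfold pk
  field_simp
  ring

lemma pk_int0 {y : ℝ} (hy : 0 < y) : Integrable (pk y) := by
  have h := (integrable_inv_one_add_sq.comp_div hy.ne').const_mul y⁻¹
  exact h.congr (Eventually.of_forall fun u => (pk_eq hy u).symm)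

lemma pk_integral0 {y : ℝ} (hy : 0 < y) : ∫ u, pk y u = Real.pi := by
  simp_rw [pk_eq hy]
  rw [integral_const_mul, Measure.integral_comp_div (fun x : ℝ => (1 + x ^ 2)⁻¹) y,
    integral_univ_inv_one_add_sq, abs_of_pos hy, smul_eq_mul]
  field_simp

lemma pk_int {y : ℝ} (hy : 0 < y) (a : ℝ) : Integrable (fun x => pk y (x - a)) :=
  (pk_int0 hy).comp_sub_right a

lemma pk_integral {y : ℝ} (hy : 0 < y) (a : ℝ) : ∫ x, pk y (x - a) = Real.pi := by
  rw [integral_sub_right_eq_self (pk y) a, pk_integral0 hy]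

lemma fpk_int {y : ℝ} (hy : 0 < y) {f : ℝ → ℝ} (hf : Continuous f) {M : ℝ}
    (hM : ∀ x, |f x| ≤ M) (a : ℝ) : Integrable (fun x => f x * pk y (x - a)) :=
  (pk_int hy a).bdd_mul hf.aestronglyMeasurable (Eventually.of_forall hM)

lemma P_cont {y : ℝ} (hy : 0 < y) {f : ℝ → ℝ} (hf : Continuous f) {M : ℝ}
    (hM : ∀ x, |f x| ≤ M) : Continuous (P y f) := by
  have : P y f = fun a => (1 / Real.pi) * ∫ u, f (u + a) * pk y u := by
    ext a
    unfold P
    rw [← integral_add_right_eq_self _ a]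
    simp
  rw [this]
  refine continuous_const.mul ?_
  refine continuous_of_dominated (bound := fun u => M * pk y u) ?_ ?_ ?_ ?_
  · intro a
    exact ((hf.comp (by fun_prop)).mul (pk_cont hy)).aestronglyMeasurable
  · intro a
    refine Eventually.of_forall fun u => ?_
    rw [norm_mul, Real.norm_eq_abs, Real.norm_eq_abs, abs_of_nonneg (pk_nonneg hy u)]
    exact mul_le_mul_of_nonneg_right (hM _) (pk_nonneg hy u)
  · exact (pk_int0 hy).const_mul M
  · refine Eventually.of_forall fun u => ?_
    fun_prop

lemma P_bdd {y : ℝ} (hy : 0 < y) {f : ℝ → ℝ} {M : ℝ}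
    (hM : ∀ x, |f x| ≤ M) (a : ℝ) : |P y f a| ≤ M := by
  unfold P
  rw [abs_mul, abs_of_pos (by positivity : 0 < 1 / Real.pi)]
  have h : |∫ x, f x * pk y (x - a)| ≤ ∫ x, M * pk y (x - a) := by
    rw [← Real.norm_eq_abs]
    refine norm_integral_le_of_norm_le ((pk_int hy a).const_mul M) (Eventually.of_forall fun u => ?_)
    rw [norm_mul, Real.norm_eq_abs, Real.norm_eq_abs, abs_of_nonneg (pk_nonneg hy _)]
    exact mul_le_mul_of_nonneg_right (hM _) (pk_nonneg hy _)
  rw [integral_const_mul, pk_integral hy] at h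
  calc _ ≤ 1 / Real.pi * (M * Real.pi) := by gcongr
    _ = M := by field_simp

/-! semigroup -/
lemma qk_diff_hasDeriv {y s : ℝ} (hy : 0 < y) (hs : 0 < s) (d u : ℝ) :
    HasDerivAt (fun u => (1/2) * (Real.log (u ^ 2 + y ^ 2) - Real.log ((u - d) ^ 2 + s ^ 2)))
      (qk y u - qk s (u - d)) u := by
  have h1 : HasDerivAt (fun u : ℝ => u ^ 2 + y ^ 2) (2 * u) u := by
    simpa using (hasDerivAt_pow 2 u).add_const (y ^ 2)
  have h2 : HasDerivAt (fun u : ℝ => (u - d) ^ 2 + s ^ 2) (2 * (u - d)) u := by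
    simpa using (((hasDerivAt_id u).sub_const d).pow 2).add_const (s ^ 2)
  have := ((h1.log (den_pos hy u).ne').sub (h2.log (den_pos hs _).ne')).const_mul (1/2 : ℝ)
  refine this.congr_deriv ?_
  unfold qk
  ring

lemma pk_mul {y s : ℝ} (hy : 0 < y) (hs : 0 < s) {d : ℝ} (hd : d ≠ 0) (u : ℝ) :
    pk y u * pk s (u - d) =
      (1/2) * (-d / (d^2+(s+y)^2) + d / (d^2+(s-y)^2)) * (qk y u - qk s (u-d))
      + ((1/2) * ((s+y) / (d^2+(s+y)^2) + (s-y) / (d^2+(s-y)^2)) * pk y u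
      + (1/2) * ((s+y) / (d^2+(s+y)^2) - (s-y) / (d^2+(s-y)^2)) * pk s (u-d)) := by
  unfold pk qk
  have h1 := (den_pos hy u).ne'
  have h2 := (den_pos hs (u-d)).ne'
  have h3 : d^2+(s+y)^2 ≠ 0 := by positivity
  have h4 : d^2+(s-y)^2 ≠ 0 := by positivity
  field_simp
  ring

lemma pk_le {y : ℝ} (hy : 0 < y) (u : ℝ) : pk y u ≤ y⁻¹ := by
  unfold pk
  rw [div_le_iff₀ (den_pos hy u)]
  have : y⁻¹ * (u ^ 2 + y ^ 2) = y + y⁻¹ * u ^ 2 := by field_simp; ring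
  rw [this]
  have : 0 ≤ y⁻¹ * u ^ 2 := by positivity
  linarith

lemma pk_pk_int {y s : ℝ} (hy : 0 < y) (hs : 0 < s) (d : ℝ) :
    Integrable (fun u => pk y u * pk s (u - d)) := by
  refine (pk_int hs d).bdd_mul (c := y⁻¹) (pk_cont hy).aestronglyMeasurable
    (Eventually.of_forall fun u => ?_)
  rw [Real.norm_eq_abs, abs_of_nonneg (pk_nonneg hy u)]
  exact pk_le hy u

lemma qk_diff_int {y s : ℝ} (hy : 0 < y) (hs : 0 < s) {d : ℝ} (hd : d ≠ 0) :
    Integrable (fun u => qk y u - qk s (u - d)) := by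
  have h3 : d^2+(s+y)^2 ≠ 0 := by positivity
  have h4 : d^2+(s-y)^2 ≠ 0 := by positivity
  have hc : (1/2 : ℝ) * (-d / (d^2+(s+y)^2) + d / (d^2+(s-y)^2)) ≠ 0 := by
    have : (1/2 : ℝ) * (-d / (d^2+(s+y)^2) + d / (d^2+(s-y)^2))
        = 2 * d * s * y / ((d^2+(s+y)^2) * (d^2+(s-y)^2)) := by
      field_simp
      ring
    rw [this]
    positivity
  have h := ((pk_pk_int hy hs d).sub (((pk_int0 hy).const_mul
      ((1/2) * ((s+y) / (d^2+(s+y)^2) + (s-y) / (d^2+(s-y)^2)))).add ((pk_int hs d).const_mul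
      ((1/2) * ((s+y) / (d^2+(s+y)^2) - (s-y) / (d^2+(s-y)^2)))))).const_mul
      ((1/2 : ℝ) * (-d / (d^2+(s+y)^2) + d / (d^2+(s-y)^2)))⁻¹
  refine h.congr (Eventually.of_forall fun u => ?_)
  simp only [Pi.sub_apply, Pi.add_apply]
  rw [pk_mul hy hs hd, add_sub_cancel_right, inv_mul_cancel_left₀ hc]

lemma log_tendsto {y s : ℝ} (hy : 0 < y) (hs : 0 < s) (d : ℝ) {l : Filter ℝ}
    (hl : Tendsto (fun u : ℝ => u⁻¹) l (𝓝 0)) (hl0 : ∀ᶠ u in l, u ≠ 0) :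
    Tendsto (fun u => (1/2) * (Real.log (u ^ 2 + y ^ 2) - Real.log ((u - d) ^ 2 + s ^ 2))) l (𝓝 0) := by
  have h1 : Tendsto (fun u : ℝ => (1/2) * (Real.log (1 + y ^ 2 * u⁻¹ ^ 2)
      - Real.log ((1 - d * u⁻¹) ^ 2 + s ^ 2 * u⁻¹ ^ 2))) l (𝓝 ((1/2) * (Real.log (1 + y ^ 2 * 0 ^ 2)
      - Real.log ((1 - d * 0) ^ 2 + s ^ 2 * 0 ^ 2)))) := by
    refine Tendsto.const_mul _ (Tendsto.sub ?_ ?_)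
    · refine Tendsto.log ?_ (by norm_num)
      exact ((hl.pow 2).const_mul _).const_add _
    · refine Tendsto.log ?_ (by norm_num)
      exact (((hl.const_mul d).const_sub 1).pow 2).add ((hl.pow 2).const_mul _)
  simp only [mul_zero, sub_zero, ne_eq, OfNat.ofNat_ne_zero, not_false_eq_true, zero_pow, add_zero,
    one_pow, Real.log_one] at h1
  refine h1.congr' ?_
  filter_upwards [hl0] with u hu
  have e1 : u ^ 2 + y ^ 2 = u ^ 2 * (1 + y ^ 2 * u⁻¹ ^ 2) := by field_simp
  have e2 : (u - d) ^ 2 + s ^ 2 = u ^ 2 * ((1 - d * u⁻¹) ^ 2 + s ^ 2 * u⁻¹ ^ 2) := by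
    field_simp
  have p2 : (1 - d * u⁻¹) ^ 2 + s ^ 2 * u⁻¹ ^ 2 ≠ 0 := by
    intro h; rw [h] at e2; have := den_pos hs (u - d); rw [e2] at this; simp at this
  have p1 : 1 + y ^ 2 * u⁻¹ ^ 2 ≠ 0 := by positivity
  rw [e1, e2, Real.log_mul (by positivity) p1, Real.log_mul (by positivity) p2]
  ring

lemma qk_diff_integral {y s : ℝ} (hy : 0 < y) (hs : 0 < s) {d : ℝ} (hd : d ≠ 0) :
    ∫ u, (qk y u - qk s (u - d)) = 0 := by
  have := integral_of_hasDerivAt_of_tendsto (fun u => qk_diff_hasDeriv hy hs d u)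
    (qk_diff_int hy hs hd)
    (log_tendsto hy hs d tendsto_inv_atBot_zero (eventually_ne_atBot 0))
    (log_tendsto hy hs d tendsto_inv_atTop_zero (eventually_ne_atTop 0))
  simpa using this

lemma pk_conv {y s : ℝ} (hy : 0 < y) (hs : 0 < s) {d : ℝ} (hd : d ≠ 0) :
    ∫ u, pk y u * pk s (u - d) = Real.pi * pk (y + s) d := by
  simp_rw [pk_mul hy hs hd]
  rw [integral_add ((qk_diff_int hy hs hd).const_mul _)
    (by exact ((pk_int0 hy).const_mul _).add ((pk_int hs d).const_mul _)),
    integral_add ((pk_int0 hy).const_mul _) ((pk_int hs d).const_mul _)]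
  simp_rw [integral_const_mul]
  rw [qk_diff_integral hy hs hd, pk_integral0 hy, pk_integral hs]
  unfold pk
  rw [add_comm y s]
  ring


lemma pk_neg (y u : ℝ) : pk y (-u) = pk y u := by unfold pk; simp

lemma pk_conv' {y s : ℝ} (hy : 0 < y) (hs : 0 < s) {a z : ℝ} (h : z ≠ a) :
    ∫ x, pk y (x - a) * pk s (x - z) = Real.pi * pk (y + s) (z - a) := by
  rw [← pk_conv hy hs (sub_ne_zero.2 h), ← integral_add_right_eq_self _ a]
  congr 1; ext x; congr 2 <;> ring

lemma P_P {y s : ℝ} (hy : 0 < y) (hs : 0 < s) {f : ℝ → ℝ} (hf : Continuous f) {M : ℝ}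
    (hM : ∀ x, |f x| ≤ M) (a : ℝ) : P y (P s f) a = P (y + s) f a := by
  have hint : Integrable (fun p : ℝ × ℝ => f p.2 * pk s (p.2 - p.1) * pk y (p.1 - a))
      (volume.prod volume) := by
    have h0 : Integrable (fun p : ℝ × ℝ => pk s (p.2 - p.1) * pk y (p.1 - a))
        (volume.prod volume) := by
      rw [integrable_prod_iff]
      · refine ⟨Eventually.of_forall fun x => by exact (pk_int hs x).mul_const (pk y (x - a)), ?_⟩
        have : (fun x => ∫ z, ‖pk s (z - x) * pk y (x - a)‖) = fun x => Real.pi * pk y (x - a) := by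
          ext x
          rw [← pk_integral hs x, ← integral_mul_const]
          congr 1; ext z
          rw [Real.norm_eq_abs, abs_of_nonneg (mul_nonneg (pk_nonneg hs _) (pk_nonneg hy _))]
        rw [this]
        exact (pk_int hy a).const_mul _
      · refine Continuous.aestronglyMeasurable ?_
        exact ((pk_cont hs).comp (by fun_prop)).mul ((pk_cont hy).comp (by fun_prop))
    have h1 := h0.bdd_mul (f := fun p : ℝ × ℝ => f p.2) (c := M)
      (hf.comp continuous_snd).aestronglyMeasurable
      (Eventually.of_forall fun p => hM _)
    refine h1.congr (Eventually.of_forall fun p => ?_)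
    simp only [mul_assoc]
  have hswap := integral_integral_swap (f := fun x z => f z * pk s (z - x) * pk y (x - a)) hint
  unfold P
  have e1 : ∀ x, 1 / Real.pi * (∫ z, f z * pk s (z - x)) * pk y (x - a)
      = 1 / Real.pi * ∫ z, f z * pk s (z - x) * pk y (x - a) := by
    intro x
    rw [integral_mul_const, mul_assoc]
  simp_rw [e1]
  rw [integral_const_mul, hswap]
  congr 1
  rw [← integral_const_mul]
  refine integral_congr_ae ?_
  filter_upwards [compl_mem_ae_iff.2 (measure_singleton (μ := volume) a)] with z hz
  have hz : z ≠ a := hz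
  have : ∀ x, f z * pk s (z - x) * pk y (x - a) = f z * (pk y (x - a) * pk s (x - z)) := by
    intro x
    rw [← neg_sub x z, pk_neg]; ring
  simp_rw [this]
  rw [integral_const_mul, pk_conv' hy hs hz]
  field_simp

/-! moment bounds -/

lemma P_const {y : ℝ} (hy : 0 < y) (c a : ℝ) : P y (fun _ => c) a = c := by
  unfold P
  rw [integral_const_mul, pk_integral hy]
  field_simp

lemma moment {y r α c₁ c₂ C W : ℝ} (hy : 0 < y) (hr : 0 < r) {f : ℝ → ℝ} (hf : Continuous f) {M : ℝ}
    (hM : ∀ x, |f x| ≤ M) (a : ℝ) (hα : α = c₁ - c₂)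
    (hk : ∀ u, |c₁ * pk y u - c₂ * pk r u| * (1 + |u| / y) ≤ C * pk y u)
    (hW : 0 ≤ W) (hfW : ∀ x, |f x - f a| ≤ (1 + |x - a| / y) * W) :
    |c₁ * P y f a - c₂ * P r f a - α * f a| ≤ C * W := by
  have i1 := fpk_int hy hf hM a
  have i2 := fpk_int hr hf hM a
  have e : c₁ * P y f a - c₂ * P r f a - α * f a = (1 / Real.pi) *
      ∫ x, (f x - f a) * (c₁ * pk y (x - a) - c₂ * pk r (x - a)) := by
    have : ∀ x, (f x - f a) * (c₁ * pk y (x - a) - c₂ * pk r (x - a)) =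
        (c₁ * (f x * pk y (x - a)) - c₂ * (f x * pk r (x - a)))
        - (f a * c₁ * pk y (x - a) - f a * c₂ * pk r (x - a)) := by intro x; ring
    simp_rw [this]
    rw [integral_sub (by exact (i1.const_mul _).sub (i2.const_mul _))
      (by exact ((pk_int hy a).const_mul _).sub ((pk_int hr a).const_mul _)),
      integral_sub (i1.const_mul _) (i2.const_mul _),
      integral_sub ((pk_int hy a).const_mul _) ((pk_int hr a).const_mul _)]
    simp_rw [integral_const_mul]
    rw [pk_integral hy, pk_integral hr, hα]
    unfold P
    field_simp
  rw [e, abs_mul, abs_of_pos (by positivity : 0 < 1 / Real.pi)]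
  have h : |∫ x, (f x - f a) * (c₁ * pk y (x - a) - c₂ * pk r (x - a))|
      ≤ ∫ x, C * W * pk y (x - a) := by
    rw [← Real.norm_eq_abs]
    refine norm_integral_le_of_norm_le ((pk_int hy a).const_mul _) (Eventually.of_forall fun x => ?_)
    rw [norm_mul, Real.norm_eq_abs, Real.norm_eq_abs]
    calc _ ≤ (1 + |x - a| / y) * W * |c₁ * pk y (x - a) - c₂ * pk r (x - a)| := by
            gcongr; exact hfW x
      _ = W * (|c₁ * pk y (x - a) - c₂ * pk r (x - a)| * (1 + |x - a| / y)) := by ring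
      _ ≤ W * (C * pk y (x - a)) := mul_le_mul_of_nonneg_left (hk _) hW
      _ = _ := by ring
  rw [integral_const_mul, pk_integral hy] at h
  calc _ ≤ 1 / Real.pi * (C * W * Real.pi) := by gcongr
    _ = C * W := by field_simp

lemma hk1 {y : ℝ} (hy : 0 < y) (u : ℝ) :
    |3 * pk y u - 1 * pk (3 * y) u| * (1 + |u| / y) ≤ 6 * pk y u := by
  have e : 3 * pk y u - 1 * pk (3 * y) u = pk y u * (24 * y ^ 2 / (u ^ 2 + 9 * y ^ 2)) := by
    unfold pk
    have := den_pos hy u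
    have h9 : 0 < u ^ 2 + 9 * y ^ 2 := by positivity
    have h9' : 0 < u ^ 2 + (3 * y) ^ 2 := by positivity
    field_simp
    ring
  have h9 : 0 < u ^ 2 + 9 * y ^ 2 := by positivity
  rw [e, abs_of_nonneg (mul_nonneg (pk_nonneg hy u) (by positivity)), mul_assoc, mul_comm 6]
  refine mul_le_mul_of_nonneg_left ?_ (pk_nonneg hy u)
  have : 24 * y ^ 2 / (u ^ 2 + 9 * y ^ 2) * (1 + |u| / y) = 24 * y * (y + |u|) / (u ^ 2 + 9 * y ^ 2) := by
    field_simp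
  rw [this, div_le_iff₀ h9]
  have h2 := sq_abs u
  nlinarith [sq_nonneg (|u| - 2 * y), sq_nonneg y]

lemma hk2 {y : ℝ} (hy : 0 < y) (u : ℝ) :
    |2 * pk y u - 1 * pk (2 * y) u| * (1 + |u| / y) ≤ 3 * pk y u := by
  have e : 2 * pk y u - 1 * pk (2 * y) u = pk y u * (6 * y ^ 2 / (u ^ 2 + 4 * y ^ 2)) := by
    unfold pk
    have := den_pos hy u
    have h9 : 0 < u ^ 2 + 4 * y ^ 2 := by positivity
    have h9' : 0 < u ^ 2 + (2 * y) ^ 2 := by positivity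
    field_simp
    ring
  have h9 : 0 < u ^ 2 + 4 * y ^ 2 := by positivity
  rw [e, abs_of_nonneg (mul_nonneg (pk_nonneg hy u) (by positivity)), mul_assoc, mul_comm 3]
  refine mul_le_mul_of_nonneg_left ?_ (pk_nonneg hy u)
  have : 6 * y ^ 2 / (u ^ 2 + 4 * y ^ 2) * (1 + |u| / y) = 6 * y * (y + |u|) / (u ^ 2 + 4 * y ^ 2) := by
    field_simp
  rw [this, div_le_iff₀ h9]
  have h2 := sq_abs u
  nlinarith [sq_nonneg (|u| - y), sq_nonneg y]

/-! modulus -/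
lemma mod_nonneg {ω : ℝ → ℝ} (hm : MonotoneOn ω (Set.Ici 0)) (h0 : ω 0 = 0) {t : ℝ} (ht : 0 ≤ t) :
    0 ≤ ω t := by
  have := hm (Set.mem_Ici.2 le_rfl) (Set.mem_Ici.2 ht) ht
  linarith

lemma mod_nat {ω : ℝ → ℝ} (hs : ∀ s t : ℝ, 0 ≤ s → 0 ≤ t → ω (s + t) ≤ ω s + ω t)
    (h0 : ω 0 = 0) {y : ℝ} (hy : 0 ≤ y) (n : ℕ) : ω (n * y) ≤ n * ω y := by
  induction n with
  | zero => simp [h0]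
  | succ k ih =>
    push_cast
    rw [add_mul, one_mul, add_mul, one_mul]
    exact (hs _ _ (by positivity) hy).trans (by gcongr)

lemma mod_lin {ω : ℝ → ℝ} (hm : MonotoneOn ω (Set.Ici 0))
    (hs : ∀ s t : ℝ, 0 ≤ s → 0 ≤ t → ω (s + t) ≤ ω s + ω t)
    (h0 : ω 0 = 0) {y t : ℝ} (hy : 0 < y) (ht : 0 ≤ t) : ω t ≤ (1 + t / y) * ω y := by
  have h1 : t ≤ ⌈t / y⌉₊ * y := by
    have := Nat.le_ceil (t / y)
    rwa [div_le_iff₀ hy] at this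
  have h2 : (⌈t / y⌉₊ : ℝ) ≤ 1 + t / y := by
    have := Nat.ceil_lt_add_one (div_nonneg ht hy.le)
    linarith
  calc ω t ≤ ω (⌈t / y⌉₊ * y) := hm (Set.mem_Ici.2 ht) (Set.mem_Ici.2 (by positivity)) h1
    _ ≤ ⌈t / y⌉₊ * ω y := mod_nat hs h0 hy.le _
    _ ≤ _ := mul_le_mul_of_nonneg_right h2 (mod_nonneg hm h0 hy.le)


/-! operator part -/
section op
variable {H : Type*} [NormedAddCommGroup H] [InnerProductSpace ℂ H] [CompleteSpace H]

lemma pk_bound {y : ℝ} (hy : 0 < y) {r : ℝ} {t : ℝ} (ht : |t| ≤ r) (x : ℝ) :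
    pk y (x - t) ≤ y * ((1 + 2 * r ^ 2) / y ^ 2 + 2) * (1 + x ^ 2)⁻¹ := by
  unfold pk
  have h1 := den_pos hy (x - t)
  have h2 : 0 < 1 + x ^ 2 := by positivity
  rw [← div_eq_mul_inv, div_le_div_iff₀ h1 h2, mul_assoc]
  refine mul_le_mul_of_nonneg_left ?_ hy.le
  have ht2 : t ^ 2 ≤ r ^ 2 := by rw [← sq_abs]; gcongr
  have e : ((1 + 2 * r ^ 2) / y ^ 2 + 2) * ((x - t) ^ 2 + y ^ 2) =
    (1 + 2 * r ^ 2) + 2 * (x - t) ^ 2 + ((1 + 2 * r ^ 2) * (x - t) ^ 2 / y ^ 2 + 2 * y ^ 2) := by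
    field_simp; ring
  rw [e]
  have : 0 ≤ (1 + 2 * r ^ 2) * (x - t) ^ 2 / y ^ 2 + 2 * y ^ 2 := by positivity
  nlinarith [sq_nonneg (x - 2 * t)]

lemma spec_le {A : H →L[ℂ] H} {t : ℝ} (ht : t ∈ spectrum ℝ A) : |t| ≤ ‖A‖ * ‖(1 : H →L[ℂ] H)‖ := by
  have := spectrum.norm_le_norm_mul_of_mem ht
  simpa using this

lemma cfc_pk_facts {A : H →L[ℂ] H} (hA : IsSelfAdjoint A) {y : ℝ} (hy : 0 < y) {h : ℝ → ℝ}
    (hh : Continuous h) {M : ℝ} (hM : ∀ x, |h x| ≤ M) :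
    Integrable (fun x => h x • cfc (fun t => pk y (x - t)) A) ∧
    cfc (P y h) A = (1 / Real.pi) • ∫ x, h x • cfc (fun t => pk y (x - t)) A := by
  have hM0 : 0 ≤ M := (abs_nonneg _).trans (hM 0)
  set r := ‖A‖ * ‖(1 : H →L[ℂ] H)‖
  have hc : ContinuousOn (Function.uncurry fun x t => h x * pk y (x - t))
      (Set.univ ×ˢ spectrum ℝ A) := by
    refine Continuous.continuousOn ?_
    exact (hh.comp continuous_fst).mul ((pk_cont hy).comp (by fun_prop))
  have hb : ∀ᵐ x : ℝ, ∀ z ∈ spectrum ℝ A, ‖h x * pk y (x - z)‖ ≤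
      M * (y * ((1 + 2 * r ^ 2) / y ^ 2 + 2) * (1 + x ^ 2)⁻¹) := by
    refine Eventually.of_forall fun x z hz => ?_
    rw [norm_mul, Real.norm_eq_abs, Real.norm_eq_abs, abs_of_nonneg (pk_nonneg hy _)]
    exact mul_le_mul (hM x) (pk_bound hy (spec_le hz) x) (pk_nonneg hy _) hM0
  have hbi : Integrable (fun x : ℝ => M * (y * ((1 + 2 * r ^ 2) / y ^ 2 + 2) * (1 + x ^ 2)⁻¹)) :=
    (integrable_inv_one_add_sq.const_mul _).const_mul _
  have e : ∀ x, h x • cfc (fun t => pk y (x - t)) A = cfc (fun t => h x * pk y (x - t)) A := by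
    intro x
    have hp : Continuous (fun t => pk y (x - t)) := (pk_cont hy).comp (by fun_prop)
    rw [← cfc_const_mul (h x) _ A hp.continuousOn]
  simp_rw [e]
  refine ⟨integrable_cfc _ _ A hc hb hbi.2 hA, ?_⟩
  rw [← cfc_integral _ _ A hc hb hbi.2 hA]
  have hcc : ContinuousOn (fun t => ∫ x, h x * pk y (x - t)) (spectrum ℝ A) := by
    have : (fun t => ∫ x, h x * pk y (x - t)) = fun t => Real.pi * P y h t := by
      ext t; unfold P; field_simp
    rw [this]
    exact ((P_cont hy hh hM).const_mul _).continuousOn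
  rw [← cfc_const_mul _ _ A hcc]
  rfl

lemma norm_sq_cfc {A : H →L[ℂ] H} (hA : IsSelfAdjoint A) {y : ℝ} (hy : 0 < y) (x : ℝ) (v : H) :
    ‖cfc (fun t => qk y (x - t)) A v‖ ^ 2 + ‖cfc (fun t => pk y (x - t)) A v‖ ^ 2
      = y⁻¹ * (inner ℂ v (cfc (fun t => pk y (x - t)) A v)).re := by
  have hp : Continuous (fun t => pk y (x - t)) := (pk_cont hy).comp (by fun_prop)
  have hq : Continuous (fun t => qk y (x - t)) := (qk_cont hy).comp (by fun_prop)
  have key : ∀ g : ℝ → ℝ, Continuous g → ‖cfc g A v‖ ^ 2 =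
      (inner ℂ v (cfc (fun t => g t * g t) A v)).re := by
    intro g hg
    have hsa : IsSelfAdjoint (cfc g A) := cfc_predicate g A
    rw [cfc_mul g g A hg.continuousOn hg.continuousOn, mul_apply_eq_comp,
      ← ContinuousLinearMap.adjoint_inner_left, ← ContinuousLinearMap.star_eq_adjoint, hsa.star_eq,
      ← inner_self_eq_norm_sq (𝕜 := ℂ)]
    rfl
  rw [key _ hp, key _ hq, ← Complex.add_re, ← inner_add_right, ← add_apply,
    ← cfc_add A _ _ (by exact (hq.mul hq).continuousOn) (by exact (hp.mul hp).continuousOn)]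
  have e : (fun t => qk y (x - t) * qk y (x - t) + pk y (x - t) * pk y (x - t))
      = fun t => y⁻¹ * pk y (x - t) := by
    ext t
    unfold pk qk
    have := den_pos hy (x - t)
    field_simp
  rw [e, cfc_const_mul _ _ A hp.continuousOn, smul_apply, inner_smul_right_eq_smul]
  simp

lemma cfc_pk_diff {A B : H →L[ℂ] H} (hA : IsSelfAdjoint A) (hB : IsSelfAdjoint B) {y : ℝ}
    (hy : 0 < y) (x : ℝ) :
    cfc (fun t => pk y (x - t)) A - cfc (fun t => pk y (x - t)) B =
      cfc (fun t => qk y (x - t)) A * (A - B) * cfc (fun t => pk y (x - t)) B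
      + cfc (fun t => pk y (x - t)) A * (A - B) * cfc (fun t => qk y (x - t)) B := by
  have hp : Continuous (fun t => pk y (x - t)) := (pk_cont hy).comp (by fun_prop)
  have hq : Continuous (fun t => qk y (x - t)) := (qk_cont hy).comp (by fun_prop)
  -- q = y⁻¹ (x - A) p ,  (x-A) q + y p = 1
  have hlin : ∀ {A : H →L[ℂ] H}, IsSelfAdjoint A → cfc (fun t : ℝ => x - t) A = algebraMap ℝ (H →L[ℂ] H) x - A := by
    intro A hA
    rw [cfc_sub (fun _ => x) (fun t => t) A, cfc_const x A, cfc_id' ℝ A]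
  have h1 : ∀ {A : H →L[ℂ] H}, IsSelfAdjoint A →
      y • cfc (fun t => qk y (x - t)) A = (algebraMap ℝ (H →L[ℂ] H) x - A) * cfc (fun t => pk y (x - t)) A := by
    intro A hA
    rw [← hlin hA, ← cfc_mul _ _ A (by fun_prop) hp.continuousOn,
      ← cfc_const_mul _ _ A hq.continuousOn]
    congr 1; ext t; unfold pk qk; ring
  have h1' : ∀ {A : H →L[ℂ] H}, IsSelfAdjoint A →
      y • cfc (fun t => qk y (x - t)) A = cfc (fun t => pk y (x - t)) A * (algebraMap ℝ (H →L[ℂ] H) x - A) := by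
    intro A hA
    rw [← hlin hA, ← cfc_mul _ _ A hp.continuousOn (by fun_prop),
      ← cfc_const_mul _ _ A hq.continuousOn]
    congr 1; ext t; unfold pk qk; ring
  have h2 : ∀ {A : H →L[ℂ] H}, IsSelfAdjoint A →
      1 = (algebraMap ℝ (H →L[ℂ] H) x - A) * cfc (fun t => qk y (x - t)) A
        + y • cfc (fun t => pk y (x - t)) A := by
    intro A hA
    rw [← hlin hA, ← cfc_mul _ _ A (by fun_prop) hq.continuousOn,
      ← cfc_const_mul _ _ A hp.continuousOn,
      ← cfc_add A _ _ (by exact ((by fun_prop : Continuous fun t : ℝ => x - t).mul hq).continuousOn)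
        (by exact (hp.const_mul _).continuousOn), ← cfc_one ℝ A]
    congr 1; ext t; unfold pk qk
    have := den_pos hy (x - t)
    simp only [Pi.one_apply]
    field_simp
  have h2' : ∀ {A : H →L[ℂ] H}, IsSelfAdjoint A →
      1 = cfc (fun t => qk y (x - t)) A * (algebraMap ℝ (H →L[ℂ] H) x - A)
        + y • cfc (fun t => pk y (x - t)) A := by
    intro A hA
    rw [← hlin hA, ← cfc_mul _ _ A hq.continuousOn (by fun_prop),
      ← cfc_const_mul _ _ A hp.continuousOn,
      ← cfc_add A _ _ (by exact (hq.mul (by fun_prop : Continuous fun t : ℝ => x - t)).continuousOn)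
        (by exact (hp.const_mul _).continuousOn), ← cfc_one ℝ A]
    congr 1; ext t; unfold pk qk
    have := den_pos hy (x - t)
    simp only [Pi.one_apply]
    field_simp
  have a1 := h1' hA
  have a2 := h2' hA
  have b1 := h1 hB
  have b2 := h2 hB
  set pA := cfc (fun t => pk y (x - t)) A
  set qA := cfc (fun t => qk y (x - t)) A
  set pB := cfc (fun t => pk y (x - t)) B
  set qB := cfc (fun t => qk y (x - t)) B
  set X := algebraMap ℝ (H →L[ℂ] H) x - A with hX
  set Y := algebraMap ℝ (H →L[ℂ] H) x - B with hY
  have hD : A - B = Y - X := by rw [hX, hY]; abel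
  have c1 : qA * (Y * pB) = y • (qA * qB) := by rw [← b1, mul_smul_comm]
  have c2 : (pA * X) * qB = y • (qA * qB) := by rw [← a1, smul_mul_assoc]
  have c3 : qA * X * pB = pB - y • (pA * pB) := by
    rw [eq_sub_iff_add_eq, ← smul_mul_assoc, ← add_mul, ← a2, one_mul]
  have c4 : pA * (Y * qB) = pA - y • (pA * pB) := by
    rw [eq_sub_iff_add_eq, ← mul_smul_comm, ← mul_add, ← b2, mul_one]
  rw [hD]
  calc pA - pB = qA * (Y * pB) - qA * X * pB + (pA * (Y * qB) - (pA * X) * qB) := by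
        rw [c1, c2, c3, c4]; abel
    _ = _ := by noncomm_ring

lemma weak_bound {A B : H →L[ℂ] H} (hA : IsSelfAdjoint A) (hB : IsSelfAdjoint B) {y : ℝ}
    (hy : 0 < y) (x : ℝ) (u v : H) :
    ‖inner ℂ v ((cfc (fun t => pk y (x - t)) A - cfc (fun t => pk y (x - t)) B) u)‖ ≤
      ‖A - B‖ / (2 * y) * ((inner ℂ v (cfc (fun t => pk y (x - t)) A v)).re
        + (inner ℂ u (cfc (fun t => pk y (x - t)) B u)).re) := by
  have nA := norm_sq_cfc hA hy x v
  have nB := norm_sq_cfc hB hy x u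
  have sp : IsSelfAdjoint (cfc (fun t => pk y (x - t)) A) := cfc_predicate _ A
  have sq : IsSelfAdjoint (cfc (fun t => qk y (x - t)) A) := cfc_predicate _ A
  rw [cfc_pk_diff hA hB hy x]
  set pA := cfc (fun t => pk y (x - t)) A
  set qA := cfc (fun t => qk y (x - t)) A
  set pB := cfc (fun t => pk y (x - t)) B
  set qB := cfc (fun t => qk y (x - t)) B
  have gen : ∀ S T : H →L[ℂ] H, IsSelfAdjoint S →
      ‖inner ℂ v ((S * (A - B) * T) u)‖ ≤ ‖A - B‖ * (‖S v‖ * ‖T u‖) := by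
    intro S T hS
    have : inner ℂ v ((S * (A - B) * T) u) = inner ℂ (S v) ((A - B) (T u)) := by
      rw [mul_assoc, mul_apply_eq_comp, mul_apply_eq_comp,
        ← ContinuousLinearMap.adjoint_inner_left, ← ContinuousLinearMap.star_eq_adjoint, hS.star_eq]
    rw [this]
    calc _ ≤ ‖S v‖ * ‖(A - B) (T u)‖ := norm_inner_le_norm _ _
      _ ≤ ‖S v‖ * (‖A - B‖ * ‖T u‖) := by gcongr; exact ContinuousLinearMap.le_opNorm _ _
      _ = _ := by ring
  rw [add_apply, inner_add_right]
  have i1 := gen qA pB sq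
  have i2 := gen pA qB sp
  have e : ‖A - B‖ / (2 * y) * ((inner ℂ v (pA v)).re + (inner ℂ u (pB u)).re)
      = ‖A - B‖ * ((‖qA v‖ ^ 2 + ‖pA v‖ ^ 2 + (‖qB u‖ ^ 2 + ‖pB u‖ ^ 2)) / 2) := by
    rw [nA, nB]; field_simp
  rw [e]
  calc _ ≤ ‖A - B‖ * (‖qA v‖ * ‖pB u‖) + ‖A - B‖ * (‖pA v‖ * ‖qB u‖) :=
        (norm_add_le _ _).trans (add_le_add i1 i2)
    _ = ‖A - B‖ * (‖qA v‖ * ‖pB u‖ + ‖pA v‖ * ‖qB u‖) := by ring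
    _ ≤ _ := by
      refine mul_le_mul_of_nonneg_left ?_ (norm_nonneg _)
      nlinarith [sq_nonneg (‖qA v‖ - ‖pB u‖), sq_nonneg (‖pA v‖ - ‖qB u‖)]

lemma opnorm_of_weak {T : H →L[ℂ] H} {K : ℝ} (hK : 0 ≤ K)
    (h : ∀ u v, ‖inner ℂ v (T u)‖ ≤ K / 2 * (‖v‖ ^ 2 + ‖u‖ ^ 2)) : ‖T‖ ≤ K := by
  refine T.opNorm_le_bound hK fun u => ?_
  by_cases hu : u = 0
  · simp [hu]
  by_cases hT : T u = 0
  · rw [hT, norm_zero]; positivity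
  have hu' := norm_pos_iff.2 hu
  have hT' := norm_pos_iff.2 hT
  have := h u (((‖u‖ / ‖T u‖ : ℝ) : ℂ) • T u)
  rw [inner_smul_left, norm_mul, norm_smul, inner_self_eq_norm_sq_to_K] at this
  simp only [Complex.conj_ofReal, Complex.norm_real, norm_div, norm_norm, norm_pow,
    Complex.coe_algebraMap] at this
  rw [div_mul_cancel₀ _ hT'.ne'] at this
  have e : ‖u‖ / ‖T u‖ * ‖T u‖ ^ 2 = ‖T u‖ * ‖u‖ := by field_simp
  rw [e] at this
  have : ‖T u‖ * ‖u‖ ≤ (K * ‖u‖) * ‖u‖ := by linarith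
  exact le_of_mul_le_mul_right this hu'

lemma main1 {A B : H →L[ℂ] H} (hA : IsSelfAdjoint A) (hB : IsSelfAdjoint B) {y : ℝ} (hy : 0 < y)
    {h : ℝ → ℝ} (hh : Continuous h) {M : ℝ} (hM : ∀ x, |h x| ≤ M) :
    ‖cfc (P y h) A - cfc (P y h) B‖ ≤ M * (‖A - B‖ / y) := by
  have hM0 : 0 ≤ M := (abs_nonneg _).trans (hM 0)
  obtain ⟨iA, eA⟩ := cfc_pk_facts hA hy hh hM
  obtain ⟨iB, eB⟩ := cfc_pk_facts hB hy hh hM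
  have one : ∀ {A : H →L[ℂ] H}, IsSelfAdjoint A → ∀ v : H,
      Integrable (fun x => (inner ℂ v (cfc (fun t => pk y (x - t)) A v)).re) ∧
      ∫ x, (inner ℂ v (cfc (fun t => pk y (x - t)) A v)).re = Real.pi * ‖v‖ ^ 2 := by
    intro A hA v
    obtain ⟨i, e⟩ := cfc_pk_facts hA hy (h := fun _ => 1) continuous_const (M := 1) (by simp)
    simp only [one_smul] at i e
    let L : (H →L[ℂ] H) →L[ℝ] ℝ := Complex.reCLM.comp
      (((innerSL ℂ v).comp (ContinuousLinearMap.apply ℂ H v)).restrictScalars ℝ)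
    have hL : ∀ T, L T = (inner ℂ v (T v)).re := fun T => rfl
    simp_rw [← hL]
    refine ⟨L.integrable_comp i, ?_⟩
    rw [L.integral_comp_comm i]
    have e1 : P y (fun _ => 1) = fun _ => 1 := by
      ext a; unfold P; simp_rw [one_mul]; rw [pk_integral hy]; field_simp
    rw [e1, cfc_const_one ℝ A] at e
    have e2 : ∫ x, cfc (fun t => pk y (x - t)) A = Real.pi • (1 : H →L[ℂ] H) := by
      rw [e, smul_smul, mul_one_div_cancel Real.pi_ne_zero, one_smul]
    rw [e2, map_smul, hL]
    simp [← Complex.ofReal_pow]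
  refine opnorm_of_weak (by positivity) fun u v => ?_
  rw [eA, eB, ← smul_sub, ← integral_sub iA iB]
  let L : (H →L[ℂ] H) →L[ℝ] ℂ := 
      (((innerSL ℂ v).comp (ContinuousLinearMap.apply ℂ H u)).restrictScalars ℝ)
  have hL : ∀ T, L T = inner ℂ v (T u) := fun T => rfl
  rw [← hL, map_smul, ← L.integral_comp_comm (by exact iA.sub iB)]
  obtain ⟨j1, e1⟩ := one hA v
  obtain ⟨j2, e2⟩ := one hB u
  have key := norm_integral_le_of_norm_le (μ := volume)
    (f := fun x => L (h x • cfc (fun t => pk y (x - t)) A - h x • cfc (fun t => pk y (x - t)) B))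
    (((j1.add j2).const_mul (M * (‖A - B‖ / (2 * y)))))
    (Eventually.of_forall fun x => by
      rw [← smul_sub, map_smul, norm_smul, hL, mul_assoc]
      exact mul_le_mul (hM x) (weak_bound hA hB hy x u v) (norm_nonneg _) hM0)
  rw [integral_const_mul] at key
  simp only [Pi.add_apply] at key
  rw [integral_add j1 j2, e1, e2] at key
  rw [norm_smul, Real.norm_eq_abs, abs_of_pos (by positivity : 0 < 1 / Real.pi)]
  calc _ ≤ 1 / Real.pi * _ := mul_le_mul_of_nonneg_left key (by positivity)
    _ = _ := by field_simp
end op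

/-! final part -/
noncomputable def K (y : ℝ) (f : ℝ → ℝ) (a : ℝ) : ℝ := 2 * P y f a - 1 * P (2 * y) f a

lemma K_cont {y : ℝ} (hy : 0 < y) {f : ℝ → ℝ} (hf : Continuous f) {M : ℝ}
    (hM : ∀ x, |f x| ≤ M) : Continuous (K y f) :=
  ((P_cont hy hf hM).const_mul 2).sub ((P_cont (by positivity : 0 < 2 * y) hf hM).const_mul 1)

noncomputable def hfun (y : ℝ) (f : ℝ → ℝ) (a : ℝ) : ℝ :=
  3 * P y f a - 1 * P (3 * y) f a - 2 * f a

lemma K_sub {y : ℝ} (hy : 0 < y) {f : ℝ → ℝ} (hf : Continuous f) {M : ℝ}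
    (hM : ∀ x, |f x| ≤ M) (a : ℝ) : K (2 * y) f a - K y f a = P y (hfun y f) a := by
  have h3 : 0 < 3 * y := by positivity
  have e1 := P_P hy hy hf hM a
  have e2 := P_P hy h3 hf hM a
  have i1 := fpk_int hy (P_cont hy hf hM) (P_bdd hy hM) a
  have i2 := fpk_int hy (P_cont h3 hf hM) (P_bdd h3 hM) a
  have i3 := fpk_int hy hf hM a
  have : P y (hfun y f) a = 3 * P y (P y f) a - P y (P (3 * y) f) a - 2 * P y f a := by
    have e : ∀ x, hfun y f x * pk y (x - a) = (3 * (P y f x * pk y (x - a)) -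
        P (3 * y) f x * pk y (x - a)) - 2 * (f x * pk y (x - a)) := by
      intro x; unfold hfun; ring
    have : P y (hfun y f) a = (1 / Real.pi) * ∫ x, hfun y f x * pk y (x - a) := rfl
    rw [this]
    simp_rw [e]
    rw [integral_sub (by exact (i1.const_mul 3).sub i2) (i3.const_mul 2),
      integral_sub (i1.const_mul 3) i2, integral_const_mul, integral_const_mul]
    conv_rhs => rw [P, P.eq_1 y (P (3 * y) f) a, P.eq_1 y f a]
    ring
  rw [this, e1, e2]
  unfold K
  rw [show y + y = 2 * y by ring, show y + 3 * y = 2 * (2 * y) by ring]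
  ring

section fin
variable {H : Type*} [NormedAddCommGroup H] [InnerProductSpace ℂ H] [CompleteSpace H]

lemma cfc_diff_le {A B : H →L[ℂ] H} (hA : IsSelfAdjoint A) (hB : IsSelfAdjoint B) {y W : ℝ}
    (hy : 0 < y) {f : ℝ → ℝ} (hf : Continuous f) {M : ℝ} (hM : ∀ x, |f x| ≤ M)
    (hW : 0 ≤ W) (hfW : ∀ x a, |f x - f a| ≤ (1 + |x - a| / y) * W) :
    ‖cfc (K y f) A - cfc (K y f) B‖ ≤ 6 * W * (‖A - B‖ / y) +
      ‖cfc (K (2 * y) f) A - cfc (K (2 * y) f) B‖ := by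
  have h3 : 0 < 3 * y := by positivity
  have h2 : 0 < 2 * y := by positivity
  have hc : Continuous (hfun y f) :=
    (((P_cont hy hf hM).const_mul 3).sub ((P_cont h3 hf hM).const_mul 1)).sub (hf.const_mul 2)
  have hb : ∀ a, |hfun y f a| ≤ 6 * W := fun a =>
    moment hy h3 hf hM a (by norm_num) (hk1 hy) hW (fun x => hfW x a)
  have m := main1 hA hB hy hc hb
  have e : ∀ {A : H →L[ℂ] H}, cfc (P y (hfun y f)) A = cfc (K (2 * y) f) A - cfc (K y f) A := by
    intro A
    rw [← cfc_sub _ _ A (K_cont h2 hf hM).continuousOn (K_cont hy hf hM).continuousOn]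
    congr 1; ext a
    exact (K_sub hy hf hM a).symm
  rw [e, e] at m
  have : cfc (K y f) A - cfc (K y f) B = (cfc (K (2 * y) f) A - cfc (K (2 * y) f) B) -
    (cfc (K (2 * y) f) A - cfc (K y f) A - (cfc (K (2 * y) f) B - cfc (K y f) B)) := by abel
  rw [this]
  refine (norm_sub_le _ _).trans ?_
  linarith

lemma cfc_K_le {A B : H →L[ℂ] H} (hA : IsSelfAdjoint A) (hB : IsSelfAdjoint B) {y : ℝ}
    (hy : 0 < y) {f : ℝ → ℝ} (hf : Continuous f) {M : ℝ} (hM : ∀ x, |f x| ≤ M) :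
    ‖cfc (K y f) A - cfc (K y f) B‖ ≤ 3 * M * (‖A - B‖ / y) := by
  have hM0 : 0 ≤ M := (abs_nonneg _).trans (hM 0)
  have h2 : 0 < 2 * y := by positivity
  have e : ∀ {A : H →L[ℂ] H}, cfc (K y f) A = (2 : ℝ) • cfc (P y f) A - cfc (P (2 * y) f) A := by
    intro A
    have c1 := P_cont hy hf hM
    have c2 := P_cont h2 hf hM
    rw [← cfc_const_mul 2 _ A c1.continuousOn,
      ← cfc_sub _ _ A (by exact (c1.const_mul 2).continuousOn) c2.continuousOn]
    congr 1; ext a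
    unfold K; ring
  have m1 := main1 hA hB hy hf hM
  have m2 := main1 hA hB h2 hf hM
  have m3 : M * (‖A - B‖ / (2 * y)) ≤ M * (‖A - B‖ / y) := by
    gcongr; linarith
  rw [e, e]
  have : (2 : ℝ) • cfc (P y f) A - cfc (P (2 * y) f) A - ((2 : ℝ) • cfc (P y f) B - cfc (P (2 * y) f) B)
    = (2 : ℝ) • (cfc (P y f) A - cfc (P y f) B) - (cfc (P (2 * y) f) A - cfc (P (2 * y) f) B) := by
    rw [smul_sub]; abel
  rw [this]
  refine (norm_sub_le _ _).trans ?_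
  rw [norm_smul, Real.norm_eq_abs, abs_of_pos (by norm_num : (0 : ℝ) < 2)]
  linarith

lemma int_ge {ω : ℝ → ℝ} (hm : MonotoneOn ω (Set.Ici 0)) (h0 : ω 0 = 0) {y : ℝ} (hy : 0 < y)
    (hi : IntegrableOn (fun t : ℝ => ω t / t ^ 2) (Set.Ioi y)) :
    ω y / y ≤ 4 * ((∫ t in Set.Ioi y, ω t / t ^ 2) - ∫ t in Set.Ioi (2 * y), ω t / t ^ 2) := by
  have hU : Set.Ioc y (2 * y) ∪ Set.Ioi (2 * y) = Set.Ioi y := Set.Ioc_union_Ioi_eq_Ioi (by linarith)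
  have i1 : IntegrableOn (fun t : ℝ => ω t / t ^ 2) (Set.Ioc y (2 * y)) :=
    hi.mono_set Set.Ioc_subset_Ioi_self
  have i2 : IntegrableOn (fun t : ℝ => ω t / t ^ 2) (Set.Ioi (2 * y)) :=
    hi.mono_set (Set.Ioi_subset_Ioi (by linarith))
  rw [← hU, setIntegral_union (Set.Ioc_disjoint_Ioi le_rfl) measurableSet_Ioi i1 i2,
    add_sub_cancel_right]
  have hw : 0 ≤ ω y := mod_nonneg hm h0 hy.le
  · have : ∫ t in Set.Ioc y (2 * y), ω y / (2 * y) ^ 2 ≤ ∫ t in Set.Ioc y (2 * y), ω t / t ^ 2 := by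
      refine setIntegral_mono_on (by simp) i1 measurableSet_Ioc fun t ht => ?_
      have ht0 : 0 < t := hy.trans ht.1
      have : ω y ≤ ω t := hm (Set.mem_Ici.2 hy.le) (Set.mem_Ici.2 ht0.le) ht.1.le
      exact div_le_div₀ (hw.trans this) this (by positivity) (by have := ht.2; gcongr)
    simp only [integral_const, MeasurableSet.univ, measureReal_restrict_apply, Set.univ_inter,
      Real.volume_real_Ioc_of_le (by linarith : y ≤ 2 * y), smul_eq_mul] at this
    have e : ω y / y = 4 * ((2 * y - y) * (ω y / (2 * y) ^ 2)) := by field_simp; ring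
    rw [e]; linarith

lemma int_on {ω : ℝ → ℝ} (hc : ContinuousOn ω (Set.Ici 0)) 
    (hi : IntegrableOn (fun t : ℝ => ω t / t ^ 2) (Set.Ioi 1)) {y : ℝ} (hy : 0 < y) :
    IntegrableOn (fun t : ℝ => ω t / t ^ 2) (Set.Ioi y) := by
  have h1 : IntegrableOn (fun t : ℝ => ω t / t ^ 2) (Set.Icc y 1) := by
    refine ContinuousOn.integrableOn_Icc ?_
    refine (hc.mono fun t ht => hy.le.trans ht.1).div (by fun_prop) fun t ht => ?_
    have : 0 < t := hy.trans_le ht.1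
    positivity
  refine (h1.union hi).mono_set fun t ht => ?_
  by_cases h : t ≤ 1
  · exact Or.inl ⟨le_of_lt ht, h⟩
  · exact Or.inr (not_le.1 h)

lemma bounded_case {ω : ℝ → ℝ} (hc : ContinuousOn ω (Set.Ici 0)) (hm : MonotoneOn ω (Set.Ici 0))
    (hs : ∀ s t : ℝ, 0 ≤ s → 0 ≤ t → ω (s + t) ≤ ω s + ω t) (h0 : ω 0 = 0)
    (hi : IntegrableOn (fun t : ℝ => ω t / t ^ 2) (Set.Ioi 1))
    {f : ℝ → ℝ} (hf : Continuous f) {M : ℝ} (hM : ∀ x, |f x| ≤ M)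
    (hfω : ∀ x y, |f x - f y| ≤ ω |x - y|)
    {A B : H →L[ℂ] H} (hA : IsSelfAdjoint A) (hB : IsSelfAdjoint B) (hAB : A ≠ B) :
    ‖cfc f A - cfc f B‖ ≤ 48 * (‖A - B‖ * ∫ t in Set.Ioi ‖A - B‖, ω t / t ^ 2) := by
  have hδ : 0 < ‖A - B‖ := norm_pos_iff.2 (sub_ne_zero.2 hAB)
  set δ := ‖A - B‖ with hδe
  let I : ℝ → ℝ := fun y => ∫ t in Set.Ioi y, ω t / t ^ 2
  have hI0 : ∀ y, 0 < y → 0 ≤ I y := fun y hy => by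
    refine setIntegral_nonneg measurableSet_Ioi fun t ht => ?_
    have : 0 < t := hy.trans ht
    exact div_nonneg (mod_nonneg hm h0 this.le) (by positivity)
  have hω : ∀ y, 0 < y → ω y / y ≤ 4 * (I y - I (2 * y)) := fun y hy =>
    int_ge hm h0 hy (int_on hc hi hy)
  have hfW : ∀ y, 0 < y → ∀ x a, |f x - f a| ≤ (1 + |x - a| / y) * ω y := fun y hy x a =>
    (hfω x a).trans (mod_lin hm hs h0 hy (abs_nonneg _))
  have step : ∀ y, 0 < y → ‖cfc (K y f) A - cfc (K y f) B‖ ≤ 24 * δ * (I y - I (2 * y)) +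
      ‖cfc (K (2 * y) f) A - cfc (K (2 * y) f) B‖ := fun y hy => by
    have := cfc_diff_le hA hB hy hf hM (mod_nonneg hm h0 hy.le) (hfW y hy)
    have h2 := mul_le_mul_of_nonneg_left (hω y hy) (by positivity : 0 ≤ 6 * δ)
    have e : 6 * ω y * (‖A - B‖ / y) = 6 * δ * (ω y / y) := by rw [hδe]; ring
    rw [e] at this
    linarith
  have ind : ∀ n : ℕ, ‖cfc (K δ f) A - cfc (K δ f) B‖ ≤ 24 * δ * (I δ - I (2 ^ n * δ)) +
      ‖cfc (K (2 ^ n * δ) f) A - cfc (K (2 ^ n * δ) f) B‖ := by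
    intro n
    induction n with
    | zero => simp
    | succ k ih =>
      have := step (2 ^ k * δ) (by positivity)
      rw [← mul_assoc, ← pow_succ'] at this
      linarith
  have bd : ∀ n : ℕ, ‖cfc (K δ f) A - cfc (K δ f) B‖ ≤ 24 * δ * I δ + 3 * M * (1 / 2) ^ n := by
    intro n
    have h1 := ind n
    have hp : 0 < 2 ^ n * δ := by positivity
    have h2 := cfc_K_le hA hB hp hf hM
    have e : ‖A - B‖ / (2 ^ n * δ) = (1 / 2) ^ n := by
      rw [← hδe, one_div, inv_pow]; field_simp
    rw [e] at h2
    have h3 : 0 ≤ 24 * δ * I (2 ^ n * δ) := mul_nonneg (by positivity) (hI0 _ hp)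
    linarith
  have lim : ‖cfc (K δ f) A - cfc (K δ f) B‖ ≤ 24 * δ * I δ := by
    have t : Tendsto (fun n : ℕ => 24 * δ * I δ + 3 * M * (1 / 2 : ℝ) ^ n) atTop
        (𝓝 (24 * δ * I δ + 3 * M * 0)) :=
      ((tendsto_pow_atTop_nhds_zero_of_lt_one (by norm_num) (by norm_num)).const_mul _).const_add _
    rw [mul_zero, add_zero] at t
    exact ge_of_tendsto' t bd
  have hωδ : ω δ ≤ 4 * δ * I δ := by
    have h1 := hω δ hδ
    have h2 := hI0 (2 * δ) (by positivity)
    have h3 : ω δ / δ ≤ 4 * I δ := by linarith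
    rw [div_le_iff₀ hδ] at h3
    linarith
  have app : ∀ {A : H →L[ℂ] H}, ‖cfc (K δ f) A - cfc f A‖ ≤ 3 * ω δ := by
    intro A
    rw [← cfc_sub _ _ A (K_cont hδ hf hM).continuousOn hf.continuousOn]
    refine norm_cfc_le (mul_nonneg (by norm_num) (mod_nonneg hm h0 hδ.le)) fun a _ => ?_
    have := moment hδ (by positivity : 0 < 2 * δ) hf hM a (α := 1) (by norm_num) (hk2 hδ)
      (mod_nonneg hm h0 hδ.le) (fun x => hfW δ hδ x a)
    rw [one_mul (f a)] at this
    exact this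
  have a1 := app (A := A)
  have a2 := app (A := B)
  have e : cfc f A - cfc f B = (cfc (K δ f) A - cfc (K δ f) B) - (cfc (K δ f) A - cfc f A)
    + (cfc (K δ f) B - cfc f B) := by abel
  rw [e]
  have n1 := norm_add_le ((cfc (K δ f) A - cfc (K δ f) B) - (cfc (K δ f) A - cfc f A))
    (cfc (K δ f) B - cfc f B)
  have n2 := norm_sub_le (cfc (K δ f) A - cfc (K δ f) B) (cfc (K δ f) A - cfc f A)
  have : 48 * (δ * I δ) = 24 * δ * I δ + 6 * (4 * δ * I δ) := by ring
  change _ ≤ 48 * (δ * I δ)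
  linarith

lemma general_case {ω : ℝ → ℝ} (hc : ContinuousOn ω (Set.Ici 0)) (hm : MonotoneOn ω (Set.Ici 0))
    (hs : ∀ s t : ℝ, 0 ≤ s → 0 ≤ t → ω (s + t) ≤ ω s + ω t) (h0 : ω 0 = 0)
    (hi : IntegrableOn (fun t : ℝ => ω t / t ^ 2) (Set.Ioi 1))
    {f : ℝ → ℝ} (hfω : ∀ x y, |f x - f y| ≤ ω |x - y|)
    {A B : H →L[ℂ] H} (hA : IsSelfAdjoint A) (hB : IsSelfAdjoint B) (hAB : A ≠ B) :
    ‖cfc f A - cfc f B‖ ≤ 48 * (‖A - B‖ * ∫ t in Set.Ioi ‖A - B‖, ω t / t ^ 2) := by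
  have hf : Continuous f := by
    rw [continuous_iff_continuousAt]
    intro a
    have h1 : Continuous fun x => ω |x - a| :=
      hc.comp_continuous (by fun_prop) (fun x => Set.mem_Ici.2 (abs_nonneg _))
    have h2 : Tendsto (fun x => ω |x - a|) (𝓝 a) (𝓝 0) := by
      have := h1.tendsto a
      simpa [h0] using this
    rw [ContinuousAt, tendsto_iff_norm_sub_tendsto_zero]
    exact squeeze_zero (fun _ => norm_nonneg _) (fun x => hfω x a) h2
  set R := max (‖A‖ * ‖(1 : H →L[ℂ] H)‖) (‖B‖ * ‖(1 : H →L[ℂ] H)‖) with hR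
  have hR0 : 0 ≤ R := le_max_of_le_left (by positivity)
  set L := |f 0| + ω R with hL
  have hL0 : 0 ≤ L := add_nonneg (abs_nonneg _) (mod_nonneg hm h0 hR0)
  let g : ℝ → ℝ := fun x => max (-L) (min L (f x))
  have hfL : ∀ t, |t| ≤ R → |f t| ≤ L := by
    intro t ht
    have h1 := hfω t 0
    rw [sub_zero] at h1
    have h2 : ω |t| ≤ ω R := hm (Set.mem_Ici.2 (abs_nonneg _)) (Set.mem_Ici.2 hR0) ht
    have h3 := abs_sub_abs_le_abs_sub (f t) (f 0)
    linarith
  have hfg : ∀ t, |t| ≤ R → f t = g t := by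
    intro t ht
    have := abs_le.1 (hfL t ht)
    simp only [g]
    rw [min_eq_right this.2, max_eq_right this.1]
  have eA : cfc f A = cfc g A := cfc_congr fun t ht => hfg t ((spec_le ht).trans (le_max_left _ _))
  have eB : cfc f B = cfc g B := cfc_congr fun t ht => hfg t ((spec_le ht).trans (le_max_right _ _))
  rw [eA, eB]
  refine bounded_case hc hm hs h0 hi (f := g) (M := L) ?_ ?_ ?_ hA hB hAB
  · exact continuous_const.max (continuous_const.min hf)
  · intro x
    rw [abs_le]
    exact ⟨le_max_left _ _, max_le (by linarith) (min_le_left _ _)⟩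
  · intro x y
    refine le_trans ?_ (hfω x y)
    simp only [g]
    rcases max_cases (-L) (min L (f x)) with h | h <;> rcases max_cases (-L) (min L (f y)) with h' | h' <;>
    rcases min_cases L (f x) with k | k <;> rcases min_cases L (f y) with k' | k' <;>
    rcases abs_cases (f x - f y) with m | m <;> rw [h.1, h'.1, abs_le] <;> constructor <;> linarith
end fin

end OpMod

/-- Aleksandrov–Peller estimate via moduli of continuity: if `ω` is a modulus of
continuity with `∫_1^∞ ω(t)/t² dt < ∞`, and `|f(x) − f(y)| ≤ ω(|x−y|)`, then
`‖f(A) − f(B)‖ ≤ c·ω_*(‖A−B‖)` where `ω_*(x) = x·∫_x^∞ ω(t)/t² dt`, for an absolute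
constant `c`. -/
theorem operator_estimate_modulus_of_continuity :
    ∃ c : ℝ, 0 < c ∧
      ∀ (ω : ℝ → ℝ),
        ContinuousOn ω (Set.Ici 0) →
        MonotoneOn ω (Set.Ici 0) →
        (∀ s t : ℝ, 0 ≤ s → 0 ≤ t → ω (s + t) ≤ ω s + ω t) →
        ω 0 = 0 →
        IntegrableOn (fun t : ℝ => ω t / t ^ 2) (Set.Ioi 1) →
      ∀ (H : Type*) [NormedAddCommGroup H] [InnerProductSpace ℂ H] [CompleteSpace H],
      ∀ (f : ℝ → ℝ), (∀ x y : ℝ, |f x - f y| ≤ ω |x - y|) →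
      ∀ (A B : H →L[ℂ] H), IsSelfAdjoint A → IsSelfAdjoint B → A ≠ B →
        ‖cfc f A - cfc f B‖ ≤ c * (‖A - B‖ * ∫ t in Set.Ioi ‖A - B‖, ω t / t ^ 2) := by
  refine ⟨48, by norm_num, ?_⟩
  intro ω hc hm hs h0 hi H _ _ _ f hf A B hA hB hAB
  exact OpMod.general_case hc hm hs h0 hi hf hA hB hAB
end

section
/- Let f : ℝ → ℝ be Lipschitz with constant L, i.e., |f(x) − f(y)| ≤ L·|x − y| for all x, y ∈ ℝ, and let A, B be bounded self-adjoint operators on a separable complex Hilbert space H. Then for every Hilbert basis (e_i) of H, Σ_i ‖(f(A) − f(B)) e_i‖² ≤ L²·Σ_i ‖(A − B) e_i‖² (both sums computed in [0, ∞]). In other words, ‖f(A) − f(B)‖_{S₂} ≤ L·‖A − B‖_{S₂}: if A − B is Hilbert–Schmidt then so is f(A) − f(B), with the exact constant L. -/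
open scoped ENNReal

namespace LHS

open Filter Topology Polynomial

section general
variable {E : Type*} [NormedAddCommGroup E] [InnerProductSpace ℂ E] [CompleteSpace E]

lemma approx_bound (f : ℝ → ℝ) (hf : Continuous f) (p : ℝ[X]) (R ε : ℝ) (hε : 0 ≤ ε)
    (hp : ∀ x ∈ Set.Icc (-R) R, |p.eval x - f x| < ε)
    (A : E →L[ℂ] E) (hA : IsSelfAdjoint A) (hR : ‖A‖ ≤ R) :
    ‖aeval A p - cfc f A‖ ≤ ε := by
  rw [← cfc_polynomial p A hA, ← cfc_sub (fun x => p.eval x) f A (by fun_prop) (by fun_prop)]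
  refine norm_cfc_le hε fun x hx => ?_
  have h1 := spectrum.norm_le_norm_mul_of_mem hx
  have h2 : ‖(1 : E →L[ℂ] E)‖ ≤ 1 := ContinuousLinearMap.norm_id_le
  have h3 : |x| ≤ R := by
    rw [Real.norm_eq_abs] at h1
    nlinarith [norm_nonneg A]
  exact (hp x (abs_le.mp h3)).le

lemma pow_eig (A : E →L[ℂ] E) (a : ℝ) (u : E) (hu : A u = (a : ℂ) • u) (p : ℝ[X]) :
    (aeval A p) u = ((p.eval a : ℝ) : ℂ) • u := by
  induction p using Polynomial.induction_on' with
  | add p q hp hq => simp [hp, hq, add_smul]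
  | monomial n c =>
    have : ∀ n : ℕ, (A ^ n) u = ((a : ℂ) ^ n) • u := by
      intro n
      induction n with
      | zero => simp
      | succ n ih => rw [pow_succ, ContinuousLinearMap.mul_apply, hu, map_smul, ih, smul_smul,
          pow_succ, mul_comm]
    rw [aeval_monomial, ContinuousLinearMap.mul_apply, this]
    simp [Algebra.algebraMap_eq_smul_one, smul_smul, ← Complex.coe_smul, mul_comm]

lemma cfc_eig (f : ℝ → ℝ) (hf : Continuous f) (A : E →L[ℂ] E) (hA : IsSelfAdjoint A)
    (a : ℝ) (u : E) (hu1 : ‖u‖ = 1) (hu : A u = (a : ℂ) • u) :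
    cfc f A u = (f a : ℂ) • u := by
  have ha : |a| ≤ ‖A‖ := by
    have := A.le_opNorm u
    rw [hu, norm_smul, hu1] at this
    simpa using this
  rw [← sub_eq_zero, ← norm_le_zero_iff]
  refine le_of_forall_pos_le_add fun ε hε => ?_
  obtain ⟨p, hp⟩ := exists_polynomial_near_of_continuousOn (-‖A‖) ‖A‖ f hf.continuousOn (ε/2)
    (by positivity)
  have h1 := approx_bound f hf p ‖A‖ (ε/2) (by positivity) hp A hA le_rfl
  have h2 : ‖(aeval A p - cfc f A) u‖ ≤ ε / 2 := by
    refine (ContinuousLinearMap.le_opNorm _ _).trans ?_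
    rw [hu1, mul_one]; exact h1
  have h3 : ‖((p.eval a : ℝ) : ℂ) • u - (f a : ℂ) • u‖ ≤ ε / 2 := by
    rw [← sub_smul, norm_smul, hu1, mul_one, ← Complex.ofReal_sub, Complex.norm_real]
    exact (hp a (abs_le.mp ha)).le
  have e : cfc f A u - (f a : ℂ) • u = (((p.eval a : ℝ) : ℂ) • u - (f a : ℂ) • u) -
      (aeval A p - cfc f A) u := by
    rw [ContinuousLinearMap.sub_apply, pow_eig A a u hu]; abel
  rw [e]
  have := norm_sub_le (((p.eval a : ℝ) : ℂ) • u - (f a : ℂ) • u) ((aeval A p - cfc f A) u)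
  linarith

lemma hs_basis {ι κ μ : Type*} [Fintype ι] [Fintype κ] [Fintype μ] (e : OrthonormalBasis ι ℂ E)
    (u : OrthonormalBasis κ ℂ E) (v : OrthonormalBasis μ ℂ E) (T : E →L[ℂ] E) :
    ∑ i, ‖T (e i)‖ ^ 2 = ∑ j, ∑ k, ‖inner ℂ (u j) (T (v k))‖ ^ 2 := by
  simp_rw [← u.sum_sq_norm_inner_right (T (e _))]
  rw [Finset.sum_comm]
  refine Finset.sum_congr rfl fun j _ => ?_
  simp_rw [← ContinuousLinearMap.adjoint_inner_left]
  rw [e.sum_sq_norm_inner_left, v.sum_sq_norm_inner_left]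

lemma findim [FiniteDimensional ℂ E] {ι : Type*} [Fintype ι] (e : OrthonormalBasis ι ℂ E)
    (f : ℝ → ℝ) (hc : Continuous f) (L : ℝ) (hf : ∀ x y : ℝ, |f x - f y| ≤ L * |x - y|)
    (A B : E →L[ℂ] E) (hA : IsSelfAdjoint A) (hB : IsSelfAdjoint B) :
    ∑ i, ‖(cfc f A - cfc f B) (e i)‖ ^ 2 ≤ L ^ 2 * ∑ i, ‖(A - B) (e i)‖ ^ 2 := by
  have sA := hA.isSymmetric
  have sB := hB.isSymmetric
  set u := sA.eigenvectorBasis rfl with hu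
  set v := sB.eigenvectorBasis rfl with hv
  have key : ∀ (S T : E →L[ℂ] E) (hS : IsSelfAdjoint S) (a b : ℝ) (x y : E)
      (hx : S x = (a : ℂ) • x) (hy : T y = (b : ℂ) • y),
      ‖inner ℂ x ((S - T) y)‖ = |a - b| * ‖inner ℂ x y‖ := by
    intro S T hS a b x y hx hy
    rw [ContinuousLinearMap.sub_apply, inner_sub_right, hy, inner_smul_right]
    have : inner ℂ x (S y) = inner ℂ (S x) y := (hS.isSymmetric x y).symm
    rw [this, hx, inner_smul_left, Complex.conj_ofReal, ← sub_mul, norm_mul,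
      ← Complex.ofReal_sub, Complex.norm_real, Real.norm_eq_abs]
  rw [hs_basis e u v, hs_basis e u v, Finset.mul_sum]
  refine Finset.sum_le_sum fun j _ => ?_
  rw [Finset.mul_sum]
  refine Finset.sum_le_sum fun k _ => ?_
  have hj : A (u j) = (sA.eigenvalues rfl j : ℂ) • u j := sA.apply_eigenvectorBasis rfl j
  have hk : B (v k) = (sB.eigenvalues rfl k : ℂ) • v k := sB.apply_eigenvectorBasis rfl k
  rw [key A B hA _ _ _ _ hj hk, key (cfc f A) (cfc f B) (cfc_predicate f A) _ _ _ _
    (cfc_eig f hc A hA _ _ (u.norm_eq_one j) hj) (cfc_eig f hc B hB _ _ (v.norm_eq_one k) hk),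
    ← mul_pow, ← mul_assoc]
  gcongr
  exact hf _ _

end general

section compress
variable {H : Type*} [NormedAddCommGroup H] [InnerProductSpace ℂ H] [CompleteSpace H]
  {ι : Type*} (e : HilbertBasis ι ℂ H)

noncomputable def V (s : Finset ι) : EuclideanSpace ℂ s →L[ℂ] H :=
  (((EuclideanSpace.basisFun s ℂ).toBasis.constr ℂ (fun i : s => e i)).isometryOfOrthonormal
    (v := (EuclideanSpace.basisFun s ℂ).toBasis)
    (by simpa using (EuclideanSpace.basisFun s ℂ).orthonormal)
    (by
      have : (((EuclideanSpace.basisFun s ℂ).toBasis.constr ℂ (fun i : s => e i)) ∘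
        (EuclideanSpace.basisFun s ℂ).toBasis) = fun i : s => e i := by
        ext i
        exact Module.Basis.constr_basis _ _ _ _
      rw [this]
      exact e.orthonormal.comp _ Subtype.val_injective)).toContinuousLinearMap

lemma V_norm (s : Finset ι) (x) : ‖V e s x‖ = ‖x‖ := LinearIsometry.norm_map _ x

lemma V_basis (s : Finset ι) (i : s) : V e s (EuclideanSpace.basisFun s ℂ i) = e i := by
  have := Module.Basis.constr_basis (EuclideanSpace.basisFun s ℂ).toBasis ℂ (fun i : s => e i) i
  rw [OrthonormalBasis.coe_toBasis] at this
  exact this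

noncomputable def W (s : Finset ι) : H →L[ℂ] EuclideanSpace ℂ s :=
  ContinuousLinearMap.adjoint (V e s)

lemma WV (s : Finset ι) (x) : W e s (V e s x) = x := by
  have := (ContinuousLinearMap.norm_map_iff_adjoint_comp_self (V e s)).1 (V_norm e s)
  exact congrArg (fun T : EuclideanSpace ℂ s →L[ℂ] EuclideanSpace ℂ s => T x) this

lemma W_basis (s : Finset ι) (i : s) : W e s (e i) = EuclideanSpace.basisFun s ℂ i := by
  rw [← V_basis, WV]

lemma V_opnorm (s : Finset ι) : ‖V e s‖ ≤ 1 := LinearIsometry.norm_toContinuousLinearMap_le _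

lemma W_opnorm (s : Finset ι) : ‖W e s‖ ≤ 1 := by
  rw [W, LinearIsometryEquiv.norm_map]; exact V_opnorm e s

lemma W_le (s : Finset ι) (x : H) : ‖W e s x‖ ≤ ‖x‖ := by
  simpa using (W e s).le_of_opNorm_le (W_opnorm e s) x

lemma VW (s : Finset ι) (x : H) : V e s (W e s x) = ∑ i ∈ s, e.repr x i • e i := by
  rw [← (EuclideanSpace.basisFun s ℂ).sum_repr' (W e s x), map_sum, ← Finset.sum_coe_sort s]
  refine Finset.sum_congr rfl fun i _ => ?_
  rw [map_smul, V_basis, W, ContinuousLinearMap.adjoint_inner_right, V_basis,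
    HilbertBasis.repr_apply_apply]

lemma VW_tendsto (x : H) : Tendsto (fun s => V e s (W e s x)) atTop (𝓝 x) := by
  simp_rw [VW]
  exact e.hasSum_repr x

lemma VW_tendsto' (y : Finset ι → H) (x : H) (h : Tendsto y atTop (𝓝 x)) :
    Tendsto (fun s => V e s (W e s (y s))) atTop (𝓝 x) := by
  have h1 : Tendsto (fun s => V e s (W e s (y s - x))) atTop (𝓝 0) := by
    refine squeeze_zero_norm (fun s => ?_) (tendsto_iff_norm_sub_tendsto_zero.1 h)
    rw [V_norm]; exact W_le e s _
  have := h1.add (VW_tendsto e x)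
  simpa using this

noncomputable def C (s : Finset ι) (A : H →L[ℂ] H) :
    EuclideanSpace ℂ s →L[ℂ] EuclideanSpace ℂ s := W e s ∘L A ∘L V e s

lemma C_sa (s : Finset ι) (A : H →L[ℂ] H) (hA : IsSelfAdjoint A) : IsSelfAdjoint (C e s A) :=
  hA.adjoint_conj (V e s)

lemma C_norm (s : Finset ι) (A : H →L[ℂ] H) : ‖C e s A‖ ≤ ‖A‖ := by
  refine ContinuousLinearMap.opNorm_le_bound _ (norm_nonneg _) fun x => ?_
  refine (W_le e s _).trans ?_
  rw [← V_norm e s x]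
  exact A.le_opNorm _

lemma poly_tendsto (A : H →L[ℂ] H) (x : H) (p : ℝ[X]) :
    Tendsto (fun s => V e s (aeval (C e s A) p (W e s x))) atTop (𝓝 (aeval A p x)) := by
  induction p using Polynomial.induction_on' with
  | add p q hp hq => simpa using hp.add hq
  | monomial n c =>
    have : Tendsto (fun s => V e s ((C e s A ^ n) (W e s x))) atTop (𝓝 ((A ^ n) x)) := by
      induction n with
      | zero => simpa using VW_tendsto e x
      | succ n ih =>
        simp_rw [pow_succ', ContinuousLinearMap.mul_apply]
        exact VW_tendsto' e _ _ ((A.continuous.tendsto _).comp ih)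
    have := this.const_smul (c : ℂ)
    simpa [aeval_monomial, Algebra.algebraMap_eq_smul_one, ← Complex.coe_smul] using this

lemma cfc_tendsto (f : ℝ → ℝ) (hf : Continuous f) (A : H →L[ℂ] H) (hA : IsSelfAdjoint A) (x : H) :
    Tendsto (fun s => V e s (cfc f (C e s A) (W e s x))) atTop (𝓝 (cfc f A x)) := by
  rw [Metric.tendsto_nhds]
  intro ε hε
  set δ := ε / (3 * (‖x‖ + 1)) with hδ
  have hδ0 : 0 < δ := by positivity
  have hδx : δ * ‖x‖ < ε / 3 := by
    have : δ * (‖x‖ + 1) = ε / 3 := by rw [hδ]; field_simp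
    linarith
  obtain ⟨p, hp⟩ := exists_polynomial_near_of_continuousOn (-‖A‖) ‖A‖ f hf.continuousOn δ hδ0
  filter_upwards [Metric.tendsto_nhds.1 (poly_tendsto e A x p) (ε/3) (by positivity)] with s hs
  have h1 := (aeval A p - cfc f A).le_of_opNorm_le
    (approx_bound f hf p ‖A‖ δ hδ0.le hp A hA le_rfl) x
  have h2 := (aeval (C e s A) p - cfc f (C e s A)).le_of_opNorm_le
    (approx_bound f hf p ‖A‖ δ hδ0.le hp _ (C_sa e s A hA) (C_norm e s A)) (W e s x)
  have h3 : δ * ‖W e s x‖ ≤ δ * ‖x‖ := by gcongr; exact W_le e s x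
  rw [← V_norm e s] at h2
  rw [dist_eq_norm] at hs ⊢
  have e1 : V e s (cfc f (C e s A) (W e s x)) - cfc f A x =
      (V e s (aeval (C e s A) p (W e s x)) - aeval A p x) + (aeval A p - cfc f A) x
      - V e s ((aeval (C e s A) p - cfc f (C e s A)) (W e s x)) := by
    simp only [ContinuousLinearMap.sub_apply, map_sub]; abel
  rw [e1]
  refine (norm_sub_le _ _).trans_lt ?_
  have := norm_add_le (V e s (aeval (C e s A) p (W e s x)) - aeval A p x) ((aeval A p - cfc f A) x)
  linarith

lemma C_bound (f : ℝ → ℝ) (hc : Continuous f) (L : ℝ)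
    (hf : ∀ x y : ℝ, |f x - f y| ≤ L * |x - y|)
    (A B : H →L[ℂ] H) (hA : IsSelfAdjoint A) (hB : IsSelfAdjoint B) (t s : Finset ι) (hts : t ⊆ s) :
    ∑ i ∈ t, ‖V e s (cfc f (C e s A) (W e s (e i))) - V e s (cfc f (C e s B) (W e s (e i)))‖ ^ 2
      ≤ L ^ 2 * ∑ i ∈ s, ‖(A - B) (e i)‖ ^ 2 := by
  refine (Finset.sum_le_sum_of_subset_of_nonneg hts fun _ _ _ => by positivity).trans ?_
  rw [← Finset.sum_coe_sort s, ← Finset.sum_coe_sort s (fun i => ‖(A - B) (e i)‖ ^ 2)]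
  have h := findim (EuclideanSpace.basisFun s ℂ) f hc L hf _ _ (C_sa e s A hA) (C_sa e s B hB)
  refine le_trans (le_of_eq ?_) (h.trans ?_)
  · refine Finset.sum_congr rfl fun i _ => ?_
    rw [W_basis, ← map_sub, V_norm, ContinuousLinearMap.sub_apply]
  · gcongr with i _
    have : (C e s A - C e s B) (EuclideanSpace.basisFun s ℂ i) = W e s ((A - B) (e i)) := by
      rw [← V_basis e s i]; simp [C]
    rw [this]
    exact W_le e s _

end compress

end LHS

open LHS in
/-- Birman–Solomyak: a Lipschitz function with constant `L` satisfies
`‖f(A) − f(B)‖_{S₂} ≤ L·‖A − B‖_{S₂}` for bounded self-adjoint operators `A, B` on a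
separable complex Hilbert space; the Hilbert–Schmidt norms are computed in `[0,∞]` via
any Hilbert basis. -/
theorem lipschitz_hilbert_schmidt
    {H : Type*} [NormedAddCommGroup H] [InnerProductSpace ℂ H] [CompleteSpace H]
    [TopologicalSpace.SeparableSpace H]
    (f : ℝ → ℝ) (L : ℝ) (hf : ∀ x y : ℝ, |f x - f y| ≤ L * |x - y|)
    (A B : H →L[ℂ] H) (hA : IsSelfAdjoint A) (hB : IsSelfAdjoint B) :
    ∀ (ι : Type*) (e : HilbertBasis ι ℂ H),
      ∑' i : ι, (‖(cfc f A - cfc f B) (e i)‖₊ : ℝ≥0∞) ^ 2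
        ≤ ENNReal.ofReal L ^ 2 * ∑' i : ι, (‖(A - B) (e i)‖₊ : ℝ≥0∞) ^ 2 := by
  intro ι e
  have hL : 0 ≤ L := by
    have := (abs_nonneg _).trans (hf 1 0)
    simpa using this
  have hc : Continuous f := by
    have : LipschitzWith L.toNNReal f := LipschitzWith.of_dist_le_mul fun x y => by
      rw [Real.dist_eq, Real.dist_eq, Real.coe_toNNReal _ hL]; exact hf x y
    exact this.continuous
  have conv : ∀ (T : H →L[ℂ] H) (t : Finset ι), ∑ i ∈ t, (‖T (e i)‖₊ : ℝ≥0∞) ^ 2 =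
      ENNReal.ofReal (∑ i ∈ t, ‖T (e i)‖ ^ 2) := by
    intro T t
    rw [ENNReal.ofReal_sum_of_nonneg (fun _ _ => by positivity)]
    refine Finset.sum_congr rfl fun i _ => ?_
    rw [ENNReal.ofReal_pow (norm_nonneg _), ofReal_norm_eq_enorm]; rfl
  rw [ENNReal.tsum_eq_iSup_sum]
  refine iSup_le fun t => ?_
  rw [conv]
  have lim : Filter.Tendsto (fun s => ∑ i ∈ t, ‖V e s (cfc f (C e s A) (W e s (e i))) -
      V e s (cfc f (C e s B) (W e s (e i)))‖ ^ 2) Filter.atTop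
      (nhds (∑ i ∈ t, ‖(cfc f A - cfc f B) (e i)‖ ^ 2)) := by
    refine tendsto_finsetSum _ fun i _ => ?_
    exact (((cfc_tendsto e f hc A hA (e i)).sub (cfc_tendsto e f hc B hB (e i))).norm).pow 2
  refine le_of_tendsto (ENNReal.tendsto_ofReal lim) ?_
  filter_upwards [Filter.eventually_ge_atTop t] with s hs
  refine (ENNReal.ofReal_le_ofReal (C_bound e f hc L hf A B hA hB t s hs)).trans ?_
  rw [ENNReal.ofReal_mul (by positivity), ENNReal.ofReal_pow hL, ← conv]
  gcongr
  exact ENNReal.sum_le_tsum s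
end

section
/- Let f : ℝ → ℝ be Lipschitz with constant L, let A, B be bounded self-adjoint operators on a separable complex Hilbert space H, and let Q be a bounded operator on H. Then for every Hilbert basis (e_i) of H, Σ_i ‖(f(A)Q − Q f(B)) e_i‖² ≤ L²·Σ_i ‖(AQ − QB) e_i‖² (both sums computed in [0, ∞]). In other words, for the quasicommutator one has ‖f(A)Q − Q f(B)‖_{S₂} ≤ L·‖AQ − QB‖_{S₂}; in particular, if AQ − QB is Hilbert–Schmidt then so is f(A)Q − Q f(B). -/
open scoped ENNReal

lemma qc_bern_deriv (g : ℕ → ℝ) (n : ℕ) :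
    Polynomial.derivative (∑ k ∈ Finset.range (n + 2), Polynomial.C (g k) * bernsteinPolynomial ℝ (n+1) k)
    = ∑ k ∈ Finset.range (n + 1), Polynomial.C ((n + 1) * (g (k+1) - g k)) * bernsteinPolynomial ℝ n k := by
  rw [Finset.sum_range_succ', map_add, map_sum]
  simp only [Polynomial.derivative_C_mul, bernsteinPolynomial.derivative_succ_aux,
    bernsteinPolynomial.derivative_zero]
  have h1 : ∀ k, Polynomial.C (g (k+1)) * ((n + 1) * (bernsteinPolynomial ℝ n k - bernsteinPolynomial ℝ n (k + 1)))
    = Polynomial.C (g (k+1)) * ((n + 1) * bernsteinPolynomial ℝ n k) - Polynomial.C (g (k+1)) * ((n + 1) * bernsteinPolynomial ℝ n (k+1)) := by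
    intro k; ring
  have h2 : ∀ k, Polynomial.C ((n + 1) * (g (k+1) - g k)) * bernsteinPolynomial ℝ n k
    = Polynomial.C (g (k+1)) * ((n + 1) * bernsteinPolynomial ℝ n k) - Polynomial.C (g k) * ((n + 1) * bernsteinPolynomial ℝ n k) := by
    intro k; simp; ring
  simp only [h1, h2, Finset.sum_sub_distrib]
  have h3 := Finset.sum_range_succ' (fun k => Polynomial.C (g k) * (((n:Polynomial ℝ) + 1) * bernsteinPolynomial ℝ n k)) (n+1)
  have h4 := Finset.sum_range_succ (fun k => Polynomial.C (g k) * (((n:Polynomial ℝ) + 1) * bernsteinPolynomial ℝ n k)) (n+1)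
  rw [bernsteinPolynomial.eq_zero_of_lt ℝ (Nat.lt_succ_self n)] at h4
  simp only [mul_zero, add_zero] at h4
  rw [← h4, h3]
  simp
  ring

lemma qc_bern (g : ℝ → ℝ) (K : ℝ) (hg : ∀ x y, |g x - g y| ≤ K * |x - y|) :
    ∃ p : ℕ → Polynomial ℝ, (∀ n, ∀ u ∈ Set.Icc (0:ℝ) 1, |(p n).derivative.eval u| ≤ K) ∧
      ∀ ε > 0, ∃ n, ∀ u ∈ Set.Icc (0:ℝ) 1, |(p n).eval u - g u| ≤ ε := by
  have hK : 0 ≤ K := by simpa using (abs_nonneg _).trans (hg 1 0)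
  refine ⟨fun n => ∑ k ∈ Finset.range (n + 2), Polynomial.C (g (k / (n+1 : ℕ))) * bernsteinPolynomial ℝ (n+1) k, ?_, ?_⟩
  · intro n u hu
    simp only
    rw [qc_bern_deriv (fun k => g (k / (n+1 : ℕ))) n, Polynomial.eval_finsetSum]
    have hnn : ∀ k, 0 ≤ (bernsteinPolynomial ℝ n k).eval u := fun k =>
      bernstein_nonneg (n := n) (ν := k) (x := ⟨u, hu⟩)
    have hs : ∑ k ∈ Finset.range (n+1), (bernsteinPolynomial ℝ n k).eval u = 1 := by
      rw [← Polynomial.eval_finsetSum, bernsteinPolynomial.sum]; simp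
    calc _ ≤ ∑ k ∈ Finset.range (n+1), K * (bernsteinPolynomial ℝ n k).eval u := by
          refine (Finset.abs_sum_le_sum_abs _ _).trans (Finset.sum_le_sum fun k _ => ?_)
          rw [Polynomial.eval_mul, Polynomial.eval_C, abs_mul, abs_of_nonneg (hnn k)]
          refine mul_le_mul_of_nonneg_right ?_ (hnn k)
          rw [abs_mul]
          have h1 : (0:ℝ) < n + 1 := by positivity
          rw [abs_of_pos h1]
          refine (mul_le_mul_of_nonneg_left (hg _ _) h1.le).trans_eq ?_
          push_cast
          rw [← sub_div, add_sub_cancel_left, abs_of_pos (by positivity)]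
          field_simp
      _ = K := by rw [← Finset.mul_sum, hs, mul_one]
  · intro ε hε
    have hc : Continuous g := (LipschitzWith.of_dist_le_mul (K := ⟨K, hK⟩) (fun x y => by
      rw [Real.dist_eq, Real.dist_eq]; exact hg x y)).continuous
    let G : C(unitInterval, ℝ) := ⟨fun x => g x, hc.comp continuous_subtype_val⟩
    have := bernsteinApproximation_uniform G
    have h2 := (Filter.tendsto_add_atTop_iff_nat 1).2 this
    rw [Metric.tendsto_atTop] at h2
    obtain ⟨n, hn⟩ := h2 ε hε
    refine ⟨n, fun u hu => ?_⟩
    have h3 := (ContinuousMap.dist_apply_le_dist ⟨u, hu⟩).trans (hn n le_rfl).le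
    rw [Real.dist_eq, bernsteinApproximation.apply] at h3
    convert! h3 using 3
    rw [Polynomial.eval_finsetSum, Finset.sum_range]
    refine Finset.sum_congr rfl fun k _ => ?_
    simp [G, bernstein, bernstein.z, mul_comm]

lemma qc_approx (f : ℝ → ℝ) (L : ℝ) (hf : ∀ x y : ℝ, |f x - f y| ≤ L * |x - y|) (M : ℝ) (hM : 0 < M) :
    ∃ p : ℕ → Polynomial ℝ, (∀ n, ∀ u ∈ Set.Icc (-M) M, |(p n).derivative.eval u| ≤ L) ∧
      ∀ ε > 0, ∃ n, ∀ u ∈ Set.Icc (-M) M, |(p n).eval u - f u| ≤ ε := by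
  obtain ⟨p, h1, h2⟩ := qc_bern (fun u => f (M * (2 * u - 1))) (L * (2 * M)) (by
    intro x y
    refine (hf _ _).trans_eq ?_
    rw [show M * (2 * x - 1) - M * (2 * y - 1) = (2 * M) * (x - y) by ring, abs_mul, abs_of_pos (by positivity : 0 < 2 * M)]
    ring)
  have hmem : ∀ u ∈ Set.Icc (-M) M, (1 / (2 * M)) * u + 1 / 2 ∈ Set.Icc (0:ℝ) 1 := by
    intro u hu
    have e : (1 / (2 * M)) * u + 1 / 2 = (u + M) / (2 * M) := by field_simp
    rw [e]
    constructor
    · exact div_nonneg (by linarith [hu.1]) (by positivity)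
    · rw [div_le_one (by positivity)]; linarith [hu.2]
  refine ⟨fun n => (p n).comp (Polynomial.C (1 / (2 * M)) * Polynomial.X + Polynomial.C (1 / 2)), ?_, ?_⟩
  · intro n u hu
    have := h1 n _ (hmem u hu)
    simp only [Polynomial.derivative_comp, Polynomial.eval_mul, Polynomial.eval_comp, Polynomial.derivative_add, Polynomial.derivative_C, Polynomial.derivative_C_mul, Polynomial.derivative_X, Polynomial.eval_add, Polynomial.eval_C, Polynomial.eval_X, mul_one, add_zero]
    rw [abs_mul, abs_of_pos (by positivity : 0 < 1 / (2 * M))]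
    refine (mul_le_mul_of_nonneg_left this (by positivity)).trans_eq ?_
    field_simp
  · intro ε hε
    obtain ⟨n, hn⟩ := h2 ε hε
    refine ⟨n, fun u hu => ?_⟩
    have := hn _ (hmem u hu)
    have e : M * (2 * (1 / (2 * M) * u + 1 / 2) - 1) = u := by field_simp; ring
    rw [e] at this
    simpa using this

/-- divided difference of a real polynomial at two algebra elements -/
noncomputable def qcDD {R : Type*} [Ring R] [Algebra ℂ R] (p : Polynomial ℝ) (a b : R) : R :=
  ∑ k ∈ Finset.range (p.natDegree + 1), (p.coeff k : ℂ) • ∑ j ∈ Finset.range k, a ^ j * b ^ (k - 1 - j)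

lemma qcDD_real (p : Polynomial ℝ) (L M : ℝ)
    (hp : ∀ t ∈ Set.Icc (-M) M, |p.derivative.eval t| ≤ L) (s t : ℝ) (hs : s ∈ Set.Icc (-M) M)
    (ht : t ∈ Set.Icc (-M) M) : ‖qcDD p (s : ℂ) (t : ℂ)‖ ≤ L := by
  have h0 : qcDD p (s : ℂ) (t : ℂ) = ((∑ k ∈ Finset.range (p.natDegree + 1), p.coeff k * ∑ j ∈ Finset.range k, s ^ j * t ^ (k - 1 - j) : ℝ) : ℂ) := by
    simp [qcDD]
  rw [h0, Complex.norm_real, Real.norm_eq_abs]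
  rcases eq_or_ne s t with rfl | hne
  · convert hp s hs using 2
    rw [Polynomial.derivative_eval, Polynomial.sum_over_range _ (by simp)]
    refine Finset.sum_congr rfl fun k _ => ?_
    rw [mul_assoc]
    congr 1
    rw [Finset.sum_congr rfl (g := fun _ => s ^ (k-1))]
    · simp
    · intro j hj
      rw [← pow_add]
      congr 1
      have := Finset.mem_range.1 hj
      omega
  · have h1 : (∑ k ∈ Finset.range (p.natDegree + 1), p.coeff k * ∑ j ∈ Finset.range k, s ^ j * t ^ (k - 1 - j)) * (s - t) = p.eval s - p.eval t := by
      rw [Finset.sum_mul, Polynomial.eval_eq_sum_range, Polynomial.eval_eq_sum_range, ← Finset.sum_sub_distrib]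
      refine Finset.sum_congr rfl fun k _ => ?_
      rw [mul_assoc, (Commute.all s t).geom_sum₂_mul]
      ring
    have h2 : |p.eval s - p.eval t| ≤ L * |s - t| := by
      have := (convex_Icc (-M) M).norm_image_sub_le_of_norm_deriv_le (f := fun x => p.eval x) (C := L)
        (fun x _ => p.differentiableAt) (fun x hx => by simpa using hp x hx) ht hs
      simpa using this
    rw [← h1, abs_mul] at h2
    exact le_of_mul_le_mul_right h2 (abs_pos.2 (sub_ne_zero.2 hne))

lemma qcDD_comm {C : Type*} [CommCStarAlgebra C] (a b : C) (ha : IsSelfAdjoint a) (hb : IsSelfAdjoint b)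
    (p : Polynomial ℝ) (L M : ℝ) (hL : 0 ≤ L) (haM : ‖a‖ ≤ M) (hbM : ‖b‖ ≤ M)
    (hp : ∀ t ∈ Set.Icc (-M) M, |p.derivative.eval t| ≤ L) : ‖qcDD p a b‖ ≤ L := by
  have := (AddMonoidHomClass.isometry_iff_norm _).1 (gelfandTransform_isometry C) (qcDD p a b)
  rw [← this, ContinuousMap.norm_le _ hL]
  intro χ
  have key : ∀ x : C, IsSelfAdjoint x → ‖x‖ ≤ M → ∃ s ∈ Set.Icc (-M) M, χ x = ((s : ℝ) : ℂ) := by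
    intro x hx hxM
    have h1 : IsSelfAdjoint (χ x) := hx.map χ
    have h2 : ((χ x).re : ℂ) = χ x := Complex.conj_eq_iff_re.1 h1
    refine ⟨(χ x).re, ?_, h2.symm⟩
    refine abs_le.1 ?_
    refine (Complex.abs_re_le_norm _).trans (le_trans ?_ hxM)
    exact NonUnitalStarAlgHom.norm_apply_le χ x
  obtain ⟨s, hs, hs'⟩ := key a ha haM
  obtain ⟨t, ht, ht'⟩ := key b hb hbM
  have : WeakDual.gelfandTransform ℂ C (qcDD p a b) χ = qcDD p (s : ℂ) (t : ℂ) := by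
    rw [WeakDual.gelfandTransform_apply_apply, ← hs', ← ht']
    simp only [qcDD, map_sum, map_smul, map_mul, map_pow, smul_eq_mul]
  rw [this]
  exact qcDD_real p L M hp s t hs ht

lemma qcDD_norm {C : Type*} [CStarAlgebra C] (a b : C) (ha : IsSelfAdjoint a) (hb : IsSelfAdjoint b)
    (hab : a * b = b * a)
    (p : Polynomial ℝ) (L M : ℝ) (hL : 0 ≤ L) (haM : ‖a‖ ≤ M) (hbM : ‖b‖ ≤ M)
    (hp : ∀ t ∈ Set.Icc (-M) M, |p.derivative.eval t| ≤ L) : ‖qcDD p a b‖ ≤ L := by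
  let S₀ := StarAlgebra.adjoin ℂ ({a, b} : Set C)
  let _ : CommRing S₀ := StarAlgebra.adjoinCommRingOfComm ℂ (s := ({a, b} : Set C)) (by
      rintro x (rfl | rfl) y (rfl | rfl) <;> simp [hab]) (by
      rintro x (rfl | rfl) y (rfl | rfl) <;> simp [hab, ha.star_eq, hb.star_eq])
  let S := S₀.topologicalClosure
  let _ : CommRing S := S₀.commRingTopologicalClosure mul_comm
  have : IsClosed (S : Set C) := S₀.isClosed_topologicalClosure
  let _ : CommCStarAlgebra S := { (inferInstance : CStarAlgebra S) with mul_comm := mul_comm }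
  have haS : a ∈ S := S₀.le_topologicalClosure (StarAlgebra.subset_adjoin ℂ _ (by simp))
  have hbS : b ∈ S := S₀.le_topologicalClosure (StarAlgebra.subset_adjoin ℂ _ (by simp))
  have h := qcDD_comm (C := S) ⟨a, haS⟩ ⟨b, hbS⟩ (Subtype.ext ha) (Subtype.ext hb) p L M hL haM hbM hp
  have e : ((qcDD p (⟨a, haS⟩ : S) ⟨b, hbS⟩ : S) : C) = qcDD p a b := by
    simp [qcDD]
  rw [← e]
  exact h

section qc
set_option linter.unusedSectionVars false
variable {H : Type*} [NormedAddCommGroup H] [InnerProductSpace ℂ H] [CompleteSpace H] {ι : Type*}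

lemma qc_lp_summable {E : Type*} [NormedAddCommGroup E] (x : lp (fun _ : ι => E) 2) :
    Summable fun i => ‖x i‖ ^ 2 := by
  have := (lp.memℓp x).summable (by norm_num)
  simpa using this

lemma qc_lp_norm {E : Type*} [NormedAddCommGroup E] (x : lp (fun _ : ι => E) 2) :
    (‖x‖₊ : ℝ≥0∞) ^ 2 = ∑' i, (‖x i‖₊ : ℝ≥0∞) ^ 2 := by
  have h1 : ‖x‖ ^ 2 = ∑' i, ‖x i‖ ^ 2 := by
    have := lp.norm_rpow_eq_tsum (p := 2) (by norm_num) x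
    simpa using this
  have h2 := ENNReal.ofReal_tsum_of_nonneg (f := fun i => ‖x i‖ ^ 2) (fun i => by positivity) (qc_lp_summable x)
  rw [← h1] at h2
  simpa [ENNReal.ofReal_pow, enorm_eq_nnnorm] using h2

lemma qc_parseval (e : HilbertBasis ι ℂ H) (v : H) :
    (‖v‖₊ : ℝ≥0∞) ^ 2 = ∑' i, (‖inner ℂ (e i) v‖₊ : ℝ≥0∞) ^ 2 := by
  have := qc_lp_norm (e.repr v)
  simp only [HilbertBasis.repr_apply_apply] at this
  rw [← this, LinearIsometryEquiv.nnnorm_map]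

/-- squared Hilbert–Schmidt norm -/
noncomputable def qcHS (e : HilbertBasis ι ℂ H) (T : H →L[ℂ] H) : ℝ≥0∞ :=
  ∑' i, (‖T (e i)‖₊ : ℝ≥0∞) ^ 2

lemma qcHS_adjoint (e : HilbertBasis ι ℂ H) (T : H →L[ℂ] H) :
    qcHS e (star T) = qcHS e T := by
  unfold qcHS
  simp_rw [qc_parseval e (T _), qc_parseval e ((star T) _)]
  rw [ENNReal.tsum_comm]
  refine tsum_congr fun i => tsum_congr fun j => ?_
  rw [ContinuousLinearMap.star_eq_adjoint, ContinuousLinearMap.adjoint_inner_right]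
  have : ‖inner ℂ (T (e i)) (e j)‖₊ = ‖inner ℂ (e j) (T (e i))‖₊ := by
    ext; exact norm_inner_symm _ _
  rw [this]

lemma qcHS_mul_left (e : HilbertBasis ι ℂ H) (A T : H →L[ℂ] H) :
    qcHS e (A * T) ≤ (‖A‖₊ : ℝ≥0∞) ^ 2 * qcHS e T := by
  unfold qcHS
  rw [← ENNReal.tsum_mul_left]
  refine ENNReal.tsum_le_tsum fun i => ?_
  rw [← mul_pow]
  gcongr
  exact_mod_cast A.le_opNNNorm (T (e i))

lemma qcHS_mul_right (e : HilbertBasis ι ℂ H) (T B : H →L[ℂ] H) :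
    qcHS e (T * B) ≤ (‖B‖₊ : ℝ≥0∞) ^ 2 * qcHS e T := by
  rw [← qcHS_adjoint, star_mul, ← qcHS_adjoint e T]
  refine (qcHS_mul_left e _ _).trans_eq ?_
  rw [nnnorm_star]

lemma qc_lp_abs (x : lp (fun _ : ι => H) 2) :
    ∃ y : lp (fun _ : ι => ℂ) 2, (∀ i, ‖y i‖ = ‖x i‖) ∧ ‖y‖ = ‖x‖ := by
  have hm : Memℓp (fun i => (‖x i‖ : ℂ)) 2 := by
    apply memℓp_gen
    simpa using qc_lp_summable x
  have h1 : ∀ i, ‖(⟨_, hm⟩ : lp (fun _ : ι => ℂ) 2) i‖₊ = ‖x i‖₊ := fun i => by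
    ext; simp
  refine ⟨⟨_, hm⟩, fun i => congrArg NNReal.toReal (h1 i), ?_⟩
  have h2 := qc_lp_norm (⟨_, hm⟩ : lp (fun _ : ι => ℂ) 2)
  simp_rw [h1] at h2
  rw [← qc_lp_norm x] at h2
  exact congrArg NNReal.toReal (ENNReal.coe_injective ((ENNReal.pow_right_strictMono two_ne_zero).injective h2))

lemma qc_op_summable (e : HilbertBasis ι ℂ H) (x : lp (fun _ : ι => H) 2) (v : H) :
    Summable fun i => ‖e.repr v i • x i‖ := by
  simp_rw [norm_smul]
  have hpq : (2 : ℝ≥0∞).toReal.HolderConjugate (2 : ℝ≥0∞).toReal := by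
    rw [Real.holderConjugate_iff]; norm_num
  obtain ⟨y, h1, h2⟩ := qc_lp_abs x
  simp_rw [← h1]
  exact lp.summable_mul hpq (e.repr v) y

lemma qc_op_bound (e : HilbertBasis ι ℂ H) (x : lp (fun _ : ι => H) 2) (v : H) :
    ‖∑' i, e.repr v i • x i‖ ≤ ‖x‖ * ‖v‖ := by
  refine (norm_tsum_le_tsum_norm (qc_op_summable e x v)).trans ?_
  simp_rw [norm_smul]
  have hpq : (2 : ℝ≥0∞).toReal.HolderConjugate (2 : ℝ≥0∞).toReal := by
    rw [Real.holderConjugate_iff]; norm_num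
  obtain ⟨y, h1, h2⟩ := qc_lp_abs x
  simp_rw [← h1, ← h2]
  refine (lp.tsum_mul_le_mul_norm hpq (e.repr v) y).2.trans_eq ?_
  rw [LinearIsometryEquiv.norm_map, mul_comm]

/-- operator with prescribed columns -/
noncomputable def qcOp (e : HilbertBasis ι ℂ H) : lp (fun _ : ι => H) 2 →ₗ[ℂ] (H →L[ℂ] H) where
  toFun x := LinearMap.mkContinuous
    { toFun := fun v => ∑' i, e.repr v i • x i
      map_add' := fun v w => by
        rw [← (qc_op_summable e x v).of_norm.tsum_add (qc_op_summable e x w).of_norm]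
        simp [add_smul]
      map_smul' := fun c v => by
        rw [RingHom.id_apply, ← (qc_op_summable e x v).of_norm.tsum_const_smul]
        simp [mul_smul] } ‖x‖ (qc_op_bound e x)
  map_add' x y := by
    ext v
    simp only [LinearMap.mkContinuous_apply, LinearMap.coe_mk, AddHom.coe_mk, add_apply]
    rw [← (qc_op_summable e x v).of_norm.tsum_add (qc_op_summable e y v).of_norm]
    simp [smul_add]
  map_smul' c x := by
    ext v
    simp only [LinearMap.mkContinuous_apply, LinearMap.coe_mk, AddHom.coe_mk, RingHom.id_apply, smul_apply]
    rw [← (qc_op_summable e x v).of_norm.tsum_const_smul]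
    simp [smul_comm c]

lemma qcOp_basis (e : HilbertBasis ι ℂ H) (x : lp (fun _ : ι => H) 2) (i : ι) :
    qcOp e x (e i) = x i := by
  classical
  change ∑' j, e.repr (e i) j • x j = x i
  rw [tsum_eq_single i]
  · simp [HilbertBasis.repr_self]
  · intro j hj
    simp [HilbertBasis.repr_self, hj]

lemma qc_ext (e : HilbertBasis ι ℂ H) {S T : H →L[ℂ] H} (h : ∀ i, S (e i) = T (e i)) : S = T := by
  refine ContinuousLinearMap.ext_on (s := Set.range e) ?_ ?_
  · exact Submodule.dense_iff_topologicalClosure_eq_top.2 e.dense_span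
  · rintro _ ⟨i, rfl⟩; exact h i

lemma qcOp_inj (e : HilbertBasis ι ℂ H) {x y : lp (fun _ : ι => H) 2} (h : qcOp e x = qcOp e y) : x = y := by
  ext i
  rw [← qcOp_basis e x, h, qcOp_basis]

lemma qcHS_qcOp (e : HilbertBasis ι ℂ H) (x : lp (fun _ : ι => H) 2) :
    qcHS e (qcOp e x) = (‖x‖₊ : ℝ≥0∞) ^ 2 := by
  rw [qc_lp_norm, qcHS]
  simp_rw [qcOp_basis]

lemma qcOp_surj (e : HilbertBasis ι ℂ H) (T : H →L[ℂ] H) (hT : qcHS e T ≠ ⊤) :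
    ∃ x, qcOp e x = T := by
  have hm : Memℓp (fun i => T (e i)) 2 := by
    apply memℓp_gen
    have := ENNReal.summable_toReal hT
    simpa using this
  refine ⟨⟨_, hm⟩, qc_ext e fun i => ?_⟩
  rw [qcOp_basis]

lemma qc_lift (e : HilbertBasis ι ℂ H) (φ : (H →L[ℂ] H) →ₗ[ℂ] (H →L[ℂ] H)) (c : NNReal)
    (hφ : ∀ T, qcHS e (φ T) ≤ (c : ℝ≥0∞) ^ 2 * qcHS e T) :
    ∃ Φ : lp (fun _ : ι => H) 2 →L[ℂ] lp (fun _ : ι => H) 2, ‖Φ‖ ≤ c ∧ ∀ x, qcOp e (Φ x) = φ (qcOp e x) := by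
  have h1 : ∀ x, ∃ y, qcOp e y = φ (qcOp e x) := fun x => by
    refine qcOp_surj e _ (ne_top_of_le_ne_top ?_ (hφ _))
    rw [qcHS_qcOp, ← mul_pow]
    exact ENNReal.pow_ne_top (ENNReal.mul_ne_top ENNReal.coe_ne_top ENNReal.coe_ne_top)
  choose F hF using h1
  have hb : ∀ x, ‖F x‖ ≤ c * ‖x‖ := fun x => by
    have := hφ (qcOp e x)
    rw [← hF, qcHS_qcOp, qcHS_qcOp, ← mul_pow] at this
    have := (ENNReal.pow_le_pow_left_iff two_ne_zero).1 this
    exact_mod_cast this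
  let F' : lp (fun _ : ι => H) 2 →ₗ[ℂ] lp (fun _ : ι => H) 2 :=
    { toFun := F
      map_add' := fun x y => qcOp_inj e (by simp [hF])
      map_smul' := fun c x => qcOp_inj e (by simp [hF]) }
  exact ⟨F'.mkContinuous c hb, LinearMap.mkContinuous_norm_le _ c.2 _, hF⟩

lemma qc_inner_adj (e : HilbertBasis ι ℂ H) {x y x' y' : lp (fun _ : ι => H) 2}
    (hx : qcOp e x' = star (qcOp e x)) (hy : qcOp e y' = star (qcOp e y)) :
    inner ℂ x' y' = inner ℂ y x := by
  have key : ∀ z w : lp (fun _ : ι => H) 2, qcOp e w = star (qcOp e z) → ‖w‖ = ‖z‖ := by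
    intro z w h
    have := qcHS_adjoint e (qcOp e z)
    rw [← h, qcHS_qcOp, qcHS_qcOp] at this
    have := (ENNReal.pow_right_strictMono two_ne_zero).injective this
    have := ENNReal.coe_injective this
    exact congrArg NNReal.toReal this
  rw [inner_eq_sum_norm_sq_div_four, inner_eq_sum_norm_sq_div_four,
    key (x + y) (x' + y') (by simp [hx, hy]), key (x - y) (x' - y') (by simp [hx, hy]),
    key (x + Complex.I • y) (x' - (RCLike.I : ℂ) • y') (by simp [hx, hy, star_smul, sub_eq_add_neg]),
    key (x - Complex.I • y) (x' + (RCLike.I : ℂ) • y') (by simp [hx, hy, star_smul])]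
  have e1 : ‖x + Complex.I • y‖ = ‖y - (RCLike.I : ℂ) • x‖ := by
    rw [show x + Complex.I • y = Complex.I • (y - (RCLike.I : ℂ) • x) by
      simp [smul_sub, smul_smul]; abel]
    simp [norm_smul]
  have e2 : ‖x - Complex.I • y‖ = ‖y + (RCLike.I : ℂ) • x‖ := by
    rw [show x - Complex.I • y = -(Complex.I • (y + (RCLike.I : ℂ) • x)) by
      simp [smul_add, smul_smul, sub_eq_add_neg]]
    rw [norm_neg, norm_smul]; simp
  rw [e1, e2, add_comm x y, norm_sub_rev x y]

lemma qc_telescope {R : Type*} [Ring R] (A B Q : R) (k : ℕ) :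
    A ^ k * Q - Q * B ^ k = ∑ j ∈ Finset.range k, A ^ j * (A * Q - Q * B) * B ^ (k - 1 - j) := by
  induction k with
  | zero => simp
  | succ k ih =>
    rw [Finset.sum_range_succ, Finset.sum_congr rfl
      (g := fun j => (A ^ j * (A * Q - Q * B) * B ^ (k - 1 - j)) * B), ← Finset.sum_mul, ← ih]
    · simp [pow_succ]; noncomm_ring
    · intro j hj
      have := Finset.mem_range.1 hj
      rw [show k + 1 - 1 - j = (k - 1 - j) + 1 by omega, pow_succ, ← mul_assoc]

lemma qc_poly (e : HilbertBasis ι ℂ H) (A B Q : H →L[ℂ] H) (hA : IsSelfAdjoint A) (hB : IsSelfAdjoint B)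
    (p : Polynomial ℝ) (L M : ℝ) (hL : 0 ≤ L) (haM : ‖A‖ ≤ M) (hbM : ‖B‖ ≤ M)
    (hp : ∀ t ∈ Set.Icc (-M) M, |p.derivative.eval t| ≤ L) (hD : qcHS e (A * Q - Q * B) ≠ ⊤) :
    qcHS e (Polynomial.aeval A p * Q - Q * Polynomial.aeval B p) ≤
      ENNReal.ofReal L ^ 2 * qcHS e (A * Q - Q * B) := by
  obtain ⟨D, hD⟩ := qcOp_surj e _ hD
  obtain ⟨a, ha, ha'⟩ := qc_lift e (LinearMap.mulLeft ℂ A) ‖A‖₊ (qcHS_mul_left e A)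
  obtain ⟨b, hb, hb'⟩ := qc_lift e (LinearMap.mulRight ℂ B) ‖B‖₊ (fun T => qcHS_mul_right e T B)
  obtain ⟨c, hc, hc'⟩ := qc_lift e (LinearMap.mulLeft ℂ B) ‖B‖₊ (qcHS_mul_left e B)
  simp only [LinearMap.mulLeft_apply, LinearMap.mulRight_apply] at ha' hb' hc'
  have hsl : ∀ (A : H →L[ℂ] H) (a : lp (fun _ : ι => H) 2 →L[ℂ] lp (fun _ : ι => H) 2), IsSelfAdjoint A →
      (∀ x, qcOp e (a x) = A * qcOp e x) → ∀ x y, inner ℂ (a x) y = inner ℂ x (a y) := by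
    intro A a hA ha x y
    have h : ∀ x i, a x i = A (x i) := fun x i => by
      rw [← qcOp_basis e, ha, ← qcOp_basis e x]; rfl
    rw [lp.inner_eq_tsum, lp.inner_eq_tsum]
    refine tsum_congr fun i => ?_
    rw [h, h]
    exact hA.isSymmetric _ _
  have hsa : IsSelfAdjoint a := by
    rw [ContinuousLinearMap.isSelfAdjoint_iff_isSymmetric]
    exact hsl A a hA ha'
  have hadj : ∀ x, ∃ x', qcOp e x' = star (qcOp e x) := fun x => qcOp_surj e _ (by
    rw [qcHS_adjoint, qcHS_qcOp]; exact ENNReal.pow_ne_top ENNReal.coe_ne_top)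
  have hsb : IsSelfAdjoint b := by
    rw [ContinuousLinearMap.isSelfAdjoint_iff_isSymmetric]
    intro x y
    obtain ⟨x', hx'⟩ := hadj x
    obtain ⟨y', hy'⟩ := hadj y
    have h1 : qcOp e (c x') = star (qcOp e (b x)) := by
      rw [hc', hb', star_mul, hB.star_eq, hx']
    have h2 : qcOp e (c y') = star (qcOp e (b y)) := by
      rw [hc', hb', star_mul, hB.star_eq, hy']
    change inner ℂ (b x) y = inner ℂ x (b y)
    rw [← qc_inner_adj e hy' h1, ← qc_inner_adj e h2 hx', hsl B c hB hc']
  have hcomm : a * b = b * a := by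
    ext1 x
    apply qcOp_inj e
    change qcOp e (a (b x)) = qcOp e (b (a x))
    rw [ha', hb', hb', ha', mul_assoc]
  have hpa : ∀ j x, qcOp e ((a ^ j) x) = A ^ j * qcOp e x := by
    intro j
    induction j with
    | zero => intro x; simp
    | succ j ih =>
      intro x
      rw [pow_succ, pow_succ]
      change qcOp e ((a ^ j) (a x)) = _
      rw [ih, ha', mul_assoc]
  have hpb : ∀ j x, qcOp e ((b ^ j) x) = qcOp e x * B ^ j := by
    intro j
    induction j with
    | zero => intro x; simp
    | succ j ih =>
      intro x
      rw [pow_succ, pow_succ']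
      change qcOp e ((b ^ j) (b x)) = _
      rw [ih, hb', mul_assoc]
  have hmain : qcOp e (qcDD p a b D) = Polynomial.aeval A p * Q - Q * Polynomial.aeval B p := by
    rw [Polynomial.aeval_eq_sum_range, Polynomial.aeval_eq_sum_range, Finset.sum_mul, Finset.mul_sum,
      ← Finset.sum_sub_distrib, qcDD, ContinuousLinearMap.sum_apply, map_sum]
    refine Finset.sum_congr rfl fun k _ => ?_
    rw [smul_mul_assoc, mul_smul_comm, ← smul_sub, qc_telescope, smul_apply, map_smul,
      ContinuousLinearMap.sum_apply, map_sum, Complex.coe_smul]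
    congr 1
    refine Finset.sum_congr rfl fun j _ => ?_
    change qcOp e ((a ^ j) ((b ^ (k - 1 - j)) D)) = _
    rw [hpa, hpb, hD, mul_assoc]
  have hn := qcDD_norm a b hsa hsb hcomm p L M hL (ha.trans haM) (hb.trans hbM) hp
  rw [← hmain, ← hD, qcHS_qcOp, qcHS_qcOp, ← mul_pow]
  gcongr
  have h3 : ‖qcDD p a b D‖ ≤ L * ‖D‖ := (ContinuousLinearMap.le_opNorm _ _).trans (by gcongr)
  have h4 := ENNReal.ofReal_le_ofReal h3
  rw [ENNReal.ofReal_mul hL] at h4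
  simpa [enorm_eq_nnnorm] using h4

lemma qc_cfc_approx (f : ℝ → ℝ) (hf : Continuous f) (A : H →L[ℂ] H) (hA : IsSelfAdjoint A) (M : ℝ) (hM : ‖A‖ ≤ M)
    (p : Polynomial ℝ) (ε : ℝ) (hε : 0 ≤ ε) (h : ∀ u ∈ Set.Icc (-M) M, |p.eval u - f u| ≤ ε) :
    ‖Polynomial.aeval A p - cfc f A‖ ≤ ε := by
  rw [← cfc_polynomial p A, ← cfc_sub _ _ A (by fun_prop) (by fun_prop)]
  refine norm_cfc_le hε fun x hx => h x ?_
  have : ‖x‖ ≤ ‖A‖ := by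
    rcases subsingleton_or_nontrivial H with h | h
    · rw [spectrum.of_subsingleton] at hx
      exact hx.elim
    · exact spectrum.norm_le_norm_of_mem hx
  exact abs_le.1 (this.trans hM)

end qc

/-- Birman–Solomyak quasicommutator estimate: for a Lipschitz function `f` with constant
`L`, bounded self-adjoint operators `A, B` and a bounded operator `Q` on a separable
complex Hilbert space, `‖f(A)Q − Q f(B)‖_{S₂} ≤ L·‖AQ − QB‖_{S₂}`, the Hilbert–Schmidt
norms being computed in `[0,∞]` via any Hilbert basis. -/
theorem lipschitz_quasicommutator_hilbert_schmidt
    {H : Type*} [NormedAddCommGroup H] [InnerProductSpace ℂ H] [CompleteSpace H]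
    [TopologicalSpace.SeparableSpace H]
    (f : ℝ → ℝ) (L : ℝ) (hf : ∀ x y : ℝ, |f x - f y| ≤ L * |x - y|)
    (A B Q : H →L[ℂ] H) (hA : IsSelfAdjoint A) (hB : IsSelfAdjoint B) :
    ∀ (ι : Type*) (e : HilbertBasis ι ℂ H),
      ∑' i : ι, (‖(cfc f A * Q - Q * cfc f B) (e i)‖₊ : ℝ≥0∞) ^ 2
        ≤ ENNReal.ofReal L ^ 2 * ∑' i : ι, (‖(A * Q - Q * B) (e i)‖₊ : ℝ≥0∞) ^ 2 := by
  intro ι e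
  have hL : 0 ≤ L := by simpa using (abs_nonneg _).trans (hf 1 0)
  have hc : Continuous f := (LipschitzWith.of_dist_le_mul (K := ⟨L, hL⟩) (fun x y => by
      rw [Real.dist_eq, Real.dist_eq]; exact hf x y)).continuous
  rcases hL.eq_or_lt with h0 | h0
  · have hconst : f = fun _ => f 0 := by
      funext x
      have := hf x 0
      rw [← h0, zero_mul] at this
      exact sub_eq_zero.1 (abs_nonpos_iff.1 this)
    have : cfc f A * Q - Q * cfc f B = 0 := by
      rw [hconst, cfc_const _ A, cfc_const _ B, sub_eq_zero]
      exact Algebra.commutes _ _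
    rw [this]
    simp
  by_cases hD : qcHS e (A * Q - Q * B) = ⊤
  · unfold qcHS at hD
    rw [hD, ENNReal.mul_top (by simpa using h0)]
    exact le_top
  set M := ‖A‖ + ‖B‖ + 1 with hMdef
  have hM : 0 < M := by positivity
  have hAM : ‖A‖ ≤ M := by have := norm_nonneg B; linarith
  have hBM : ‖B‖ ≤ M := by have := norm_nonneg A; linarith
  obtain ⟨p, hp1, hp2⟩ := qc_approx f L hf M hM
  have hchoose : ∀ m : ℕ, ∃ n, ∀ u ∈ Set.Icc (-M) M, |(p n).eval u - f u| ≤ 1 / ((m : ℝ) + 1) :=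
    fun m => hp2 _ (by positivity)
  choose n hn using hchoose
  have hlim : ∀ T : H →L[ℂ] H, IsSelfAdjoint T → ‖T‖ ≤ M →
      Filter.Tendsto (fun m => Polynomial.aeval T (p (n m))) Filter.atTop (nhds (cfc f T)) := by
    intro T hT hTM
    rw [tendsto_iff_norm_sub_tendsto_zero]
    exact squeeze_zero (fun _ => norm_nonneg _) (fun m => qc_cfc_approx f hc T hT M hTM (p (n m)) _ (by positivity) (hn m))
      tendsto_one_div_add_atTop_nhds_zero_nat
  have hT : Filter.Tendsto (fun m => Polynomial.aeval A (p (n m)) * Q - Q * Polynomial.aeval B (p (n m)))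
      Filter.atTop (nhds (cfc f A * Q - Q * cfc f B)) :=
    ((hlim A hA hAM).mul_const Q).sub ((hlim B hB hBM).const_mul Q)
  rw [ENNReal.tsum_eq_iSup_sum]
  refine iSup_le fun s => ?_
  have hlim2 : Filter.Tendsto (fun m => ∑ i ∈ s, (‖(Polynomial.aeval A (p (n m)) * Q - Q * Polynomial.aeval B (p (n m))) (e i)‖₊ : ℝ≥0∞) ^ 2)
      Filter.atTop (nhds (∑ i ∈ s, (‖(cfc f A * Q - Q * cfc f B) (e i)‖₊ : ℝ≥0∞) ^ 2)) := by
    refine tendsto_finsetSum _ fun i _ => ?_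
    have hcont : Continuous fun T : H →L[ℂ] H => (‖T (e i)‖₊ : ℝ≥0∞) ^ 2 := by
      have : Continuous fun T : H →L[ℂ] H => ((‖T (e i)‖₊ ^ 2 : NNReal) : ℝ≥0∞) :=
        ENNReal.continuous_coe.comp (by fun_prop)
      simpa using this
    exact (hcont.tendsto _).comp hT
  refine le_of_tendsto' hlim2 fun m => ?_
  exact (ENNReal.sum_le_tsum s).trans
    (qc_poly e A B Q hA hB (p (n m)) L M hL hAM hBM (hp1 _) hD)
end
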